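/- arXiv:2601.01203 — 5 statements merged into one kernel-verified Lean document; each statement's English description precedes it below -/
import Mathlib

section
/- Let (θ_i)_{i=1}^N be the solution of the prototypical Winfree model with R_0 > 0. Fix μ ∈ (0, min{R_0, 1}) and suppose κ > ‖Ω‖_∞ / ((R_0 − μ)√(μ(2−μ))). Then: (a) R(t) ≥ R_0 − μ for all t ≥ 0; (b) for every i the limit lim_{t→∞} θ_i(t) exists, sup_{t≥0} θ_i(t) − inf_{t≥0} θ_i(t) < 2π, and lim_{t→∞} θ_i'(t) = 0; (c) for every i and every t_0 ≥ 0 with cos θ_i(t_0) ≥ −1 + μ, one has cos θ_i(t) ≥ −1 + μ for all t ≥ t_0 and cos θ_i(t) ≥ 1 − μ for all t ≥ t_0 + π/(κ(R_0 − μ)√(μ(2−μ)) − ‖Ω‖_∞); (d) writing R_∞ = lim_{t→∞} R(t), for every i either sup_{t≥0} cos θ_i(t) < −1 + μ and there exists k ∈ ℤ with lim_{t→∞} θ_i(t) = π − arcsin(ω_i/(κR_∞)) + 2kπ, or sup_{t≥0} cos θ_i(t) ≥ −1 + μ and there exists k ∈ ℤ with lim_{t→∞} θ_i(t) = arcsin(ω_i/(κR_∞))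 + 2kπ. -/
/-!
The argument has a pointwise part and an asymptotic part.

Each phase solves `θᵢ' = ωᵢ - κ R sin θᵢ`. As long as `R ≥ r` with `κ r √(μ(2-μ)) > max |ωᵢ|`,
the cosine of a phase increases strictly through the band `|cos| ≤ 1 - μ`, on which
`|sin| ≥ √(μ(2-μ))`; hence no oscillator can lose more than `μ` of its initial contribution
`1 + cos θᵢ(0)` to `R` (`orderParam_loss`), and a bootstrap gives `R ≥ R(0) - μ` for all times
(`orderParam_lower`). The phases in the band are crossed in one direction only, which bounds the
oscillation of every trajectory (`oscLt2Pi_of_drift`) and the crossing time (`cos_reach`).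

For the limits, the system is a gradient flow with bounded trajectories, so all velocities tend to
zero (`velocity_tendsto_zero`), i.e. `sin θᵢ - ωᵢ/(κR) → 0`. Every oscillator is either eventually
in `cos > 0` or forever in `cos < 0`, so `cos θᵢ - σᵢ √(1 - (ωᵢ/(κR))²) → 0` with a fixed sign
`σᵢ`, and every accumulation value of `R` solves a scalar fixed-point equation. That equation is
analytic and cannot hold on an interval (`not_fixed_interval`), whereas the accumulation values of
a continuous function form one; so `R` converges (`orderParam_converges`). Then `sin θᵢ`
converges, and so does `θᵢ`, being confined to one half-period (`tendsto_of_tendsto_sin`).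
-/

open MeasureTheory Filter

/-- The order parameter `R(t) = (1/N) ∑ⱼ (1 + cos θⱼ(t))` of the prototypical Winfree model. -/
noncomputable def orderParam (N : ℕ) (θ : Fin N → ℝ → ℝ) (t : ℝ) : ℝ :=
  (N : ℝ)⁻¹ * ∑ j, (1 + Real.cos (θ j t))

/-- `θ` is the solution of the prototypical Winfree model with frequencies `ω`,
coupling strength `κ` and initial data `θ0`. -/
def IsWinfreeSol (N : ℕ) (ω : Fin N → ℝ) (κ : ℝ) (θ0 : Fin N → ℝ)
    (θ : Fin N → ℝ → ℝ) : Prop :=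
  (∀ i, θ i 0 = θ0 i) ∧
  ∀ i, ∀ t : ℝ, 0 ≤ t →
    HasDerivAt (θ i)
      (ω i - κ / (N : ℝ) * (∑ j, (1 + Real.cos (θ j t))) * Real.sin (θ i t)) t

/-- `sup_{t ≥ 0} f(t) - inf_{t ≥ 0} f(t) < 2π` (in particular `f` is bounded on `[0,∞)`). -/
def OscLt2Pi (f : ℝ → ℝ) : Prop :=
  BddAbove (f '' Set.Ici 0) ∧ BddBelow (f '' Set.Ici 0) ∧
    sSup (f '' Set.Ici 0) - sInf (f '' Set.Ici 0) < 2 * Real.pi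

/-! ### A single phase driven by `x' = w - K sin x` -/

/-- A level `ℓ` that `f` can only cross upwards is never crossed downwards. -/
lemma barrier {f f' : ℝ → ℝ} {a T ℓ : ℝ}
    (hf : ∀ t ∈ Set.Icc a T, HasDerivAt f (f' t) t) (ha : ℓ ≤ f a)
    (hpos : ∀ t ∈ Set.Icc a T, f t = ℓ → 0 < f' t) :
    ∀ t ∈ Set.Icc a T, ℓ ≤ f t := by
  intro t ht
  have h := image_le_of_deriv_right_lt_deriv_boundary (f := fun t => -f t) (f' := fun t => -f' t)
    (a := a) (b := T) (B := fun _ => -ℓ) (B' := fun _ => 0)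
    (fun t ht => (hf t ht).neg.continuousAt.continuousWithinAt)
    (fun t ht => (hf t ⟨ht.1, ht.2.le⟩).neg.hasDerivWithinAt)
    (by linarith) (fun t => hasDerivAt_const _ _)
    (fun t ht h => by
      have := hpos t ⟨ht.1, ht.2.le⟩ (by linarith)
      linarith) ht
  linarith

/-- On the band `|cos y| ≤ 1 - ν` the sine is bounded away from zero. -/
lemma sqrt_le_abs_sin {ν y : ℝ} (h1 : -1 + ν ≤ Real.cos y) (h2 : Real.cos y ≤ 1 - ν) :
    Real.sqrt (ν * (2 - ν)) ≤ |Real.sin y| := by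
  rw [Real.abs_sin_eq_sqrt_one_sub_cos_sq]
  apply Real.sqrt_le_sqrt
  nlinarith

/-- When `|sin|` is at least `s` and the coupling `K` beats the frequency, the pull `K sin²`
towards the phase `0` exceeds the drift `w sin` by at least `(k s - |w|) |sin|`. -/
lemma pull_bound {k K s w y : ℝ} (hs : 0 < s) (hw : |w| < k * s) (hK : k ≤ K)
    (hy : s ≤ |y|) : (k * s - |w|) * |y| ≤ -y * (w - K * y) := by
  have hk : 0 < k := by
    by_contra hk
    nlinarith [abs_nonneg w]
  have h1 : w * y ≤ |w| * |y| := by rw [← abs_mul]; exact le_abs_self _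
  have h2 : y * y = |y| * |y| := (abs_mul_abs_self y).symm
  have h3 : k * s * |y| ≤ k * (|y| * |y|) := by
    rw [mul_assoc]
    exact mul_le_mul_of_nonneg_left (mul_le_mul_of_nonneg_right hy (abs_nonneg _)) hk.le
  have h4 : k * (|y| * |y|) ≤ K * (|y| * |y|) := mul_le_mul_of_nonneg_right hK (by positivity)
  nlinarith

section Scalar

variable {x K : ℝ → ℝ} {w k ν a T : ℝ}

lemma cos_barrier (hν : 0 < ν) (hν1 : ν < 1)
    (hx : ∀ t ∈ Set.Icc a T, HasDerivAt x (w - K t * Real.sin (x t)) t)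
    (hK : ∀ t ∈ Set.Icc a T, k ≤ K t) (hw : |w| < k * Real.sqrt (ν * (2 - ν)))
    {ℓ : ℝ} (h1 : -1 + ν ≤ ℓ) (h2 : ℓ ≤ 1 - ν) (ha : ℓ ≤ Real.cos (x a)) :
    ∀ t ∈ Set.Icc a T, ℓ ≤ Real.cos (x t) := by
  have hs : 0 < Real.sqrt (ν * (2 - ν)) := Real.sqrt_pos.2 (by nlinarith)
  refine barrier (fun t ht => (hx t ht).cos) ha ?_
  intro t ht hl
  have h := sqrt_le_abs_sin (ν := ν) (y := x t) (by linarith) (by linarith)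
  have h3 := pull_bound hs hw (hK t ht) h
  have : 0 < (k * Real.sqrt (ν * (2 - ν)) - |w|) * |Real.sin (x t)| :=
    mul_pos (by linarith) (by linarith)
  linarith

/-- Crossing the band `|cos| ≤ 1 - ν` takes at most the time `π / (k√(ν(2-ν)) - |w|)`, since
`arccos (cos x)` lies in `[0, π]` and decreases at least at the speed `k√(ν(2-ν)) - |w|` there. -/
lemma cos_reach (hν : 0 < ν) (hν1 : ν < 1)
    (hx : ∀ t ∈ Set.Icc a T, HasDerivAt x (w - K t * Real.sin (x t)) t)
    (hK : ∀ t ∈ Set.Icc a T, k ≤ K t) {c : ℝ} (hc : 0 < c)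
    (hw : c ≤ k * Real.sqrt (ν * (2 - ν)) - |w|)
    (ha : -1 + ν ≤ Real.cos (x a)) (hT : a + Real.pi / c ≤ T) :
    1 - ν ≤ Real.cos (x T) := by
  have hs : 0 < Real.sqrt (ν * (2 - ν)) := Real.sqrt_pos.2 (by nlinarith)
  have hw' : |w| < k * Real.sqrt (ν * (2 - ν)) := by linarith
  have hpc : 0 < Real.pi / c := div_pos Real.pi_pos hc
  have haT : a < T := by linarith
  have hlow := cos_barrier hν hν1 hx hK hw' le_rfl (by linarith) ha
  by_contra hcon
  push Not at hcon
  have hhigh : ∀ t ∈ Set.Icc a T, Real.cos (x t) < 1 - ν := by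
    intro t ht
    by_contra h
    push Not at h
    have := cos_barrier (a := t) (T := T) hν hν1 (fun u hu => hx u ⟨ht.1.trans hu.1, hu.2⟩)
      (fun u hu => hK u ⟨ht.1.trans hu.1, hu.2⟩) hw' (by linarith) le_rfl h T ⟨ht.2, le_rfl⟩
    linarith
  have hd : ∀ t ∈ Set.Icc a T, HasDerivAt (fun t => Real.arccos (Real.cos (x t)))
      (-(1 / Real.sqrt (1 - Real.cos (x t) ^ 2)) *
        (-Real.sin (x t) * (w - K t * Real.sin (x t)))) t := by
    intro t ht
    have h1 := hlow t ht
    have h2 := hhigh t ht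
    exact (Real.hasDerivAt_arccos (by linarith) (by linarith)).comp t (hx t ht).cos
  obtain ⟨t, ht, hslope⟩ := exists_hasDerivAt_eq_slope _ _ haT
    (fun t ht => (hd t ht).continuousAt.continuousWithinAt)
    (fun t ht => hd t ⟨ht.1.le, ht.2.le⟩)
  have ht' : t ∈ Set.Icc a T := ⟨ht.1.le, ht.2.le⟩
  have hsin := sqrt_le_abs_sin (hlow t ht') (hhigh t ht').le
  have hsin0 : 0 < |Real.sin (x t)| := by linarith
  have hp := pull_bound hs hw' (hK t ht') hsin
  rw [← Real.abs_sin_eq_sqrt_one_sub_cos_sq, eq_div_iff (by linarith)] at hslope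
  have hp2 : c ≤ 1 / |Real.sin (x t)| * (-Real.sin (x t) * (w - K t * Real.sin (x t))) := by
    rw [one_div, inv_mul_eq_div, le_div_iff₀ hsin0]
    exact (mul_le_mul_of_nonneg_right hw hsin0.le).trans hp
  have hlen : Real.pi ≤ c * (T - a) := by
    rw [← div_le_iff₀' hc]; linarith
  have hdec : c * (T - a) ≤
      Real.arccos (Real.cos (x a)) - Real.arccos (Real.cos (x T)) := by
    have := mul_le_mul_of_nonneg_right hp2 (sub_pos.2 haT).le
    linarith
  have h0 : Real.arccos (Real.cos (x T)) ≤ 0 := by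
    linarith [Real.arccos_le_pi (Real.cos (x a))]
  have h1 := Real.arccos_eq_zero.1 (le_antisymm h0 (Real.arccos_nonneg _))
  linarith

lemma angle_barrier_lower {s b : ℝ}
    (hx : ∀ t ∈ Set.Icc a T, HasDerivAt x (w - K t * Real.sin (x t)) t)
    (hK : ∀ t ∈ Set.Icc a T, k ≤ K t) (hs : 0 < s) (hw : |w| < k * s)
    (hb : Real.sin b = -s) (ha : b ≤ x a) : ∀ t ∈ Set.Icc a T, b ≤ x t := by
  refine barrier hx ha ?_
  intro t ht h
  rw [h, hb]
  nlinarith [neg_abs_le w, mul_le_mul_of_nonneg_right (hK t ht) hs.le]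

lemma angle_barrier_upper {s b : ℝ}
    (hx : ∀ t ∈ Set.Icc a T, HasDerivAt x (w - K t * Real.sin (x t)) t)
    (hK : ∀ t ∈ Set.Icc a T, k ≤ K t) (hs : 0 < s) (hw : |w| < k * s)
    (hb : Real.sin b = s) (ha : x a ≤ b) : ∀ t ∈ Set.Icc a T, x t ≤ b := by
  intro t ht
  have h := angle_barrier_lower (x := fun t => -x t) (K := K) (w := -w) (k := k) (a := a) (T := T)
    (s := s) (b := -b) (fun t ht => (hx t ht).neg.congr_deriv (by
      rw [Real.sin_neg]; ring)) hK hs (by rwa [abs_neg]) (by rw [Real.sin_neg, hb])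
    (by simpa using ha) t ht
  simpa using h

/-- With `γ = arcsin s < π / 2`, the phases `-γ` and `π + γ` can only be crossed upwards, `π - γ`
and `2π + γ` only downwards (modulo `2π`). A trajectory starting in `[-γ, 2π - γ]` therefore stays
in `[-γ, π + γ]` or in `[π - γ, 2π + γ]`, intervals of length `π + 2γ < 2π`. -/
lemma oscLt2Pi_of_drift {s : ℝ} (hs : 0 < s) (hs1 : s < 1) (hw : |w| < k * s)
    (hx : ∀ t, 0 ≤ t → HasDerivAt x (w - K t * Real.sin (x t)) t)
    (hK : ∀ t, 0 ≤ t → k ≤ K t) : OscLt2Pi x := by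
  have hlow : ∀ a b, 0 ≤ a → Real.sin b = -s → b ≤ x a → ∀ t, a ≤ t → b ≤ x t :=
    fun a b ha hb h t ht => angle_barrier_lower (T := t) (fun u hu => hx u (ha.trans hu.1))
      (fun u hu => hK u (ha.trans hu.1)) hs hw hb h t ⟨ht, le_rfl⟩
  have hup : ∀ a b, 0 ≤ a → Real.sin b = s → x a ≤ b → ∀ t, a ≤ t → x t ≤ b :=
    fun a b ha hb h t ht => angle_barrier_upper (T := t) (fun u hu => hx u (ha.trans hu.1))
      (fun u hu => hK u (ha.trans hu.1)) hs hw hb h t ⟨ht, le_rfl⟩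
  set γ := Real.arcsin s with hγ
  have hγ0 : 0 < γ := Real.arcsin_pos.2 hs
  have hγ1 : γ < Real.pi / 2 := by
    rw [hγ, Real.arcsin_lt_pi_div_two]; exact hs1
  have hsγ : Real.sin γ = s := Real.sin_arcsin (by linarith) hs1.le
  have hpi := Real.pi_pos
  obtain ⟨n, hn1, hn2⟩ : ∃ n : ℤ, -γ + n * (2 * Real.pi) ≤ x 0 ∧
      x 0 ≤ 2 * Real.pi - γ + n * (2 * Real.pi) := by
    refine ⟨⌊(x 0 + γ) / (2 * Real.pi)⌋, ?_, ?_⟩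
    · have := (le_div_iff₀ (by linarith)).1 (Int.floor_le ((x 0 + γ) / (2 * Real.pi)))
      linarith
    · have := (div_lt_iff₀ (by linarith)).1 (Int.lt_floor_add_one ((x 0 + γ) / (2 * Real.pi)))
      linarith
  have hs1' : Real.sin (-γ + n * (2 * Real.pi)) = -s := by
    rw [Real.sin_add_int_mul_two_pi, Real.sin_neg, hsγ]
  have hs2 : Real.sin (γ + Real.pi + n * (2 * Real.pi)) = -s := by
    rw [Real.sin_add_int_mul_two_pi, Real.sin_add_pi, hsγ]
  have hs3 : Real.sin (Real.pi - γ + n * (2 * Real.pi)) = s := by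
    rw [Real.sin_add_int_mul_two_pi, Real.sin_pi_sub, hsγ]
  have hs4 : Real.sin (γ + 2 * Real.pi + n * (2 * Real.pi)) = s := by
    rw [Real.sin_add_int_mul_two_pi, Real.sin_add_two_pi, hsγ]
  have key : ∃ m M : ℝ, M - m < 2 * Real.pi ∧ ∀ t, 0 ≤ t → m ≤ x t ∧ x t ≤ M := by
    by_cases hcase : ∀ t, 0 ≤ t → x t ≤ γ + Real.pi + n * (2 * Real.pi)
    · exact ⟨_, _, by linarith, fun t ht => ⟨hlow 0 _ le_rfl hs1' hn1 t ht, hcase t ht⟩⟩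
    · push Not at hcase
      obtain ⟨u, hu0, hu⟩ := hcase
      refine ⟨Real.pi - γ + n * (2 * Real.pi), γ + 2 * Real.pi + n * (2 * Real.pi),
        by linarith, fun t ht => ⟨?_, hup 0 _ le_rfl hs4 (by linarith) t ht⟩⟩
      by_contra hlt
      push Not at hlt
      rcases le_total t u with h | h
      · have := hup t _ ht hs3 hlt.le u h
        linarith
      · have := hlow u _ hu0 hs2 hu.le t h
        linarith
  obtain ⟨m, M, hmM, hb⟩ := key
  have hne : (x '' Set.Ici 0).Nonempty := ⟨x 0, 0, Set.self_mem_Ici, rfl⟩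
  have hM : ∀ y ∈ x '' Set.Ici 0, y ≤ M := by rintro _ ⟨t, ht, rfl⟩; exact (hb t ht).2
  have hm : ∀ y ∈ x '' Set.Ici 0, m ≤ y := by rintro _ ⟨t, ht, rfl⟩; exact (hb t ht).1
  exact ⟨⟨M, hM⟩, ⟨m, hm⟩, by linarith [csSup_le hne hM, le_csInf hne hm]⟩

end Scalar

/-! ### Convergence tools -/

/-- If `cos ψ > 0` on a half-line then `ψ` stays in a single interval `(-π/2, π/2) + 2kπ`, so a
limit of `sin ψ` lifts to a limit of `ψ`. -/
lemma tendsto_of_tendsto_sin {ψ : ℝ → ℝ} {T y : ℝ} (hc : ContinuousOn ψ (Set.Ici T))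
    (hpos : ∀ t, T ≤ t → 0 < Real.cos (ψ t))
    (hsin : Tendsto (fun t => Real.sin (ψ t)) atTop (nhds y)) :
    ∃ k : ℤ, Tendsto ψ atTop (nhds (Real.arcsin y + 2 * k * Real.pi)) := by
  have hpi := Real.pi_pos
  obtain ⟨n, hn1, hn2⟩ : ∃ n : ℤ, -Real.pi + n * (2 * Real.pi) ≤ ψ T ∧
      ψ T < Real.pi + n * (2 * Real.pi) := by
    refine ⟨⌊(ψ T + Real.pi) / (2 * Real.pi)⌋, ?_, ?_⟩
    · have := (le_div_iff₀ (by linarith)).1 (Int.floor_le ((ψ T + Real.pi) / (2 * Real.pi)))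
      linarith
    · have := (div_lt_iff₀ (by linarith)).1
        (Int.lt_floor_add_one ((ψ T + Real.pi) / (2 * Real.pi)))
      linarith
  have hcosT : 0 < Real.cos (ψ T - n * (2 * Real.pi)) := by
    rw [Real.cos_sub_int_mul_two_pi]; exact hpos T le_rfl
  have h1 : -(Real.pi / 2) + n * (2 * Real.pi) < ψ T := by
    by_contra h
    have := Real.cos_nonpos_of_pi_div_two_le_of_le (x := -(ψ T - n * (2 * Real.pi)))
      (by linarith) (by linarith)
    rw [Real.cos_neg] at this
    linarith
  have h2 : ψ T < Real.pi / 2 + n * (2 * Real.pi) := by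
    by_contra h
    have := Real.cos_nonpos_of_pi_div_two_le_of_le (x := ψ T - n * (2 * Real.pi))
      (by linarith) (by linarith)
    linarith
  have h3 : ∀ t, T ≤ t → -(Real.pi / 2) + n * (2 * Real.pi) ≤ ψ t := by
    intro t ht
    by_contra h
    push Not at h
    obtain ⟨u, hu, hue⟩ := isPreconnected_Ici.intermediate_value (Set.mem_Ici.2 ht)
      Set.self_mem_Ici hc ⟨h.le, h1.le⟩
    have := hpos u hu
    rw [hue, Real.cos_add_int_mul_two_pi, Real.cos_neg, Real.cos_pi_div_two] at this
    exact this.false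
  have h4 : ∀ t, T ≤ t → ψ t ≤ Real.pi / 2 + n * (2 * Real.pi) := by
    intro t ht
    by_contra h
    push Not at h
    obtain ⟨u, hu, hue⟩ := isPreconnected_Ici.intermediate_value Set.self_mem_Ici
      (Set.mem_Ici.2 ht) hc ⟨h2.le, h.le⟩
    have := hpos u hu
    rw [hue, Real.cos_add_int_mul_two_pi, Real.cos_pi_div_two] at this
    exact this.false
  refine ⟨n, ?_⟩
  have h5 := ((Real.continuous_arcsin.tendsto y).comp hsin).add_const (2 * (n : ℝ) * Real.pi)
  refine h5.congr' ?_
  filter_upwards [eventually_ge_atTop T] with t ht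
  have : Real.sin (ψ t) = Real.sin (ψ t - n * (2 * Real.pi)) :=
    (Real.sin_sub_int_mul_two_pi _ _).symm
  simp only [Function.comp]
  rw [this, Real.arcsin_sin (by linarith [h3 t ht]) (by linarith [h4 t ht])]
  ring

/-- A Barbalat-type lemma: a nonnegative Lipschitz function with a bounded primitive tends to
zero. -/
lemma tendsto_zero_of_primitive {W g : ℝ → ℝ} {L B : ℝ}
    (hW : ∀ t, 0 ≤ t → HasDerivAt W (g t) t) (hg : ∀ t, 0 ≤ t → 0 ≤ g t)
    (hB : ∀ t, 0 ≤ t → W t ≤ B)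
    (hL : ∀ a b, 0 ≤ a → a ≤ b → |g b - g a| ≤ L * (b - a)) :
    Tendsto g atTop (nhds 0) := by
  have hmono : MonotoneOn W (Set.Ici 0) := by
    refine monotoneOn_of_deriv_nonneg (convex_Ici 0)
      (fun t ht => (hW t ht).continuousAt.continuousWithinAt) ?_ ?_
    · intro t ht
      rw [interior_Ici] at ht
      exact (hW t (le_of_lt ht)).differentiableAt.differentiableWithinAt
    · intro t ht
      rw [interior_Ici] at ht
      rw [(hW t (le_of_lt ht)).deriv]
      exact hg t (le_of_lt ht)
  have hm : Monotone (fun t => W (max t 0)) := fun a b hab =>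
    hmono (le_max_right a 0) (le_max_right b 0) (max_le_max_right 0 hab)
  obtain ⟨l, hl⟩ : ∃ l, Tendsto W atTop (nhds l) := by
    refine ⟨_, (tendsto_atTop_ciSup hm ⟨B, ?_⟩).congr' ?_⟩
    · rintro _ ⟨t, rfl⟩
      exact hB _ (le_max_right t 0)
    · filter_upwards [eventually_ge_atTop 0] with t ht
      rw [max_eq_left ht]
  have hL0 : 0 ≤ L := by
    have := (abs_nonneg _).trans (hL 0 1 le_rfl zero_le_one)
    linarith
  -- The mean value theorem on `[t, t + h]` gives `g t ≤ (W (t + h) - W t) / h + L h`.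
  rw [Metric.tendsto_atTop']
  intro ε hε
  obtain ⟨h, hh, hLh⟩ : ∃ h : ℝ, 0 < h ∧ L * h < ε / 2 := by
    refine ⟨ε / (2 * (L + 1)), by positivity, ?_⟩
    rw [mul_div_assoc', div_lt_div_iff₀ (by positivity) (by positivity)]
    nlinarith
  have hd : Tendsto (fun t => (W (t + h) - W t) / h) atTop (nhds 0) := by
    have := ((hl.comp (tendsto_atTop_add_const_right atTop h tendsto_id)).sub hl).div_const h
    simpa using this
  obtain ⟨A, hA⟩ := eventually_atTop.1 (hd.eventually (gt_mem_nhds (half_pos hε)))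
  refine ⟨max A 0, fun t ht => ?_⟩
  have ht0 : 0 ≤ t := (le_max_right A 0).trans ht.le
  obtain ⟨ξ, hξ, hs⟩ := exists_hasDerivAt_eq_slope W g (a := t) (b := t + h) (by linarith)
    (fun u hu => (hW u (ht0.trans hu.1)).continuousAt.continuousWithinAt)
    (fun u hu => hW u (ht0.trans hu.1.le))
  have h1 := hA t ((le_max_left A 0).trans ht.le)
  have h2 := abs_le.1 (hL t ξ ht0 hξ.1.le)
  rw [add_sub_cancel_left] at hs
  have h3 : L * (ξ - t) ≤ L * h := mul_le_mul_of_nonneg_left (by linarith [hξ.2]) hL0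
  rw [Real.dist_eq, sub_zero, abs_of_nonneg (hg t ht0)]
  linarith [h2.1]

/-- A fixed-point equation `c = (1/N) ∑ᵢ (1 + σᵢ √(1 - (ωᵢ/(κc))²))` cannot hold on a whole
interval beyond `Ω/κ`: by analyticity it would then hold on all of `(Ω/κ, ∞)`, although its right
hand side is at most `2`. -/
lemma not_fixed_interval {N : ℕ} {ω σ : Fin N → ℝ} {κ Ω a b : ℝ} (hκ : 0 < κ) (hΩ : 0 ≤ Ω)
    (hω : ∀ i, |ω i| ≤ Ω) (hσ : ∀ i, |σ i| ≤ 1) (ha : Ω / κ < a) (hab : a < b)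
    (hfix : ∀ c ∈ Set.Ioo a b,
      c = (N : ℝ)⁻¹ * ∑ i, (1 + σ i * Real.sqrt (1 - (ω i / (κ * c)) ^ 2))) : False := by
  have hF : AnalyticOnNhd ℝ
      (fun c => (N : ℝ)⁻¹ * ∑ i, (1 + σ i * Real.sqrt (1 - (ω i / (κ * c)) ^ 2)))
      (Set.Ioi (Ω / κ)) := by
    intro c hc
    have hc1 : Ω < κ * c := (div_lt_iff₀' hκ).1 hc
    have hc0 : 0 < κ * c := by linarith
    refine analyticAt_const.mul (Finset.analyticAt_fun_sum _ fun i _ =>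
      analyticAt_const.add (analyticAt_const.mul ?_))
    have hlt : |ω i / (κ * c)| < 1 := by
      rw [abs_div, abs_of_pos hc0, div_lt_one hc0]
      linarith [hω i]
    have hne : 1 - (ω i / (κ * c)) ^ 2 ≠ 0 := by
      have := (sq_lt_one_iff_abs_lt_one _).2 hlt
      linarith
    have hin : AnalyticAt ℝ (fun c : ℝ => 1 - (ω i / (κ * c)) ^ 2) c :=
      analyticAt_const.sub ((analyticAt_const.div (analyticAt_const.mul analyticAt_id)
        hc0.ne').pow 2)
    exact AnalyticAt.fun_comp (g := Real.sqrt) (f := fun c : ℝ => 1 - (ω i / (κ * c)) ^ 2)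
      (Real.contDiffAt_sqrt hne).analyticAt hin
  have hm : (a + b) / 2 ∈ Set.Ioo a b := ⟨by linarith, by linarith⟩
  have hEq := (analyticOnNhd_id (𝕜 := ℝ)).eqOn_of_preconnected_of_eventuallyEq hF
    isPreconnected_Ioi (z₀ := (a + b) / 2) (lt_trans ha hm.1)
    (by filter_upwards [Ioo_mem_nhds hm.1 hm.2] with c hc using hfix c hc)
  have hbig := hEq (x := max b 3) (lt_of_lt_of_le (ha.trans hab) (le_max_left _ _))
  simp only at hbig
  have hle : (N : ℝ)⁻¹ * ∑ i, (1 + σ i * Real.sqrt (1 - (ω i / (κ * max b 3)) ^ 2)) ≤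
      (N : ℝ)⁻¹ * ∑ _i : Fin N, (2 : ℝ) := by
    refine mul_le_mul_of_nonneg_left (Finset.sum_le_sum fun i _ => ?_) (by positivity)
    have h1 : Real.sqrt (1 - (ω i / (κ * max b 3)) ^ 2) ≤ 1 :=
      Real.sqrt_le_one.2 (by nlinarith [sq_nonneg (ω i / (κ * max b 3))])
    have h0 := Real.sqrt_nonneg (1 - (ω i / (κ * max b 3)) ^ 2)
    nlinarith [(abs_le.1 (hσ i)).2]
  have h2 : (N : ℝ)⁻¹ * ∑ _i : Fin N, (2 : ℝ) ≤ 2 := by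
    rw [Finset.sum_const, Finset.card_univ, Fintype.card_fin, nsmul_eq_mul, ← mul_assoc]
    nlinarith [inv_mul_le_one (a := (N : ℝ))]
  have h3 := le_max_right b 3
  linarith

/-! ### The order parameter and the velocities -/

section System

variable {N : ℕ} {ω : Fin N → ℝ} {κ Ω : ℝ} {θ : Fin N → ℝ → ℝ}

lemma orderParam_nonneg (t : ℝ) : 0 ≤ orderParam N θ t :=
  mul_nonneg (by positivity)
    (Finset.sum_nonneg fun j _ => by linarith [Real.neg_one_le_cos (θ j t)])

lemma inv_mul_sum_const_le (C : ℝ) (hC : 0 ≤ C) : (N : ℝ)⁻¹ * ∑ _j : Fin N, C ≤ C := by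
  rw [Finset.sum_const, Finset.card_univ, Fintype.card_fin, nsmul_eq_mul, ← mul_assoc]
  exact mul_le_of_le_one_left hC inv_mul_le_one

lemma orderParam_le_two (t : ℝ) : orderParam N θ t ≤ 2 :=
  (mul_le_mul_of_nonneg_left (Finset.sum_le_sum fun j _ => by
    linarith [Real.cos_le_one (θ j t)]) (by positivity)).trans
    (inv_mul_sum_const_le 2 zero_le_two)

lemma hasDerivAt_orderParam
    (hd : ∀ i t, 0 ≤ t →
      HasDerivAt (θ i) (ω i - κ * orderParam N θ t * Real.sin (θ i t)) t) {t : ℝ} (ht : 0 ≤ t) :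
    HasDerivAt (orderParam N θ) ((N : ℝ)⁻¹ * ∑ j, -Real.sin (θ j t) *
      (ω j - κ * orderParam N θ t * Real.sin (θ j t))) t :=
  (HasDerivAt.fun_sum fun j _ => ((hd j t ht).cos.const_add 1)).const_mul _

/-- As long as `R ≥ r` with `κ r √(μ(2-μ))` above all frequencies, no oscillator with
`cos ≥ -1 + μ` falls below the smaller of its initial cosine and `1 - μ`, while the remaining
oscillators enter the average `R(0)` with less than `μ` each; so `R` loses at most `μ`. -/
lemma orderParam_loss (hN : 1 ≤ N)
    (hd : ∀ i t, 0 ≤ t →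
      HasDerivAt (θ i) (ω i - κ * orderParam N θ t * Real.sin (θ i t)) t)
    (hκ : 0 < κ) {μ r T : ℝ} (hμ : 0 < μ) (hμ1 : μ < 1) (hT : 0 ≤ T)
    (hr : ∀ t ∈ Set.Icc 0 T, r ≤ orderParam N θ t)
    (hw : ∀ i, |ω i| < κ * r * Real.sqrt (μ * (2 - μ))) :
    orderParam N θ 0 - μ ≤ orderParam N θ T := by
  have hN0 : (N : ℝ) ≠ 0 := by positivity
  have key : ∀ j, (1 + Real.cos (θ j 0)) - μ ≤ 1 + Real.cos (θ j T) := by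
    intro j
    by_cases hj : -1 + μ ≤ Real.cos (θ j 0)
    · have := cos_barrier (K := fun t => κ * orderParam N θ t) hμ hμ1 (fun t ht => hd j t ht.1)
        (fun t ht => mul_le_mul_of_nonneg_left (hr t ht) hκ.le) (hw j)
        (ℓ := min (Real.cos (θ j 0)) (1 - μ)) (le_min hj (by linarith)) (min_le_right _ _)
        (min_le_left _ _) T ⟨hT, le_rfl⟩
      rcases min_le_iff.1 this with h | h
      · linarith
      · linarith [Real.cos_le_one (θ j 0)]
    · push Not at hj
      linarith [Real.neg_one_le_cos (θ j T)]
  have hsum := Finset.sum_le_sum fun j (_ : j ∈ Finset.univ) => key j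
  rw [Finset.sum_sub_distrib, Finset.sum_const, Finset.card_univ, Fintype.card_fin,
    nsmul_eq_mul] at hsum
  have h := mul_le_mul_of_nonneg_left hsum (inv_nonneg.2 (Nat.cast_nonneg N : (0 : ℝ) ≤ N))
  rw [mul_sub, inv_mul_cancel_left₀ hN0] at h
  exact h

/-- Bootstrap: a first time at which `R` reaches a level slightly below `R(0) - μ` would
contradict `orderParam_loss`. -/
lemma orderParam_lower (hN : 1 ≤ N)
    (hd : ∀ i t, 0 ≤ t →
      HasDerivAt (θ i) (ω i - κ * orderParam N θ t * Real.sin (θ i t)) t)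
    (hκ : 0 < κ) {μ : ℝ} (hμ : 0 < μ) (hμ1 : μ < 1) (hΩ : ∀ i, |ω i| ≤ Ω)
    (hw : Ω < κ * (orderParam N θ 0 - μ) * Real.sqrt (μ * (2 - μ))) :
    ∀ t, 0 ≤ t → orderParam N θ 0 - μ ≤ orderParam N θ t := by
  have hs : 0 < Real.sqrt (μ * (2 - μ)) := Real.sqrt_pos.2 (by nlinarith)
  have hκs : 0 < κ * Real.sqrt (μ * (2 - μ)) := mul_pos hκ hs
  obtain ⟨r, hr1, hr2⟩ : ∃ r, Ω / (κ * Real.sqrt (μ * (2 - μ))) < r ∧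
      r < orderParam N θ 0 - μ := by
    apply exists_between
    rw [div_lt_iff₀ hκs]
    linarith
  have hw' : ∀ i, |ω i| < κ * r * Real.sqrt (μ * (2 - μ)) := by
    intro i
    have := (div_lt_iff₀ hκs).1 hr1
    linarith [hΩ i]
  intro T hT
  refine orderParam_loss hN hd hκ hμ hμ1 hT ?_ hw'
  by_contra hcon
  push Not at hcon
  obtain ⟨u, hu, hur⟩ := hcon
  have hcont : ContinuousOn (orderParam N θ) (Set.Icc 0 u) := fun t ht =>
    (hasDerivAt_orderParam hd ht.1).continuousAt.continuousWithinAt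
  have hcomp : IsCompact (Set.Icc 0 u ∩ orderParam N θ ⁻¹' Set.Iic r) :=
    isCompact_Icc.of_isClosed_subset
      (hcont.preimage_isClosed_of_isClosed isClosed_Icc isClosed_Iic) Set.inter_subset_left
  obtain ⟨m, hm⟩ := hcomp.exists_isLeast ⟨u, ⟨hu.1, le_rfl⟩, hur.le⟩
  have hm0 : 0 ≤ m := hm.1.1.1
  have hRm : orderParam N θ m ≤ r := hm.1.2
  have hbefore : ∀ t ∈ Set.Ico 0 m, r ≤ orderParam N θ t := by
    intro t ht
    by_contra h
    push Not at h
    have := hm.2 ⟨⟨ht.1, ht.2.le.trans hm.1.1.2⟩, h.le⟩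
    linarith [ht.2]
  have hmpos : 0 < m := by
    rcases hm0.lt_or_eq with h | h
    · exact h
    · rw [← h] at hRm
      linarith
  have hRm' : r ≤ orderParam N θ m := by
    refine ge_of_tendsto
      ((hasDerivAt_orderParam hd hm0).continuousAt.tendsto.mono_left nhdsWithin_le_nhds :
        Tendsto _ (nhdsWithin m (Set.Iio m)) _) ?_
    filter_upwards [Ico_mem_nhdsLT hmpos] with t ht using hbefore t ht
  have := orderParam_loss hN hd hκ hμ hμ1 hm0 (r := r) (fun t ht => by
    rcases ht.2.lt_or_eq with h | h
    · exact hbefore t ⟨ht.1, h⟩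
    · rw [h]; exact hRm') hw'
  linarith

/-- The system is the gradient ascent of `∑ ωᵢ θᵢ + (κN/2) R²`; along a bounded trajectory this
function is bounded, with derivative `∑ (θᵢ')²`, so all velocities tend to zero. -/
lemma velocity_tendsto_zero (hN : 1 ≤ N)
    (hd : ∀ i t, 0 ≤ t →
      HasDerivAt (θ i) (ω i - κ * orderParam N θ t * Real.sin (θ i t)) t)
    (hκ : 0 < κ) (hΩ : ∀ i, |ω i| ≤ Ω)
    (hbdd : ∀ i, ∃ B, ∀ t, 0 ≤ t → |θ i t| ≤ B) (i : Fin N) :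
    Tendsto (fun t => ω i - κ * orderParam N θ t * Real.sin (θ i t)) atTop (nhds 0) := by
  have hN0 : (N : ℝ) ≠ 0 := by positivity
  set v : Fin N → ℝ → ℝ := fun i t => ω i - κ * orderParam N θ t * Real.sin (θ i t) with hv
  set R := orderParam N θ with hR
  set R' : ℝ → ℝ := fun t => (N : ℝ)⁻¹ * ∑ j, -Real.sin (θ j t) * v j t with hR'
  have hRd : ∀ t, 0 ≤ t → HasDerivAt R (R' t) t := fun t ht => hasDerivAt_orderParam hd ht
  have hR0 : ∀ t, 0 ≤ R t := orderParam_nonneg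
  have hR2 : ∀ t, R t ≤ 2 := orderParam_le_two
  choose B hB using hbdd
  have hΩ0 : 0 ≤ Ω := (abs_nonneg _).trans (hΩ i)
  set M := Ω + 2 * κ with hM
  have hM0 : 0 ≤ M := by positivity
  have hvM : ∀ j t, |v j t| ≤ M := by
    intro j t
    have h1 : |κ * R t * Real.sin (θ j t)| ≤ κ * 2 * 1 := by
      rw [abs_mul, abs_mul, abs_of_pos hκ, abs_of_nonneg (hR0 t)]
      have := hR2 t
      have := hR0 t
      have := Real.abs_sin_le_one (θ j t)
      gcongr
    have h2 := abs_sub (ω j) (κ * R t * Real.sin (θ j t))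
    have h3 := hΩ j
    simp only [hv]
    linarith
  have hR'M : ∀ t, |R' t| ≤ M := by
    intro t
    simp only [hR']
    rw [abs_mul, abs_of_nonneg (by positivity : (0 : ℝ) ≤ (N : ℝ)⁻¹)]
    refine le_trans (mul_le_mul_of_nonneg_left ?_ (by positivity))
      (inv_mul_sum_const_le (N := N) M hM0)
    refine (Finset.abs_sum_le_sum_abs _ _).trans (Finset.sum_le_sum fun j _ => ?_)
    rw [abs_mul, abs_neg]
    exact (mul_le_of_le_one_left (abs_nonneg _) (Real.abs_sin_le_one _)).trans (hvM j t)
  set v' : Fin N → ℝ → ℝ := fun j t =>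
    -(κ * R' t * Real.sin (θ j t) + κ * R t * (Real.cos (θ j t) * v j t)) with hv'
  have hvd : ∀ j t, 0 ≤ t → HasDerivAt (v j) (v' j t) t := fun j t ht =>
    (((hRd t ht).const_mul κ).mul (hd j t ht).sin).const_sub (ω j)
  have hv'M : ∀ j t, |v' j t| ≤ 3 * κ * M := by
    intro j t
    have h1 : |κ * R' t * Real.sin (θ j t)| ≤ κ * M * 1 := by
      rw [abs_mul, abs_mul, abs_of_pos hκ]
      have := hR'M t
      have := Real.abs_sin_le_one (θ j t)
      gcongr
    have h2 : |κ * R t * (Real.cos (θ j t) * v j t)| ≤ κ * 2 * (1 * M) := by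
      rw [abs_mul, abs_mul, abs_mul, abs_of_pos hκ, abs_of_nonneg (hR0 t)]
      have := hR2 t
      have := hR0 t
      have := Real.abs_cos_le_one (θ j t)
      have := hvM j t
      gcongr
    have h3 := abs_add_le (κ * R' t * Real.sin (θ j t)) (κ * R t * (Real.cos (θ j t) * v j t))
    simp only [hv']
    rw [abs_neg]
    linarith
  set g : ℝ → ℝ := fun t => ∑ j, v j t ^ 2 with hg
  have hgd : ∀ t, 0 ≤ t → HasDerivAt g (∑ j, 2 * v j t * v' j t) t := fun t ht =>
    (HasDerivAt.fun_sum fun j _ => (hvd j t ht).pow 2).congr_deriv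
      (Finset.sum_congr rfl fun j _ => by norm_num)
  have hgL : ∀ t, |∑ j, 2 * v j t * v' j t| ≤ ∑ _j : Fin N, 2 * M * (3 * κ * M) := by
    intro t
    refine (Finset.abs_sum_le_sum_abs _ _).trans (Finset.sum_le_sum fun j _ => ?_)
    rw [abs_mul, abs_mul, abs_two]
    have := hvM j t
    have := hv'M j t
    gcongr
  have hg0 : Tendsto g atTop (nhds 0) := by
    refine tendsto_zero_of_primitive
      (W := fun t => ∑ j, ω j * θ j t + κ * N / 2 * R t ^ 2)
      (L := ∑ _j : Fin N, 2 * M * (3 * κ * M))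
      (B := ∑ j, Ω * B j + κ * N / 2 * 2 ^ 2) ?_ ?_ ?_ ?_
    · intro t ht
      refine ((HasDerivAt.fun_sum fun j _ => (hd j t ht).const_mul (ω j)).add
        (((hRd t ht).pow 2).const_mul (κ * N / 2))).congr_deriv ?_
      have h1 : κ * (N : ℝ) / 2 * (((2 : ℕ) : ℝ) * R t ^ (2 - 1) * R' t) =
          ∑ j, -(κ * R t * Real.sin (θ j t)) * v j t := by
        have h2 : (N : ℝ) * R' t = ∑ j, -Real.sin (θ j t) * v j t := by
          simp only [hR']
          rw [mul_inv_cancel_left₀ hN0]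
        have h3 : ∑ j, -(κ * R t * Real.sin (θ j t)) * v j t =
            κ * R t * ∑ j, -Real.sin (θ j t) * v j t := by
          rw [Finset.mul_sum]
          exact Finset.sum_congr rfl fun j _ => by ring
        rw [h3, ← h2]
        norm_num
        ring
      rw [h1, ← Finset.sum_add_distrib]
      refine Finset.sum_congr rfl fun j _ => ?_
      simp only [hv]
      ring
    · exact fun t _ => Finset.sum_nonneg fun j _ => sq_nonneg _
    · intro t ht
      refine add_le_add (Finset.sum_le_sum fun j _ => ?_) ?_
      · refine (le_abs_self _).trans ?_
        rw [abs_mul]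
        have := hΩ j
        have := hB j t ht
        gcongr
      · have := hR2 t
        have := hR0 t
        gcongr
    · intro a b ha hab
      have := (convex_Ici (0 : ℝ)).norm_image_sub_le_of_norm_hasDerivWithin_le (f := g)
        (fun t ht => (hgd t ht).hasDerivWithinAt) (fun t _ => hgL t) (x := a) (y := b) ha
        (ha.trans hab)
      rwa [Real.norm_eq_abs, Real.norm_eq_abs, abs_of_nonneg (sub_nonneg.2 hab)] at this
  have hsq : Tendsto (fun t => v i t ^ 2) atTop (nhds 0) :=
    squeeze_zero (fun t => sq_nonneg _) (fun t =>
      Finset.single_le_sum (f := fun j => v j t ^ 2) (fun j _ => sq_nonneg _)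
        (Finset.mem_univ i)) hg0
  have habs := hsq.sqrt
  simp only [Real.sqrt_sq_eq_abs, Real.sqrt_zero] at habs
  exact (tendsto_zero_iff_abs_tendsto_zero _).2 habs

/-- Once the sign `σᵢ` of each `cos θᵢ` is frozen and the velocities vanish asymptotically, every
accumulation value `c` of `R` solves `c = (1/N) ∑ᵢ (1 + σᵢ √(1 - (ωᵢ/(κc))²))`. If `R` had no
limit, its accumulation values would fill an interval, which `not_fixed_interval` forbids. -/
lemma orderParam_converges
    (hd : ∀ i t, 0 ≤ t →
      HasDerivAt (θ i) (ω i - κ * orderParam N θ t * Real.sin (θ i t)) t)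
    (hκ : 0 < κ) (hΩ0 : 0 ≤ Ω) (hΩ : ∀ i, |ω i| ≤ Ω) {ρ : ℝ} (hρ : Ω / κ < ρ)
    (hR : ∀ t, 0 ≤ t → ρ ≤ orderParam N θ t)
    (hv : ∀ i, Tendsto (fun t => ω i - κ * orderParam N θ t * Real.sin (θ i t)) atTop (nhds 0))
    {σ : Fin N → ℝ} (hσ : ∀ i, |σ i| ≤ 1)
    (hcos : ∀ i, ∀ᶠ t in atTop,
      Real.cos (θ i t) = σ i * Real.sqrt (1 - Real.sin (θ i t) ^ 2)) :
    ∃ L, Tendsto (orderParam N θ) atTop (nhds L) := by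
  refine tendsto_of_no_upcrossings dense_univ ?_
    (isBoundedUnder_of ⟨2, orderParam_le_two⟩) (isBoundedUnder_of ⟨0, orderParam_nonneg⟩)
  rintro a - b - hab ⟨hfa, hfb⟩
  rw [frequently_atTop] at hfa hfb
  have hρ0 : 0 < ρ := lt_of_le_of_lt (div_nonneg hΩ0 hκ.le) hρ
  have ha : ρ < a := by
    obtain ⟨t, ht, hta⟩ := hfa 0
    exact (hR t ht).trans_lt hta
  refine not_fixed_interval hκ hΩ0 hΩ hσ (hρ.trans ha) hab fun c hc => ?_
  have hfreq : ∃ᶠ t in atTop, orderParam N θ t = c := by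
    rw [frequently_atTop]
    intro A
    obtain ⟨t₁, ht₁, h₁⟩ := hfa (max A 0)
    obtain ⟨t₂, ht₂, h₂⟩ := hfb t₁
    obtain ⟨u, hu, huc⟩ := intermediate_value_Icc ht₂ (f := orderParam N θ)
      (fun t ht => (hasDerivAt_orderParam hd
        (((le_max_right A 0).trans ht₁).trans ht.1)).continuousAt.continuousWithinAt)
      ⟨(h₁.trans hc.1).le, (hc.2.trans h₂).le⟩
    exact ⟨u, ((le_max_left A 0).trans ht₁).trans hu.1, huc⟩
  have hc0 : 0 < c := by linarith [hc.1]
  -- The filter of large times restricted to those with `R = c`.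
  set l : Filter ℝ := atTop ⊓ 𝓟 {t | orderParam N θ t = c} with hl
  have : l.NeBot := frequently_mem_iff_neBot.1 hfreq
  have hRc : ∀ᶠ t in l, orderParam N θ t = c := mem_inf_of_right (mem_principal_self _)
  have hlim : Tendsto (orderParam N θ) l
      (nhds ((N : ℝ)⁻¹ * ∑ i, (1 + σ i * Real.sqrt (1 - (ω i / (κ * c)) ^ 2)))) := by
    refine Tendsto.const_mul _ (tendsto_finsetSum _ fun i _ => Tendsto.const_add _ ?_)
    have hsin : Tendsto (fun t => Real.sin (θ i t)) l (nhds (ω i / (κ * c))) := by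
      have h1 : Tendsto (fun t => (ω i - (ω i - κ * orderParam N θ t * Real.sin (θ i t))) /
          (κ * c)) l (nhds ((ω i - 0) / (κ * c))) :=
        (((hv i).mono_left inf_le_left).const_sub (ω i)).div_const (κ * c)
      rw [sub_zero] at h1
      refine h1.congr' ?_
      filter_upwards [hRc] with t ht
      rw [ht]
      field_simp
      ring
    have h2 : Tendsto (fun t => σ i * Real.sqrt (1 - Real.sin (θ i t) ^ 2)) l
        (nhds (σ i * Real.sqrt (1 - (ω i / (κ * c)) ^ 2))) :=
      ((hsin.pow 2).const_sub 1).sqrt.const_mul _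
    exact h2.congr' (((hcos i).filter_mono inf_le_left).mono fun t ht => ht.symm)
  exact tendsto_nhds_unique (tendsto_const_nhds.congr' (hRc.mono fun t ht => ht.symm)) hlim

end System

/-! ### Trapped and untrapped oscillators and their limits -/

theorem stmt3 (N : ℕ) (hN : 1 ≤ N) (ω : Fin N → ℝ) (κ : ℝ) (Ωn : ℝ)
    (hΩn : IsGreatest (Set.range fun i => |ω i|) Ωn)
    (θ0 : Fin N → ℝ) (θ : Fin N → ℝ → ℝ) (hsol : IsWinfreeSol N ω κ θ0 θ)
    (R0 : ℝ) (hR0def : R0 = orderParam N θ 0) (hR0 : 0 < R0)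
    (μ : ℝ) (hμ : μ ∈ Set.Ioo 0 (min R0 1))
    (hκ : Ωn / ((R0 - μ) * Real.sqrt (μ * (2 - μ))) < κ) :
    -- (a)
    (∀ t : ℝ, 0 ≤ t → R0 - μ ≤ orderParam N θ t) ∧
    -- (b)
    (∀ i, (∃ L : ℝ, Tendsto (θ i) atTop (nhds L)) ∧ OscLt2Pi (θ i) ∧
      Tendsto (deriv (θ i)) atTop (nhds 0)) ∧
    -- (c)
    (∀ i, ∀ t₀ : ℝ, 0 ≤ t₀ → -1 + μ ≤ Real.cos (θ i t₀) →
      (∀ t, t₀ ≤ t → -1 + μ ≤ Real.cos (θ i t)) ∧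
      (∀ t, t₀ + Real.pi / (κ * (R0 - μ) * Real.sqrt (μ * (2 - μ)) - Ωn) ≤ t →
        1 - μ ≤ Real.cos (θ i t))) ∧
    -- (d)
    (∃ Rinf : ℝ, Tendsto (orderParam N θ) atTop (nhds Rinf) ∧
      ∀ i,
        (sSup ((fun t => Real.cos (θ i t)) '' Set.Ici 0) < -1 + μ ∧
          ∃ k : ℤ, Tendsto (θ i) atTop
            (nhds (Real.pi - Real.arcsin (ω i / (κ * Rinf)) + 2 * k * Real.pi))) ∨
        (-1 + μ ≤ sSup ((fun t => Real.cos (θ i t)) '' Set.Ici 0) ∧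
          ∃ k : ℤ, Tendsto (θ i) atTop
            (nhds (Real.arcsin (ω i / (κ * Rinf)) + 2 * k * Real.pi)))) := by
  have hμ0 : 0 < μ := hμ.1
  have hμR : μ < R0 := hμ.2.trans_le (min_le_left _ _)
  have hμ1 : μ < 1 := hμ.2.trans_le (min_le_right _ _)
  have hΩ : ∀ i, |ω i| ≤ Ωn := fun i => hΩn.2 ⟨i, rfl⟩
  have hΩ0 : 0 ≤ Ωn := by
    obtain ⟨i, hi⟩ := hΩn.1
    rw [← hi]; exact abs_nonneg _
  have hd : ∀ i t, 0 ≤ t →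
      HasDerivAt (θ i) (ω i - κ * orderParam N θ t * Real.sin (θ i t)) t := fun i t ht =>
    (hsol.2 i t ht).congr_deriv (by unfold orderParam; ring)
  have hρ : 0 < R0 - μ := by linarith
  have hs : 0 < Real.sqrt (μ * (2 - μ)) := Real.sqrt_pos.2 (by nlinarith)
  have hs1 : Real.sqrt (μ * (2 - μ)) < 1 := by
    rw [Real.sqrt_lt' one_pos]; nlinarith
  have hκ0 : 0 < κ := lt_of_le_of_lt (by positivity) hκ
  have hκΩ : Ωn < κ * (R0 - μ) * Real.sqrt (μ * (2 - μ)) := by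
    have := (div_lt_iff₀ (mul_pos hρ hs)).1 hκ
    linarith
  have ha : ∀ t : ℝ, 0 ≤ t → R0 - μ ≤ orderParam N θ t := by
    rw [hR0def]
    exact orderParam_lower hN hd hκ0 hμ0 hμ1 hΩ (by rwa [← hR0def])
  have hκR : ∀ t : ℝ, 0 ≤ t → κ * (R0 - μ) ≤ κ * orderParam N θ t :=
    fun t ht => mul_le_mul_of_nonneg_left (ha t ht) hκ0.le
  have hosc : ∀ i, OscLt2Pi (θ i) := fun i =>
    oscLt2Pi_of_drift hs hs1 ((hΩ i).trans_lt hκΩ) (hd i) hκR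
  -- Trapping, for every level `ν` at which the coupling still beats the frequencies.
  have hc : ∀ ν, 0 < ν → ν < 1 → Ωn < κ * (R0 - μ) * Real.sqrt (ν * (2 - ν)) →
      ∀ i, ∀ t₀ : ℝ, 0 ≤ t₀ → -1 + ν ≤ Real.cos (θ i t₀) →
      (∀ t, t₀ ≤ t → -1 + ν ≤ Real.cos (θ i t)) ∧
      (∀ t, t₀ + Real.pi / (κ * (R0 - μ) * Real.sqrt (ν * (2 - ν)) - Ωn) ≤ t →
        1 - ν ≤ Real.cos (θ i t)) := by
    intro ν hν hν1 hνΩ i t₀ ht₀ hcos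
    constructor
    · intro t ht
      exact cos_barrier (T := t) hν hν1 (fun u hu => hd i u (ht₀.trans hu.1))
        (fun u hu => hκR u (ht₀.trans hu.1)) ((hΩ i).trans_lt hνΩ) le_rfl (by linarith) hcos
        t ⟨ht, le_rfl⟩
    · intro t ht
      exact cos_reach (T := t) hν hν1 (fun u hu => hd i u (ht₀.trans hu.1))
        (fun u hu => hκR u (ht₀.trans hu.1)) (sub_pos.2 hνΩ) (by linarith [hΩ i]) hcos ht
  have hv : ∀ i, Tendsto (fun t => ω i - κ * orderParam N θ t * Real.sin (θ i t)) atTop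
      (nhds 0) := by
    refine velocity_tendsto_zero hN hd hκ0 hΩ fun i => ?_
    obtain ⟨⟨M, hM⟩, ⟨m, hm⟩, -⟩ := hosc i
    refine ⟨max M (-m), fun t ht => abs_le.2 ⟨?_, ?_⟩⟩
    · have h1 : m ≤ θ i t := hm ⟨t, ht, rfl⟩
      linarith [le_max_right M (-m)]
    · exact (hM ⟨t, ht, rfl⟩).trans (le_max_left _ _)
  -- A slightly smaller level `ν < μ` still traps, which makes the supremum of the cosine of a
  -- never-trapped oscillator strictly smaller than `-1 + μ`.
  obtain ⟨ν, hνΩ, hν0, hνμ⟩ : ∃ ν, Ωn < κ * (R0 - μ) * Real.sqrt (ν * (2 - ν)) ∧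
      0 < ν ∧ ν < μ := by
    have hcont : Continuous fun ν : ℝ => κ * (R0 - μ) * Real.sqrt (ν * (2 - ν)) := by fun_prop
    have h1 := (hcont.tendsto μ).eventually (lt_mem_nhds hκΩ)
    exact ((h1.filter_mono nhdsWithin_le_nhds).and (Ioo_mem_nhdsLT hμ0)).exists
  have hdich : ∀ i, (sSup ((fun t => Real.cos (θ i t)) '' Set.Ici 0) < -1 + μ ∧
        ∀ t, 0 ≤ t → Real.cos (θ i t) < 0) ∨
      (-1 + μ ≤ sSup ((fun t => Real.cos (θ i t)) '' Set.Ici 0) ∧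
        ∃ T, 0 ≤ T ∧ ∀ t, T ≤ t → 0 < Real.cos (θ i t)) := by
    intro i
    by_cases h : ∃ t₀, 0 ≤ t₀ ∧ -1 + ν ≤ Real.cos (θ i t₀)
    · right
      obtain ⟨t₀, ht₀, hcos⟩ := h
      have hT := (hc ν hν0 (by linarith) hνΩ i t₀ ht₀ hcos).2
      set T := t₀ + Real.pi / (κ * (R0 - μ) * Real.sqrt (ν * (2 - ν)) - Ωn) with hTdef
      have hT0 : 0 ≤ T := add_nonneg ht₀ (div_nonneg Real.pi_pos.le (by linarith))
      refine ⟨?_, T, hT0, fun t ht => by linarith [hT t ht]⟩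
      refine le_trans ?_ (le_csSup ⟨1, ?_⟩ ⟨T, hT0, rfl⟩)
      · show -1 + μ ≤ Real.cos (θ i T)
        linarith [hT T le_rfl]
      · rintro _ ⟨t, -, rfl⟩
        exact Real.cos_le_one _
    · left
      push Not at h
      refine ⟨lt_of_le_of_lt (b := -1 + ν) (csSup_le ⟨_, 0, Set.self_mem_Ici, rfl⟩ ?_)
        (by linarith), fun t ht => by linarith [h t ht]⟩
      rintro _ ⟨t, ht, rfl⟩
      exact (h t ht).le
  have hsign : ∀ i, ∃ σ : ℝ, |σ| ≤ 1 ∧ ∀ᶠ t in atTop,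
      Real.cos (θ i t) = σ * Real.sqrt (1 - Real.sin (θ i t) ^ 2) := by
    intro i
    rcases hdich i with ⟨-, h⟩ | ⟨-, T, -, h⟩
    · refine ⟨-1, by simp, ?_⟩
      filter_upwards [eventually_ge_atTop 0] with t ht
      rw [← Real.abs_cos_eq_sqrt_one_sub_sin_sq, abs_of_neg (h t ht)]
      ring
    · refine ⟨1, by simp, ?_⟩
      filter_upwards [eventually_ge_atTop T] with t ht
      rw [← Real.abs_cos_eq_sqrt_one_sub_sin_sq, abs_of_pos (h t ht), one_mul]
  choose σ hσ1 hσ using hsign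
  obtain ⟨L, hL⟩ := orderParam_converges hd hκ0 hΩ0 hΩ (ρ := R0 - μ)
    (by
      rw [div_lt_iff₀' hκ0]
      exact hκΩ.trans_le (mul_le_of_le_one_right (by positivity) hs1.le)) ha hv hσ1 hσ
  have hL0 : 0 < L := hρ.trans_le (ge_of_tendsto hL (by
    filter_upwards [eventually_ge_atTop 0] with t ht using ha t ht))
  have hsin : ∀ i, Tendsto (fun t => Real.sin (θ i t)) atTop (nhds (ω i / (κ * L))) := by
    intro i
    have h1 := ((hv i).const_sub (ω i)).div (hL.const_mul κ) (by positivity)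
    rw [sub_zero] at h1
    refine h1.congr' ?_
    filter_upwards [eventually_ge_atTop 0] with t ht
    have hpos : 0 < orderParam N θ t := by linarith [ha t ht]
    simp only [Pi.div_apply]
    field_simp
    ring
  have hD : ∀ i,
      (sSup ((fun t => Real.cos (θ i t)) '' Set.Ici 0) < -1 + μ ∧
        ∃ k : ℤ, Tendsto (θ i) atTop
          (nhds (Real.pi - Real.arcsin (ω i / (κ * L)) + 2 * k * Real.pi))) ∨
      (-1 + μ ≤ sSup ((fun t => Real.cos (θ i t)) '' Set.Ici 0) ∧
        ∃ k : ℤ, Tendsto (θ i) atTop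
          (nhds (Real.arcsin (ω i / (κ * L)) + 2 * k * Real.pi))) := by
    intro i
    rcases hdich i with ⟨h0, h⟩ | ⟨h0, T, hT, h⟩
    · left
      -- The reflected phase `π - θ` has positive cosine and the same sine.
      obtain ⟨k, hk⟩ := tendsto_of_tendsto_sin (ψ := fun t => Real.pi - θ i t) (T := 0)
        (y := ω i / (κ * L))
        (fun t ht => (continuousAt_const.sub (hd i t ht).continuousAt).continuousWithinAt)
        (fun t ht => by rw [Real.cos_pi_sub]; linarith [h t ht])
        (by simpa only [Real.sin_pi_sub] using hsin i)
      refine ⟨h0, -k, ?_⟩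
      have h2 := hk.const_sub Real.pi
      simp only [sub_sub_cancel] at h2
      convert h2 using 2
      push_cast
      ring
    · exact Or.inr ⟨h0, tendsto_of_tendsto_sin
        (fun t ht => (hd i t (hT.trans ht)).continuousAt.continuousWithinAt) h (hsin i)⟩
  refine ⟨ha, fun i => ⟨?_, hosc i, ?_⟩, hc μ hμ0 hμ1 hκΩ, L, hL, hD⟩
  · rcases hD i with ⟨-, k, hk⟩ | ⟨-, k, hk⟩
    · exact ⟨_, hk⟩
    · exact ⟨_, hk⟩
  · refine (hv i).congr' ?_
    filter_upwards [eventually_ge_atTop 0] with t ht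
    exact (hd i t ht).deriv.symm
end

section
/- Let (θ_i)_{i=1}^N be the solution of the prototypical Winfree model with R_0 > 0, and define K_c = 2/R_0^{3/2} if R_0 ≤ 1 and K_c = 2(2 − R_0) + (4/(3√3))(R_0 − 1) if 1 < R_0 ≤ 2. Suppose κ > K_c·‖Ω‖_∞. Then: (a) R(t) ≥ (3R_0 − 3 + √(R_0² − 2R_0 + 9))/4 ≥ (2/3)R_0 for all t ≥ 0; (b) for every i the limit lim_{t→∞} θ_i(t) exists, sup_{t≥0} θ_i(t) − inf_{t≥0} θ_i(t) < 2π, and lim_{t→∞} θ_i'(t) = 0; (c) for every i and every t_0 ≥ 0 with cos θ_i(t_0) ≥ (−1 + R_0 − √(R_0² − 2R_0 + 9))/4, one has cos θ_i(t) ≥ (−1 + R_0 − √(R_0² − 2R_0 + 9))/4 for all t ≥ t_0 and cos θ_i(t) ≥ (1 − R_0 + √(R_0² − 2R_0 + 9))/4 for all t ≥ t_0 + πK_c/(κ − K_c‖Ω‖_∞); in particular, for every i and t_0 ≥ 0 with cos θ_i(t_0) ≥ −1 + R_0/3, one has cos θ_i(t) ≥ −1 + R_0/3 for t ≥ t_0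 and cos θ_i(t) ≥ 1 − R_0/3 for t ≥ t_0 + πK_c/(κ − K_c‖Ω‖_∞). -/
/-!
Write `c = (1 - R₀ + √(R₀² - 2R₀ + 9)) / 4`. It maximises `(R₀ - 1 + cos α) sin α` over `cos α`
(`le_critValue`), and `κ > Kc ‖Ω‖` implies `κ (R₀ - 1 + c) √(1 - c²) > ‖Ω‖` because `1 / Kc` is at
most that maximum (`one_le_Kc_mul`). The bound in (a) is `m = R₀ - 1 + c`, and the levels in (c)
are `-c` and `c`.

While `R ≥ m`, the coupling dominates the intrinsic frequency wherever `|cos θ_i| ≤ c`; hence all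
levels of `cos` in `[-c, c]` are barriers (`cos_barrier`), and the zone is crossed at a definite
angular speed (`cos_ge_of_time`). In particular no `cos θ_i` can drop by more than `1 - c`, which
gives `R ≥ R₀ - (1 - c) = m` back; a bootstrap makes this rigorous (`orderParam_lower`). Barriers
for the phase itself bound its oscillation (`exists_trapping`).

For convergence, the model is the gradient ascent flow of `V = ∑ ω_j θ_j + (κ N / 2) R²`. Since the
phases are bounded, so is `V`, and a Barbalat argument gives `θ_i' → 0` (`tendsto_velocity`). The
sign `σ_i` of `cos θ_i` is eventually constant, so every accumulation value `ρ` of `R` solves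
`ρ = 1 + N⁻¹ ∑ σ_j √(1 - (ω_j / (κ ρ))²)`. If `R` did not converge, an interval of such `ρ` would
exist, and analyticity would propagate the equation to `ρ = 3`, where it fails
(`tendsto_of_self_consistency`). So `R` converges, hence so do `sin θ_i`, `cos θ_i` and `θ_i`.
-/

open MeasureTheory Filter

/-! ### The critical value and the threshold -/

/-- The value `c = cos α` at which `(R₀ - 1 + cos α) sin α` is maximal is the positive root of
`2c² = (1 - R₀)c + 1`; the elementary bounds on it. -/
theorem critCos_spec {R0 c : ℝ} (h0 : 0 < R0) (h2 : R0 ≤ 2)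
    (hc : c = (1 - R0 + √(R0 ^ 2 - 2 * R0 + 9)) / 4) :
    2 * c ^ 2 = (1 - R0) * c + 1 ∧ 1 / 2 ≤ c ∧ c < 1 ∧ 1 - R0 / 3 ≤ c := by
  have hs : √(R0 ^ 2 - 2 * R0 + 9) ^ 2 = R0 ^ 2 - 2 * R0 + 9 := Real.sq_sqrt (by nlinarith)
  have hA : 3 - R0 / 3 ≤ √(R0 ^ 2 - 2 * R0 + 9) := Real.le_sqrt_of_sq_le (by nlinarith)
  have hB : 1 + R0 ≤ √(R0 ^ 2 - 2 * R0 + 9) := Real.le_sqrt_of_sq_le (by nlinarith)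
  have hC : √(R0 ^ 2 - 2 * R0 + 9) < 3 + R0 := by
    rw [Real.sqrt_lt' (by linarith)]; nlinarith
  refine ⟨?_, by linarith, by linarith, by linarith⟩
  rw [hc]; nlinarith

/-- `c` maximises `(r + x) √(1 - x²)` among `x ≥ -r`: with `y = √(1 - x²)` one has
`y √(1 - c²) ≤ 1 - c x`, and the two factors `1 - 2c² + c x`, `1 - c x` have sum `2(1 - c²)`. -/
theorem le_critValue {r c S x y : ℝ} (hc : 0 < c) (hS : 0 < S) (hcS : c ^ 2 + S ^ 2 = 1)
    (hr : r * c = 1 - 2 * c ^ 2) (hxy : x ^ 2 + y ^ 2 = 1) (hx : 0 ≤ r + x) :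
    (r + x) * y ≤ (r + c) * S := by
  have h1 : y * S ≤ 1 - c * x := by nlinarith [sq_nonneg (c - x), sq_nonneg (S - y)]
  have h2 : c * (r + x) * (y * S) ≤ c * (r + x) * (1 - c * x) :=
    mul_le_mul_of_nonneg_left h1 (by positivity)
  have h3 : c * (r + x) * (1 - c * x) ≤ (S ^ 2) ^ 2 := by
    have : c * (r + x) = 1 - 2 * c ^ 2 + c * x := by linarith
    have h4 : S ^ 2 = 1 - c ^ 2 := by linarith
    rw [this, h4]
    nlinarith [sq_nonneg (c ^ 2 - c * x)]
  have h5 : c * (r + c) = S ^ 2 := by nlinarith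
  have h6 : (c * S) * ((r + x) * y) ≤ (c * S) * ((r + c) * S) := by
    have : (c * S) * ((r + c) * S) = (S ^ 2) ^ 2 := by rw [← h5]; nlinarith
    rw [this]; linarith
  exact le_of_mul_le_mul_left h6 (by positivity)

/-- The threshold `Kc` dominates the reciprocal of the maximum of `(R₀ - 1 + cos α) sin α`. -/
theorem one_le_Kc_mul {R0 c S Kc : ℝ} (h0 : 0 < R0) (h2 : R0 ≤ 2)
    (hq : 2 * c ^ 2 = (1 - R0) * c + 1) (hc : 1 / 2 ≤ c)
    (hS : 0 < S) (hcS : c ^ 2 + S ^ 2 = 1) (hm : 0 < R0 - 1 + c)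
    (hKc : Kc = if R0 ≤ 1 then 2 / R0 ^ ((3:ℝ)/2)
      else 2 * (2 - R0) + 4 / (3 * √3) * (R0 - 1)) :
    0 < Kc ∧ 1 ≤ Kc * ((R0 - 1 + c) * S) := by
  have hc0 : 0 < c := by linarith
  split_ifs at hKc with h1
  · have hA0 : 0 < R0 ^ ((3:ℝ)/2) := by positivity
    have hA2 : (R0 ^ ((3:ℝ)/2)) ^ 2 = R0 ^ 3 := by
      rw [← Real.rpow_natCast, ← Real.rpow_mul h0.le]
      norm_num
    set A := R0 ^ ((3:ℝ)/2)
    have hc1 : 0 ≤ 1 - c := by nlinarith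
    have hcc : 1 ≤ 2 * c ^ 2 := by nlinarith
    have e1 : R0 * c = (1 - c) * (1 + 2 * c) := by linarith
    have e2 : (R0 - 1 + c) * c = 1 - c ^ 2 := by linarith
    have k1 : (1 + 2 * c) ^ 3 ≤ 4 * c * (1 + c) ^ 3 := by
      have : 0 ≤ (2 * c ^ 2 - 1) * (2 * c ^ 2 + 2 * c + 1) :=
        mul_nonneg (by linarith) (by positivity)
      nlinarith
    have k2 : c ^ 3 * R0 ^ 3 ≤ c ^ 3 * (4 * ((R0 - 1 + c) * S) ^ 2) := by
      calc c ^ 3 * R0 ^ 3 = (R0 * c) ^ 3 := by ring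
        _ = (1 - c) ^ 3 * (1 + 2 * c) ^ 3 := by rw [e1]; ring
        _ ≤ (1 - c) ^ 3 * (4 * c * (1 + c) ^ 3) := mul_le_mul_of_nonneg_left k1 (by positivity)
        _ = 4 * c * (1 - c ^ 2) ^ 2 * (1 - c ^ 2) := by ring
        _ = 4 * c * ((R0 - 1 + c) * c) ^ 2 * S ^ 2 := by
            rw [e2]; congr 1; linarith
        _ = _ := by ring
    have k3 : R0 ^ 3 ≤ (2 * ((R0 - 1 + c) * S)) ^ 2 := by
      have := le_of_mul_le_mul_left k2 (by positivity)
      linarith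
    have k4 : A ≤ 2 * ((R0 - 1 + c) * S) := by
      rw [← hA2] at k3
      exact (pow_le_pow_iff_left₀ hA0.le (by positivity) two_ne_zero).1 k3
    refine ⟨by rw [hKc]; positivity, ?_⟩
    rw [hKc, div_mul_eq_mul_div, one_le_div hA0]
    exact k4
  · push Not at h1
    have h3 : √3 ^ 2 = 3 := Real.sq_sqrt (by norm_num)
    have h3a : 1.732 < √3 := Real.lt_sqrt_of_sq_lt (by norm_num)
    have h3b : √3 < 1.7321 := by rw [Real.sqrt_lt' (by norm_num)]; norm_num
    have h20 : √2 ^ 2 = 2 := Real.sq_sqrt (by norm_num)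
    have h2a : 1.414 < √2 := Real.lt_sqrt_of_sq_lt (by norm_num)
    have h2b : √2 < 1.4143 := by rw [Real.sqrt_lt' (by norm_num)]; norm_num
    have hk : 4 / (3 * √3) = 4 * √3 / 9 := by
      field_simp; nlinarith
    rw [hk] at hKc
    set r := R0 - 1 with hr
    have hKr : Kc = 2 - (2 - 4 * √3 / 9) * r := by rw [hKc, hr]; ring
    have hr0 : 0 < r := by linarith
    have hr1 : r ≤ 1 := by linarith
    have hrc : r * c = 1 - 2 * c ^ 2 := by rw [hr]; linarith
    have hKpos : 0 < Kc := by rw [hKr]; nlinarith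
    refine ⟨hKpos, ?_⟩
    rcases le_total r 0.9 with h9 | h9
    -- comparison with the point that is optimal for `R₀ = 1`
    · have := le_critValue hc0 hS hcS hrc (x := √2 / 2) (y := √2 / 2)
        (by nlinarith) (by positivity)
      refine le_trans ?_ (mul_le_mul_of_nonneg_left this hKpos.le)
      have e : (r + √2 / 2) * (√2 / 2) = 1 / 2 + r * √2 / 2 := by nlinarith
      rw [e, hKr]
      have : 0 ≤ r * (√2 - (1 - 2 * √3 / 9) - (1 - 2 * √3 / 9) * √2 * r) := by
        apply mul_nonneg hr0.le
        have : (1 - 2 * √3 / 9) * √2 * r ≤ 0.6152 * 1.4143 * 0.9 := by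
          gcongr; nlinarith
        nlinarith
      nlinarith
    -- comparison with the point that is optimal for `R₀ = 2`
    · have := le_critValue hc0 hS hcS hrc (x := 1 / 2) (y := √3 / 2)
        (by nlinarith) (by positivity)
      refine le_trans ?_ (mul_le_mul_of_nonneg_left this hKpos.le)
      rw [hKr]
      set q := √3 with hq
      -- the left-hand side minus one vanishes at `r = 1`
      have e : (2 - (2 - 4 * q / 9) * r) * ((r + 1 / 2) * (q / 2)) - 1
          = (1 - r) * (q * r - 2 / 3 * r - 1 + q / 2) := by
        ring_nf; rw [h3]; ring
      have : 0 ≤ (1 - r) * (q * r - 2 / 3 * r - 1 + q / 2) :=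
        mul_nonneg (by linarith) (by nlinarith)
      linarith

/-! ### A single oscillator driven by the order parameter -/

section Oscillator

variable {θ R : ℝ → ℝ} {w κ μ S c : ℝ}

theorem continuousOn_Icc_of_ode
    (hθ : ∀ t, 0 ≤ t → HasDerivAt θ (w - κ * R t * Real.sin (θ t)) t) {a b : ℝ} (ha : 0 ≤ a) :
    ContinuousOn θ (Set.Icc a b) :=
  fun x hx => (hθ x (ha.trans hx.1)).continuousAt.continuousWithinAt

/-- Where `|sin θ| ≥ S` the coupling term beats the intrinsic frequency, so the phase moves
towards a multiple of `2π`. -/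
theorem drift_bound (hκ : 0 < κ) (hμ : 0 ≤ μ) {ρ x ε : ℝ} (hε : |w| + ε ≤ κ * μ * S)
    (hρ : μ ≤ ρ) (hx : S ≤ |x|) (hS : 0 < S) : |x| * ε ≤ -(x * (w - κ * ρ * x)) := by
  have h1 : x * w ≤ |x| * |w| := by rw [← abs_mul]; exact le_abs_self _
  have h2 : κ * μ * S ≤ κ * ρ * |x| := by
    have : 0 ≤ ρ := hμ.trans hρ
    gcongr
  have h3 : |x| * (|w| + ε) ≤ |x| * (κ * ρ * |x|) :=
    mul_le_mul_of_nonneg_left (hε.trans h2) (abs_nonneg x)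
  have h4 : |x| * (κ * ρ * |x|) = κ * ρ * x ^ 2 := by rw [← sq_abs x]; ring
  nlinarith

theorem le_abs_sin {c S x : ℝ} (hcS : c ^ 2 + S ^ 2 = 1)
    (h : |Real.cos x| ≤ c) : S ≤ |Real.sin x| := by
  refine le_of_abs_le (sq_le_sq.1 ?_)
  have h1 := Real.sin_sq_add_cos_sq x
  have h2 : Real.cos x ^ 2 ≤ c ^ 2 := by rw [← sq_abs]; gcongr
  linarith

/-- Every level of `cos` in `[-c, c]` is a lower barrier for `cos θ`. -/
theorem cos_barrier_s4 (hθ : ∀ t, 0 ≤ t → HasDerivAt θ (w - κ * R t * Real.sin (θ t)) t)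
    (hκ : 0 < κ) (hμ : 0 ≤ μ) (hS : 0 < S) (hcS : c ^ 2 + S ^ 2 = 1)
    (hw : |w| < κ * μ * S) {t₀ t a : ℝ} (h0 : 0 ≤ t₀) (ht : t₀ ≤ t)
    (hR : ∀ u, t₀ ≤ u → u < t → μ ≤ R u) (ha : |a| ≤ c) (hc0 : a ≤ Real.cos (θ t₀)) :
    a ≤ Real.cos (θ t) := by
  have key := image_le_of_deriv_right_lt_deriv_boundary'
    (f := fun u => -Real.cos (θ u))
    (f' := fun u => Real.sin (θ u) * (w - κ * R u * Real.sin (θ u)))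
    (a := t₀) (b := t) (B := fun _ => -a) (B' := fun _ => 0)
    (Real.continuous_cos.comp_continuousOn (continuousOn_Icc_of_ode hθ h0)).neg
    (fun x hx => by
      exact ((hθ x (h0.trans hx.1)).cos.neg.congr_deriv (by ring)).hasDerivWithinAt)
    (neg_le_neg hc0) continuousOn_const (fun x _ => hasDerivWithinAt_const _ _ _)
    (fun x hx he => by
      have he' : Real.cos (θ x) = a := by simpa using he
      have hs := le_abs_sin (x := θ x) hcS (by rwa [he'])
      have := drift_bound (w := w) (ε := κ * μ * S - |w|) hκ hμ (by linarith)
        (hR x hx.1 hx.2) hs hS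
      have : 0 < |Real.sin (θ x)| * (κ * μ * S - |w|) :=
        mul_pos (by linarith) (by linarith)
      linarith)
  have := key ⟨ht, le_rfl⟩
  linarith

/-- A phase `ψ` with `sin ψ = S` is an upper barrier for `θ`. -/
theorem le_of_barrier (hθ : ∀ t, 0 ≤ t → HasDerivAt θ (w - κ * R t * Real.sin (θ t)) t)
    (hκ : 0 < κ) (hS : 0 < S) (hw : |w| < κ * μ * S) (hR : ∀ u, 0 ≤ u → μ ≤ R u)
    {ψ : ℝ} (hψ : Real.sin ψ = S) {t₀ t : ℝ} (h0 : 0 ≤ t₀) (ht : t₀ ≤ t) (hi : θ t₀ ≤ ψ) :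
    θ t ≤ ψ := by
  refine image_le_of_deriv_right_lt_deriv_boundary'
    (f' := fun u => w - κ * R u * Real.sin (θ u)) (B := fun _ => ψ) (B' := fun _ => 0)
    (continuousOn_Icc_of_ode hθ h0)
    (fun x hx => (hθ x (h0.trans hx.1)).hasDerivWithinAt) hi continuousOn_const
    (fun x _ => hasDerivWithinAt_const _ _ _) (fun x hx he => ?_) ⟨ht, le_rfl⟩
  rw [he, hψ]
  have : κ * μ * S ≤ κ * R x * S := by
    have := hR x (h0.trans hx.1)
    gcongr
  linarith [le_abs_self w]

/-- A phase `ψ` with `sin ψ = -S` is a lower barrier for `θ`. -/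
theorem ge_of_barrier (hθ : ∀ t, 0 ≤ t → HasDerivAt θ (w - κ * R t * Real.sin (θ t)) t)
    (hκ : 0 < κ) (hS : 0 < S) (hw : |w| < κ * μ * S) (hR : ∀ u, 0 ≤ u → μ ≤ R u)
    {ψ : ℝ} (hψ : Real.sin ψ = -S) {t₀ t : ℝ} (h0 : 0 ≤ t₀) (ht : t₀ ≤ t) (hi : ψ ≤ θ t₀) :
    ψ ≤ θ t := by
  have hneg : ∀ t, 0 ≤ t →
      HasDerivAt (fun u => -θ u) (-w - κ * R t * Real.sin (-θ t)) t := fun t ht => by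
    exact (hθ t ht).neg.congr_deriv (by rw [Real.sin_neg]; ring)
  have := le_of_barrier (θ := fun u => -θ u) (w := -w) hneg hκ hS (by rwa [abs_neg]) hR (ψ := -ψ)
    (by rw [Real.sin_neg, hψ, neg_neg]) h0 ht (neg_le_neg hi)
  linarith

/-- A phase with `|cos θ| ≤ c` approaches the multiples of `2π` with angular speed at least `ε`,
so it reaches `cos θ ≥ c` within time `π / ε`. -/
theorem cos_ge_of_time (hθ : ∀ t, 0 ≤ t → HasDerivAt θ (w - κ * R t * Real.sin (θ t)) t)
    (hκ : 0 < κ) (hμ : 0 ≤ μ) (hS : 0 < S) (hc : 0 ≤ c) (hcS : c ^ 2 + S ^ 2 = 1)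
    {ε : ℝ} (hε : 0 < ε) (hw : |w| + ε ≤ κ * μ * S) {t₀ t : ℝ} (h0 : 0 ≤ t₀)
    (ht : t₀ + Real.pi / ε ≤ t)
    (hR : ∀ u, 0 ≤ u → μ ≤ R u) (hc0 : -c ≤ Real.cos (θ t₀)) :
    c ≤ Real.cos (θ t) := by
  by_contra! hlt
  have hw' : |w| < κ * μ * S := by linarith
  have hcabs : |c| ≤ c := (abs_of_nonneg hc).le
  have hpi : 0 < Real.pi / ε := div_pos Real.pi_pos hε
  have ht0 : t₀ ≤ t := by linarith
  have hc1 : c < 1 := by nlinarith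
  have hup : ∀ u, t₀ ≤ u → u ≤ t → Real.cos (θ u) < c := fun u hu hut => by
    by_contra! h
    exact absurd (cos_barrier_s4 hθ hκ hμ hS hcS hw' (h0.trans hu) hut
      (fun v hv _ => hR v (by linarith)) hcabs h) (not_le.2 hlt)
  have hlow : ∀ u, t₀ ≤ u → u ≤ t → -c ≤ Real.cos (θ u) := fun u hu _ =>
    cos_barrier_s4 hθ hκ hμ hS hcS hw' h0 hu (fun v hv _ => hR v (by linarith))
      (by rwa [abs_neg]) hc0
  have hder : ∀ u, t₀ ≤ u → u ≤ t → HasDerivAt (fun u => Real.arccos (Real.cos (θ u)))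
      (-(1 / √(1 - Real.cos (θ u) ^ 2)) *
        (-Real.sin (θ u) * (w - κ * R u * Real.sin (θ u)))) u := fun u hu hut => by
    have h1 := hup u hu hut
    have h2 := hlow u hu hut
    exact (Real.hasDerivAt_arccos (by linarith) (by linarith)).comp u (hθ u (h0.trans hu)).cos
  have key := image_le_of_deriv_right_le_deriv_boundary
    (f := fun u => Real.arccos (Real.cos (θ u))) (a := t₀) (b := t)
    (B := fun u => Real.arccos (Real.cos (θ t₀)) - ε * (u - t₀)) (B' := fun _ => -ε)
    (fun u hu => (hder u hu.1 hu.2).continuousAt.continuousWithinAt)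
    (fun u hu => (hder u hu.1 hu.2.le).hasDerivWithinAt)
    (by simp) (by fun_prop)
    (fun u _ => by
      have := ((((hasDerivAt_id u).sub_const t₀).const_mul ε).const_sub
        (Real.arccos (Real.cos (θ t₀)))).hasDerivWithinAt (s := Set.Ici u)
      simpa using this)
    (fun u hu => by
      have h1 := hup u hu.1 hu.2.le
      have h2 := hlow u hu.1 hu.2.le
      have hs := le_abs_sin (x := θ u) hcS (abs_le.2 ⟨h2, h1.le⟩)
      have hd := drift_bound (w := w) hκ hμ hw (hR u (h0.trans hu.1)) hs hS
      have hp : 0 < |Real.sin (θ u)| := hS.trans_le hs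
      rw [← Real.abs_sin_eq_sqrt_one_sub_cos_sq, ← neg_div, div_mul_eq_mul_div, div_le_iff₀ hp]
      linarith)
    ⟨ht0, le_rfl⟩
  have h1 : Real.arccos (Real.cos (θ t₀)) < Real.pi := by
    refine lt_of_le_of_ne (Real.arccos_le_pi _) (fun h => ?_)
    have := Real.arccos_eq_pi.1 h
    linarith
  have h2 := Real.arccos_nonneg (Real.cos (θ t))
  have h3 : Real.pi ≤ ε * (t - t₀) := by
    rw [← div_le_iff₀' hε]; linarith
  linarith

/-- The phase can leave the arc around an odd multiple of `π` at most once, and then it is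
trapped in the adjacent arc around a multiple of `2π`: its range over `[0, ∞)` lies in an
interval of length `π + 2α`, where `α = arccos c ≤ π / 3`. -/
theorem exists_trapping (hθ : ∀ t, 0 ≤ t → HasDerivAt θ (w - κ * R t * Real.sin (θ t)) t)
    (hκ : 0 < κ) (hS : 0 < S) (hw : |w| < κ * μ * S) (hR : ∀ u, 0 ≤ u → μ ≤ R u)
    (hc : 1 / 2 ≤ c) (hcS : c ^ 2 + S ^ 2 = 1) :
    ∃ A B : ℝ, B - A < 2 * Real.pi ∧ ∀ t, 0 ≤ t → A ≤ θ t ∧ θ t ≤ B := by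
  have hpi := Real.pi_pos
  have hc1 : c ≤ 1 := by nlinarith
  obtain ⟨α, hα0, hα, hsin⟩ : ∃ α, 0 ≤ α ∧ α ≤ Real.pi / 3 ∧ Real.sin α = S := by
    refine ⟨Real.arccos c, Real.arccos_nonneg c, ?_, ?_⟩
    · have h13 : Real.arccos (1 / 2) = Real.pi / 3 := by
        rw [← Real.cos_pi_div_three, Real.arccos_cos (by positivity) (by linarith)]
      rw [← h13]
      exact Real.antitone_arccos hc
    · rw [Real.sin_arccos, show 1 - c ^ 2 = S ^ 2 by linarith, Real.sqrt_sq hS.le]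
  -- normalise the initial phase to `[0, 2π)`
  obtain ⟨k, hk0, hk1⟩ : ∃ k : ℤ, 0 ≤ θ 0 - k * (2 * Real.pi) ∧
      θ 0 - k * (2 * Real.pi) < 2 * Real.pi := by
    have h1 := toIcoMod_mem_Ico Real.two_pi_pos 0 (θ 0)
    have h2 := toIcoMod_add_toIcoDiv_zsmul Real.two_pi_pos 0 (θ 0)
    rw [zsmul_eq_mul] at h2
    refine ⟨toIcoDiv Real.two_pi_pos 0 (θ 0), ?_, ?_⟩
    · linarith [h1.1]
    · linarith [h1.2]
  set K : ℝ := k * (2 * Real.pi) with hK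
  have s1 : Real.sin (-α + K) = -S := by
    rw [hK, Real.sin_add_int_mul_two_pi, Real.sin_neg, hsin]
  have s2 : Real.sin (Real.pi - α + K) = S := by
    rw [hK, Real.sin_add_int_mul_two_pi, Real.sin_pi_sub, hsin]
  have s3 : Real.sin (α + Real.pi + K) = -S := by
    rw [hK, Real.sin_add_int_mul_two_pi, Real.sin_add_pi, hsin]
  have s4 : Real.sin (α + 2 * Real.pi + K) = S := by
    rw [hK, Real.sin_add_int_mul_two_pi, Real.sin_add_two_pi, hsin]
  by_cases hA : ∃ t₁, 0 ≤ t₁ ∧ θ t₁ < Real.pi - α + K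
  · obtain ⟨t₁, ht₁, hlt⟩ := hA
    refine ⟨-α + K, α + Real.pi + K, by linarith, fun t ht => ⟨?_, ?_⟩⟩
    · exact ge_of_barrier hθ hκ hS hw hR s1 le_rfl ht (by linarith)
    · by_contra! h
      rcases le_total t t₁ with h1 | h1
      · have := ge_of_barrier hθ hκ hS hw hR s3 ht h1 h.le
        linarith
      · have := le_of_barrier hθ hκ hS hw hR s2 ht₁ h1 hlt.le
        linarith
  · push Not at hA
    refine ⟨Real.pi - α + K, α + 2 * Real.pi + K, by linarith, fun t ht => ⟨hA t ht, ?_⟩⟩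
    exact le_of_barrier hθ hκ hS hw hR s4 le_rfl ht (by linarith)

end Oscillator

/-! ### Limits at infinity -/

/-- A continuous function that is frequently below `a` and frequently above `b` takes every
intermediate value frequently. -/
theorem frequently_eq_of_crossing {f : ℝ → ℝ} (hf : ContinuousOn f (Set.Ici 0)) {a b y : ℝ}
    (ha : ∃ᶠ t in atTop, f t < a) (hb : ∃ᶠ t in atTop, b < f t) (hay : a < y) (hyb : y < b) :
    ∃ᶠ t in atTop, f t = y := by
  rw [frequently_atTop] at ha hb ⊢
  intro T
  obtain ⟨t₁, h1, h1'⟩ := ha (max T 0)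
  obtain ⟨t₂, h2, h2'⟩ := hb (max T 0)
  have hsub : Set.uIcc t₁ t₂ ⊆ Set.Ici (max T 0) := fun x hx => (le_min h1 h2).trans hx.1
  have hiv := intermediate_value_uIcc (a := t₁) (b := t₂) (f := f)
    (hf.mono (hsub.trans (Set.Ici_subset_Ici.2 (le_max_right _ _))))
  obtain ⟨t, ht, hty⟩ := hiv (Set.mem_uIcc.2 (Or.inl ⟨(h1'.trans hay).le, (hyb.trans h2').le⟩))
  exact ⟨t, (le_max_left _ _).trans (hsub ht), hty⟩

/-- A bounded continuous function on `[0, ∞)` converges unless it takes all values of some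
open interval frequently. -/
theorem exists_tendsto_of_no_interval {f : ℝ → ℝ} (hf : ContinuousOn f (Set.Ici 0)) {A B : ℝ}
    (hAB : ∀ t, 0 ≤ t → A ≤ f t ∧ f t ≤ B)
    (H : ∀ a b, A ≤ a → a < b → b ≤ B → ¬ ∀ y, a < y → y < b → ∃ᶠ t in atTop, f t = y) :
    ∃ L, Tendsto f atTop (nhds L) := by
  have hev : ∀ᶠ t in atTop, A ≤ f t ∧ f t ≤ B :=
    (eventually_ge_atTop 0).mono fun t ht => hAB t ht
  refine tendsto_of_no_upcrossings dense_univ (fun a _ b _ hab h => ?_)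
    ⟨B, by simpa using hev.mono fun t ht => ht.2⟩ ⟨A, by simpa using hev.mono fun t ht => ht.1⟩
  obtain ⟨t₁, h1, h1'⟩ := (h.1.and_eventually hev).exists
  obtain ⟨t₂, h2, h2'⟩ := (h.2.and_eventually hev).exists
  exact H a b (by linarith) hab (by linarith)
    (fun y hay hyb => frequently_eq_of_crossing hf h.1 h.2 hay hyb)

/-- A bounded continuous phase whose cosine and sine converge is itself convergent. -/
theorem exists_tendsto_of_cos_sin {f : ℝ → ℝ} (hf : ContinuousOn f (Set.Ici 0)) {A B C D : ℝ}
    (hAB : ∀ t, 0 ≤ t → A ≤ f t ∧ f t ≤ B)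
    (hC : Tendsto (fun t => Real.cos (f t)) atTop (nhds C))
    (hD : Tendsto (fun t => Real.sin (f t)) atTop (nhds D)) :
    ∃ L, Tendsto f atTop (nhds L) := by
  refine exists_tendsto_of_no_interval hf hAB fun a b _ hab _ H => ?_
  have hcs : ∀ y, a < y → y < b → Real.cos y = C ∧ Real.sin y = D := fun y h1 h2 => by
    have hy := H y h1 h2
    constructor
    · have := isClosed_singleton (x := Real.cos y) |>.mem_of_frequently_of_tendsto
        (hy.mono fun t ht => by simp [ht]) hC
      exact this.symm
    · have := isClosed_singleton (x := Real.sin y) |>.mem_of_frequently_of_tendsto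
        (hy.mono fun t ht => by simp [ht]) hD
      exact this.symm
  have hpi := Real.pi_pos
  -- two points of `(a, b)` at distance less than `2π`
  obtain ⟨δ, hδ0, hδ1, hδ2⟩ : ∃ δ, 0 < δ ∧ δ < b - a ∧ δ < 2 * Real.pi :=
    ⟨min (b - a) (2 * Real.pi) / 2, by have : 0 < b - a := sub_pos.2 hab; positivity,
      by have := min_le_left (b - a) (2 * Real.pi); linarith,
      by have := min_le_right (b - a) (2 * Real.pi); linarith⟩
  obtain ⟨y, hy1, hy2⟩ := exists_between (show a < b - δ by linarith)
  have e1 := hcs y hy1 (by linarith)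
  have e2 := hcs (y + δ) (by linarith) (by linarith)
  have : Real.cos δ = 1 := by
    rw [show δ = (y + δ) - y by ring, Real.cos_sub, e2.1, e2.2, e1.1, e1.2, ← e1.1, ← e1.2]
    nlinarith [Real.sin_sq_add_cos_sq y]
  exact hδ0.ne' ((Real.cos_eq_one_iff_of_lt_of_lt (by linarith) hδ2).1 this)

/-- A Barbalat-type lemma: if `f` is bounded above and `g = f'` is nonnegative and Lipschitz,
then `g → 0`. By the mean value theorem `δ (g t - C δ) ≤ f (t + δ) - f t`, and the right-hand
side vanishes in the limit. -/
theorem tendsto_zero_of_deriv {f g : ℝ → ℝ} {C M : ℝ}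
    (hf : ∀ t, 0 ≤ t → HasDerivAt f (g t) t) (hg : ∀ t, 0 ≤ t → 0 ≤ g t)
    (hM : ∀ t, 0 ≤ t → f t ≤ M) (hC : 0 ≤ C)
    (hL : ∀ s t, 0 ≤ s → s ≤ t → g s - g t ≤ C * (t - s)) :
    Tendsto g atTop (nhds 0) := by
  have hmono : MonotoneOn f (Set.Ici 0) := by
    refine monotoneOn_of_deriv_nonneg (convex_Ici 0)
      (fun x hx => (hf x hx).continuousAt.continuousWithinAt)
      (fun x hx => (hf x ?_).differentiableAt.differentiableWithinAt) (fun x hx => ?_)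
    · exact interior_subset hx
    · rw [(hf x (interior_subset hx)).deriv]
      exact hg x (interior_subset hx)
  have hmono' : Monotone fun t => f (max t 0) := fun s t hst =>
    hmono (Set.mem_Ici.2 (le_max_right s 0)) (Set.mem_Ici.2 (le_max_right t 0))
      (max_le_max_right 0 hst)
  have hlim := tendsto_atTop_ciSup hmono'
    ⟨M, by rintro _ ⟨t, rfl⟩; exact hM _ (le_max_right _ _)⟩
  rw [Metric.tendsto_atTop]
  intro e he
  have hδ : 0 < e / (2 * (C + 1)) := by positivity
  set δ := e / (2 * (C + 1)) with hδd
  have hlim2 := (hlim.comp (tendsto_atTop_add_const_right atTop δ tendsto_id)).sub hlim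
  rw [sub_self] at hlim2
  have hev := (hlim2.eventually_lt_const (show 0 < δ * (e / 2) by positivity)).and
    (eventually_ge_atTop 0)
  obtain ⟨T, hT⟩ := eventually_atTop.1 hev
  refine ⟨T, fun t ht => ?_⟩
  obtain ⟨h1, h0⟩ := hT t ht
  simp only [Function.comp, id] at h1
  rw [max_eq_left h0, max_eq_left (by linarith)] at h1
  obtain ⟨ξ, hξ, hξe⟩ := exists_hasDerivAt_eq_slope f g (show t < t + δ by linarith)
    (fun x hx => (hf x (h0.trans hx.1)).continuousAt.continuousWithinAt)
    (fun x hx => hf x (h0.trans hx.1.le))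
  have h2 : g ξ < e / 2 := by
    rw [hξe, add_sub_cancel_left, div_lt_iff₀ hδ]; linarith
  have h3 := hL t ξ h0 hξ.1.le
  have h4 : C * (ξ - t) ≤ C * δ := mul_le_mul_of_nonneg_left (by linarith [hξ.2]) hC
  have h5 : C * δ < e / 2 := by
    rw [hδd, ← mul_div_assoc, div_lt_div_iff₀ (by positivity) two_pos]
    nlinarith
  rw [Real.dist_eq, sub_zero, abs_of_nonneg (hg t h0)]
  linarith

/-! ### The self-consistency equation of the order parameter -/

/-- If every velocity `v j` tends to zero and the signs `σ j` of `cos θ_j` are eventually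
constant, the order parameter converges: otherwise all `ρ` in some open interval solve
`ρ = 1 + N⁻¹ ∑ σ_j √(1 - (ω_j / (κ ρ))²)`, hence by the identity theorem so does `ρ = 3`,
which exceeds the right-hand side. -/
theorem tendsto_of_self_consistency {N : ℕ} (hN : 1 ≤ N) {ω σ : Fin N → ℝ} {v : Fin N → ℝ → ℝ}
    {κ Ωn m : ℝ} {R : ℝ → ℝ} (hκ : 0 < κ) (hΩ : ∀ i, |ω i| ≤ Ωn) (hm : 0 < m)
    (hΩm : Ωn < κ * m) (hRc : ContinuousOn R (Set.Ici 0))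
    (hRb : ∀ t, 0 ≤ t → m ≤ R t ∧ R t ≤ 2) (hσ : ∀ i, |σ i| ≤ 1)
    (hv : ∀ i, Tendsto (v i) atTop (nhds 0))
    (hself : ∀ᶠ t in atTop,
      R t = 1 + (N : ℝ)⁻¹ * ∑ j, σ j * √(1 - ((ω j - v j t) / (κ * R t)) ^ 2)) :
    ∃ L, Tendsto R atTop (nhds L) := by
  refine exists_tendsto_of_no_interval hRc hRb fun a b hma hab _ H => ?_
  have hN0 : (0 : ℝ) < N := by exact_mod_cast hN
  have hpos : ∀ ρ ∈ Set.Ioi m, ∀ j, 0 < 1 - (ω j / (κ * ρ)) ^ 2 := fun ρ hρ j => by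
    have hρ0 : 0 < ρ := hm.trans hρ
    have h1 : |ω j| < κ * ρ :=
      ((hΩ j).trans_lt hΩm).trans (mul_lt_mul_of_pos_left hρ hκ)
    have h2 : |ω j / (κ * ρ)| < 1 := by
      rw [abs_div, abs_of_pos (mul_pos hκ hρ0), div_lt_one (mul_pos hκ hρ0)]
      exact h1
    have := (sq_lt_one_iff_abs_lt_one (ω j / (κ * ρ))).2 h2
    linarith
  have han : AnalyticOnNhd ℝ
      (fun ρ => 1 + (N : ℝ)⁻¹ * (∑ j, σ j * √(1 - (ω j / (κ * ρ)) ^ 2)) - ρ) (Set.Ioi m) := by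
    intro ρ hρ
    have hρ0 : 0 < ρ := hm.trans hρ
    refine (analyticAt_const.fun_add (analyticAt_const.fun_mul
      (Finset.analyticAt_fun_sum _ fun j _ => analyticAt_const.fun_mul ?_))).fun_sub analyticAt_id
    have hin : AnalyticAt ℝ (fun ρ => 1 - (ω j / (κ * ρ)) ^ 2) ρ :=
      analyticAt_const.fun_sub ((analyticAt_const.fun_div (analyticAt_const.fun_mul analyticAt_id)
        (mul_pos hκ hρ0).ne').fun_pow 2)
    exact AnalyticAt.comp (f := fun ρ => 1 - (ω j / (κ * ρ)) ^ 2)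
      (Real.contDiffAt_sqrt (n := ⊤) (hpos ρ hρ j).ne').analyticAt hin
  have hzero : ∀ ρ, a < ρ → ρ < b →
      1 + (N : ℝ)⁻¹ * (∑ j, σ j * √(1 - (ω j / (κ * ρ)) ^ 2)) - ρ = 0 := fun ρ h1 h2 => by
    have hlim : Tendsto (fun t =>
        1 + (N : ℝ)⁻¹ * ∑ j, σ j * √(1 - ((ω j - v j t) / (κ * ρ)) ^ 2)) atTop
        (nhds (1 + (N : ℝ)⁻¹ * ∑ j, σ j * √(1 - ((ω j - 0) / (κ * ρ)) ^ 2))) := by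
      refine tendsto_const_nhds.add (tendsto_const_nhds.mul
        (tendsto_finsetSum _ fun j _ => tendsto_const_nhds.mul ?_))
      exact (tendsto_const_nhds.sub
        (((tendsto_const_nhds.sub (hv j)).div_const _).pow 2)).sqrt
    have := (isClosed_singleton (x := ρ)).mem_of_frequently_of_tendsto
      (((H ρ h1 h2).and_eventually hself).mono fun t ht => by
        obtain ⟨h3, h4⟩ := ht
        rw [h3] at h4
        exact h4.symm) hlim
    simp only [sub_zero, Set.mem_singleton_iff] at this
    linarith
  obtain ⟨ρ₀, h1, h2⟩ := exists_between hab
  have hEq := han.eqOn_zero_of_preconnected_of_eventuallyEq_zero (convex_Ioi m).isPreconnected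
    (z₀ := ρ₀) (lt_of_le_of_lt hma h1)
    (by
      filter_upwards [Ioo_mem_nhds h1 h2] with ρ hρ
      exact hzero ρ hρ.1 hρ.2)
  have hm3 : (3 : ℝ) ∈ Set.Ioi m := by
    have := hRb 0 le_rfl
    exact Set.mem_Ioi.2 (by linarith)
  have h3 : 1 + (N : ℝ)⁻¹ * (∑ j, σ j * √(1 - (ω j / (κ * 3)) ^ 2)) - 3 = 0 := hEq hm3
  have hle : ∑ j, σ j * √(1 - (ω j / (κ * 3)) ^ 2) ≤ N := by
    calc _ ≤ ∑ _j : Fin N, (1 : ℝ) := by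
          refine Finset.sum_le_sum fun j _ => ?_
          refine (le_abs_self _).trans ?_
          rw [abs_mul, abs_of_nonneg (Real.sqrt_nonneg _)]
          refine mul_le_one₀ (hσ j) (Real.sqrt_nonneg _) (Real.sqrt_le_one.2 ?_)
          linarith [sq_nonneg (ω j / (κ * 3))]
      _ = N := by simp
  have : (N : ℝ)⁻¹ * (∑ j, σ j * √(1 - (ω j / (κ * 3)) ^ 2)) ≤ 1 := by
    rw [inv_mul_le_iff₀ hN0, mul_one]; exact hle
  linarith

/-! ### The coupled system -/

section Winfree

variable {N : ℕ} {ω : Fin N → ℝ} {κ : ℝ} {θ : Fin N → ℝ → ℝ}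

theorem orderParam_eq (hN : 1 ≤ N) (t : ℝ) :
    orderParam N θ t = 1 + (N : ℝ)⁻¹ * ∑ j, Real.cos (θ j t) := by
  have hN0 : (N : ℝ) ≠ 0 := by positivity
  rw [orderParam, Finset.sum_add_distrib, mul_add]
  simp [hN0]

theorem orderParam_mem (hN : 1 ≤ N) (t : ℝ) :
    0 ≤ orderParam N θ t ∧ orderParam N θ t ≤ 2 := by
  have hN0 : (0 : ℝ) < N := by exact_mod_cast hN
  rw [orderParam]
  constructor
  · exact mul_nonneg (by positivity)
      (Finset.sum_nonneg fun j _ => by linarith [Real.neg_one_le_cos (θ j t)])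
  · rw [inv_mul_le_iff₀ hN0]
    calc _ ≤ ∑ _j : Fin N, (2 : ℝ) :=
          Finset.sum_le_sum fun j _ => by linarith [Real.cos_le_one (θ j t)]
      _ = N * 2 := by simp

/-- The right-hand side of the Winfree model. -/
noncomputable def velocity (ω : Fin N → ℝ) (κ : ℝ) (θ : Fin N → ℝ → ℝ) (i : Fin N) (t : ℝ) : ℝ :=
  ω i - κ * orderParam N θ t * Real.sin (θ i t)

theorem continuousOn_orderParam
    (h : ∀ i t, 0 ≤ t → HasDerivAt (θ i) (velocity ω κ θ i t) t) :
    ContinuousOn (orderParam N θ) (Set.Ici 0) := by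
  unfold orderParam
  refine continuousOn_const.mul (continuousOn_finsetSum _ fun j _ => continuousOn_const.add ?_)
  exact Real.continuous_cos.comp_continuousOn
    fun x hx => (h j x hx).continuousAt.continuousWithinAt

/-- No cosine drops by more than `1 - c`, since a phase with `cos θ_i ≥ -c` satisfies the barrier
estimate and a phase with `cos θ_i < -c` has no room. This keeps `R` above `R 0 - (1 - c)` as long
as it is above some slightly smaller `μ`, and a first-passage argument at level `μ` closes the
bootstrap. -/
theorem orderParam_lower_s4 (hN : 1 ≤ N)
    (h : ∀ i t, 0 ≤ t → HasDerivAt (θ i) (velocity ω κ θ i t) t)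
    {c S Ωn : ℝ} (hκ : 0 < κ) (hS : 0 < S) (hc : 0 ≤ c) (hcS : c ^ 2 + S ^ 2 = 1)
    (hΩ0 : 0 ≤ Ωn) (hΩ : ∀ i, |ω i| ≤ Ωn)
    (hm : 0 < orderParam N θ 0 - 1 + c)
    (hΩm : Ωn < κ * (orderParam N θ 0 - 1 + c) * S) {t : ℝ} (ht : 0 ≤ t) :
    orderParam N θ 0 - 1 + c ≤ orderParam N θ t := by
  have hN0 : (0 : ℝ) < N := by exact_mod_cast hN
  have hc1 : c ≤ 1 := by nlinarith
  set m := orderParam N θ 0 - 1 + c with hmd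
  obtain ⟨μ, hμ0, hμm, hΩμ⟩ : ∃ μ, 0 ≤ μ ∧ μ < m ∧ Ωn < κ * μ * S := by
    refine ⟨(m + Ωn / (κ * S)) / 2, by positivity, ?_, ?_⟩
    · have : Ωn / (κ * S) < m := by rw [div_lt_iff₀ (by positivity)]; linarith
      linarith
    · have : κ * ((m + Ωn / (κ * S)) / 2) * S = (κ * m * S + Ωn) / 2 := by
        field_simp
      rw [this]; linarith
  have step : ∀ T, 0 ≤ T → (∀ u, 0 ≤ u → u < T → μ ≤ orderParam N θ u) →
      m ≤ orderParam N θ T := fun T hT hu => by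
    have hcos : ∀ i, Real.cos (θ i 0) - (1 - c) ≤ Real.cos (θ i T) := fun i => by
      by_cases hi : Real.cos (θ i 0) < -c
      · linarith [Real.neg_one_le_cos (θ i T)]
      · push Not at hi
        have := cos_barrier_s4 (a := min (Real.cos (θ i 0)) c) (h i) hκ hμ0 hS hcS
          ((hΩ i).trans_lt hΩμ) le_rfl hT hu
          (abs_le.2 ⟨le_min hi (by linarith), min_le_right _ _⟩) (min_le_left _ _)
        refine le_trans (le_min ?_ ?_) this
        · linarith
        · linarith [Real.cos_le_one (θ i 0)]
    have hsum : ∑ i, Real.cos (θ i 0) - N * (1 - c) ≤ ∑ i, Real.cos (θ i T) := by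
      have := Finset.sum_le_sum fun i (_ : i ∈ Finset.univ) => hcos i
      rw [Finset.sum_sub_distrib] at this
      simpa only [Finset.sum_const, Finset.card_univ, Fintype.card_fin, nsmul_eq_mul] using this
    rw [hmd, orderParam_eq hN, orderParam_eq hN]
    have := mul_le_mul_of_nonneg_left hsum (inv_nonneg.2 hN0.le)
    rw [mul_sub, ← mul_assoc, inv_mul_cancel₀ hN0.ne', one_mul] at this
    linarith
  have hall : ∀ u, 0 ≤ u → μ < orderParam N θ u := by
    by_contra! hex
    obtain ⟨u, hu0, hu⟩ := hex
    have hcl : IsClosed (Set.Ici 0 ∩ orderParam N θ ⁻¹' Set.Iic μ) :=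
      (continuousOn_orderParam h).preimage_isClosed_of_isClosed isClosed_Ici isClosed_Iic
    have hbdd : BddBelow (Set.Ici 0 ∩ orderParam N θ ⁻¹' Set.Iic μ) := ⟨0, fun x hx => hx.1⟩
    have hmem := hcl.csInf_mem ⟨u, hu0, hu⟩ hbdd
    have := step _ hmem.1 fun x hx hxT => by
      by_contra! hlt
      exact absurd (csInf_le hbdd ⟨hx, hlt.le⟩) (not_le.2 hxT)
    have h2 : orderParam N θ _ ≤ μ := hmem.2
    linarith
  exact step t ht fun u hu _ => (hall u hu).le

/-- The gradient structure: `V = ∑ ω_j θ_j + (κ N / 2) R²` satisfies `V' = ∑ (θ_j')²`. -/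
theorem hasDerivAt_potential (hN : 1 ≤ N)
    (h : ∀ i t, 0 ≤ t → HasDerivAt (θ i) (velocity ω κ θ i t) t) {t : ℝ} (ht : 0 ≤ t) :
    HasDerivAt (fun t => ∑ j, ω j * θ j t + κ * N / 2 * orderParam N θ t ^ 2)
      (∑ j, velocity ω κ θ j t ^ 2) t := by
  have hN0 : (N : ℝ) ≠ 0 := by positivity
  have hR : HasDerivAt (orderParam N θ)
      ((N : ℝ)⁻¹ * ∑ j, -Real.sin (θ j t) * velocity ω κ θ j t) t := by
    unfold orderParam
    refine HasDerivAt.const_mul _ (HasDerivAt.fun_sum fun j _ => ?_)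
    exact (h j t ht).cos.const_add 1
  refine ((HasDerivAt.fun_sum fun j _ => (h j t ht).const_mul (ω j)).add
    ((hR.pow 2).const_mul (κ * N / 2))).congr_deriv ?_
  have e : κ * N / 2 * (((2 : ℕ) : ℝ) * orderParam N θ t ^ (2 - 1) *
      ((N : ℝ)⁻¹ * ∑ j, -Real.sin (θ j t) * velocity ω κ θ j t))
      = ∑ j, κ * orderParam N θ t * (-Real.sin (θ j t) * velocity ω κ θ j t) := by
    rw [← Finset.mul_sum]
    field_simp
    norm_num
    ring
  rw [e, ← Finset.sum_add_distrib]
  refine Finset.sum_congr rfl fun j _ => ?_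
  simp only [velocity]; ring

theorem abs_velocity_le (hN : 1 ≤ N) {Ωn : ℝ} (hκ : 0 < κ) (hΩ : ∀ i, |ω i| ≤ Ωn) (i : Fin N)
    (t : ℝ) : |velocity ω κ θ i t| ≤ Ωn + 2 * κ := by
  have hR := orderParam_mem (θ := θ) hN t
  refine (abs_sub _ _).trans (add_le_add (hΩ i) ?_)
  rw [abs_mul, abs_mul, abs_of_pos hκ, abs_of_nonneg hR.1]
  calc κ * orderParam N θ t * |Real.sin (θ i t)| ≤ κ * 2 * 1 := by
        have := Real.abs_sin_le_one (θ i t)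
        have := hR.2
        gcongr
    _ = 2 * κ := by ring

theorem abs_velocity_sub_le (hN : 1 ≤ N)
    (h : ∀ i t, 0 ≤ t → HasDerivAt (θ i) (velocity ω κ θ i t) t)
    {Ωn : ℝ} (hκ : 0 < κ) (hΩ : ∀ i, |ω i| ≤ Ωn) (i : Fin N) {s t : ℝ} (hs : 0 ≤ s)
    (hst : s ≤ t) :
    |velocity ω κ θ i s - velocity ω κ θ i t| ≤ 3 * κ * ((Ωn + 2 * κ) * (t - s)) := by
  have hN0 : (0 : ℝ) < N := by exact_mod_cast hN
  set B := Ωn + 2 * κ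
  have hθ : ∀ j, |θ j s - θ j t| ≤ B * (t - s) := fun j => by
    have := (convex_Ici (0 : ℝ)).norm_image_sub_le_of_norm_hasDerivWithin_le
      (fun x hx => (h j x hx).hasDerivWithinAt) (fun x _ => abs_velocity_le hN hκ hΩ j x)
      (Set.mem_Ici.2 hs) (Set.mem_Ici.2 (hs.trans hst))
    rw [Real.norm_eq_abs, Real.norm_eq_abs, abs_of_nonneg (sub_nonneg.2 hst)] at this
    rwa [abs_sub_comm]
  have hR : |orderParam N θ s - orderParam N θ t| ≤ B * (t - s) := by
    have e : orderParam N θ s - orderParam N θ t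
        = (N : ℝ)⁻¹ * ∑ j, (Real.cos (θ j s) - Real.cos (θ j t)) := by
      rw [orderParam_eq hN, orderParam_eq hN, Finset.sum_sub_distrib]; ring
    rw [e, abs_mul, abs_of_pos (inv_pos.2 hN0), inv_mul_le_iff₀ hN0]
    calc _ ≤ ∑ j, |Real.cos (θ j s) - Real.cos (θ j t)| := Finset.abs_sum_le_sum_abs _ _
      _ ≤ ∑ _j : Fin N, B * (t - s) :=
          Finset.sum_le_sum fun j _ => (Real.abs_cos_sub_cos_le _ _).trans (hθ j)
      _ = _ := by simp
  have hsin := (Real.abs_sin_sub_sin_le (θ i s) (θ i t)).trans (hθ i)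
  have e : velocity ω κ θ i s - velocity ω κ θ i t
      = κ * ((orderParam N θ t - orderParam N θ s) * Real.sin (θ i t)
        - orderParam N θ s * (Real.sin (θ i s) - Real.sin (θ i t))) := by
    simp only [velocity]; ring
  have hm := orderParam_mem (θ := θ) hN s
  rw [e, abs_mul, abs_of_pos hκ, mul_comm 3 κ, mul_assoc]
  refine mul_le_mul_of_nonneg_left ((abs_sub _ _).trans ?_) hκ.le
  rw [abs_mul, abs_mul, abs_of_nonneg hm.1, abs_sub_comm]
  have h1 : |orderParam N θ s - orderParam N θ t| * |Real.sin (θ i t)| ≤ B * (t - s) * 1 :=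
    mul_le_mul hR (Real.abs_sin_le_one _) (abs_nonneg _) ((abs_nonneg _).trans hR)
  have h2 : orderParam N θ s * |Real.sin (θ i s) - Real.sin (θ i t)| ≤ 2 * (B * (t - s)) :=
    mul_le_mul hm.2 hsin (abs_nonneg _) two_pos.le
  linarith

/-- Bounded phases have velocities tending to zero, because the potential is bounded. -/
theorem tendsto_velocity (hN : 1 ≤ N)
    (h : ∀ i t, 0 ≤ t → HasDerivAt (θ i) (velocity ω κ θ i t) t)
    {Ωn : ℝ} (hκ : 0 < κ) (hΩ0 : 0 ≤ Ωn) (hΩ : ∀ i, |ω i| ≤ Ωn) {A B : Fin N → ℝ}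
    (hAB : ∀ i t, 0 ≤ t → A i ≤ θ i t ∧ θ i t ≤ B i) (i : Fin N) :
    Tendsto (velocity ω κ θ i) atTop (nhds 0) := by
  set K := Ωn + 2 * κ with hK
  have hK0 : 0 ≤ K := by positivity
  have hsum : Tendsto (fun t => ∑ j, velocity ω κ θ j t ^ 2) atTop (nhds 0) := by
    refine tendsto_zero_of_deriv (C := N * (2 * K * (3 * κ * K)))
      (M := ∑ j, |ω j| * (|A j| + |B j|) + κ * N / 2 * 2 ^ 2)
      (fun t ht => hasDerivAt_potential hN h ht)
      (fun t _ => Finset.sum_nonneg fun j _ => sq_nonneg _) (fun t ht => ?_) (by positivity)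
      (fun s t hs hst => ?_)
    · have hR := orderParam_mem (θ := θ) hN t
      refine add_le_add (Finset.sum_le_sum fun j _ => ?_) ?_
      · refine (le_abs_self _).trans ?_
        rw [abs_mul]
        refine mul_le_mul_of_nonneg_left (abs_le.2 ⟨?_, ?_⟩) (abs_nonneg _)
        · linarith [(hAB j t ht).1, neg_abs_le (A j), abs_nonneg (B j)]
        · linarith [(hAB j t ht).2, le_abs_self (B j), abs_nonneg (A j)]
      · have := hR.1
        have := hR.2
        gcongr
    · rw [← Finset.sum_sub_distrib]
      calc _ ≤ ∑ _j : Fin N, 2 * K * (3 * κ * (K * (t - s))) := by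
            refine Finset.sum_le_sum fun j _ => ?_
            rw [sq_sub_sq]
            refine (le_abs_self _).trans ?_
            rw [abs_mul]
            refine mul_le_mul ((abs_add_le _ _).trans ?_) (abs_velocity_sub_le hN h hκ hΩ j hs hst)
              (abs_nonneg _) (by positivity)
            linarith [abs_velocity_le (θ := θ) hN hκ hΩ j s,
              abs_velocity_le (θ := θ) hN hκ hΩ j t]
        _ = _ := by simp; ring
  have hsq : Tendsto (fun t => velocity ω κ θ i t ^ 2) atTop (nhds 0) :=
    squeeze_zero (fun t => sq_nonneg _)
      (fun t => Finset.single_le_sum (f := fun j => velocity ω κ θ j t ^ 2)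
        (fun j _ => sq_nonneg _) (Finset.mem_univ i)) hsum
  have := hsq.sqrt
  simp only [Real.sqrt_sq_eq_abs, Real.sqrt_zero] at this
  exact tendsto_zero_iff_abs_tendsto_zero _ |>.2 this

/-- Convergence of all phases, given that they are bounded, that the order parameter stays above
`m > Ωn / κ`, and that the signs `σ j` of the cosines are eventually constant. -/
theorem exists_tendsto_phase (hN : 1 ≤ N)
    (h : ∀ i t, 0 ≤ t → HasDerivAt (θ i) (velocity ω κ θ i t) t)
    {Ωn m : ℝ} (hκ : 0 < κ) (hΩ0 : 0 ≤ Ωn) (hΩ : ∀ i, |ω i| ≤ Ωn) {A B : Fin N → ℝ}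
    (hAB : ∀ i t, 0 ≤ t → A i ≤ θ i t ∧ θ i t ≤ B i) (hm : 0 < m) (hΩm : Ωn < κ * m)
    (hR : ∀ t, 0 ≤ t → m ≤ orderParam N θ t) {σ : Fin N → ℝ} (hσ : ∀ i, |σ i| ≤ 1)
    (hcos : ∀ i, ∀ᶠ t in atTop, Real.cos (θ i t) = σ i * |Real.cos (θ i t)|) (i : Fin N) :
    ∃ L, Tendsto (θ i) atTop (nhds L) := by
  have hv := tendsto_velocity hN h hκ hΩ0 hΩ hAB
  have hsin : ∀ i, ∀ t, 0 ≤ t →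
      Real.sin (θ i t) = (ω i - velocity ω κ θ i t) / (κ * orderParam N θ t) := fun i t ht => by
    have : 0 < κ * orderParam N θ t := mul_pos hκ (hm.trans_le (hR t ht))
    rw [eq_div_iff this.ne']
    simp only [velocity]; ring
  have hcos' : ∀ i, ∀ᶠ t in atTop,
      Real.cos (θ i t) = σ i * √(1 - Real.sin (θ i t) ^ 2) := fun i =>
    (hcos i).mono fun t ht => by rwa [← Real.abs_cos_eq_sqrt_one_sub_sin_sq]
  obtain ⟨L, hL⟩ := tendsto_of_self_consistency hN (v := velocity ω κ θ) hκ hΩ hm hΩm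
    (continuousOn_orderParam h) (fun t ht => ⟨hR t ht, (orderParam_mem hN t).2⟩) hσ hv
    (by
      filter_upwards [eventually_all.2 hcos', eventually_ge_atTop 0] with t ht ht0
      conv_lhs => rw [orderParam_eq hN]
      congr 2
      refine Finset.sum_congr rfl fun j _ => ?_
      rw [ht j, hsin j t ht0])
  have hLm : m ≤ L := ge_of_tendsto hL ((eventually_ge_atTop 0).mono fun t ht => hR t ht)
  have hD : Tendsto (fun t => Real.sin (θ i t)) atTop (nhds ((ω i - 0) / (κ * L))) := by
    refine Tendsto.congr' ((eventually_ge_atTop 0).mono fun t ht => (hsin i t ht).symm) ?_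
    exact (tendsto_const_nhds.sub (hv i)).div (tendsto_const_nhds.mul hL)
      (mul_pos hκ (hm.trans_le hLm)).ne'
  have hC := Tendsto.congr' ((hcos' i).mono fun t ht => ht.symm)
    (tendsto_const_nhds.mul (tendsto_const_nhds.sub (hD.pow 2)).sqrt)
  exact exists_tendsto_of_cos_sin
    (fun x hx => (h i x hx).continuousAt.continuousWithinAt) (hAB i) hC hD

end Winfree

theorem stmt4 (N : ℕ) (hN : 1 ≤ N) (ω : Fin N → ℝ) (κ : ℝ) (Ωn : ℝ)
    (hΩn : IsGreatest (Set.range fun i => |ω i|) Ωn)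
    (θ0 : Fin N → ℝ) (θ : Fin N → ℝ → ℝ) (hsol : IsWinfreeSol N ω κ θ0 θ)
    (R0 : ℝ) (hR0def : R0 = orderParam N θ 0) (hR0 : 0 < R0)
    (Kc : ℝ)
    (hKc : Kc = if R0 ≤ 1 then 2 / R0 ^ ((3:ℝ)/2)
      else 2 * (2 - R0) + 4 / (3 * Real.sqrt 3) * (R0 - 1))
    (hκ : Kc * Ωn < κ) :
    -- (a)
    ((∀ t : ℝ, 0 ≤ t →
        (3 * R0 - 3 + Real.sqrt (R0^2 - 2 * R0 + 9)) / 4 ≤ orderParam N θ t) ∧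
      2/3 * R0 ≤ (3 * R0 - 3 + Real.sqrt (R0^2 - 2 * R0 + 9)) / 4) ∧
    -- (b)
    (∀ i, (∃ L : ℝ, Tendsto (θ i) atTop (nhds L)) ∧ OscLt2Pi (θ i) ∧
      Tendsto (deriv (θ i)) atTop (nhds 0)) ∧
    -- (c)
    (∀ i, ∀ t₀ : ℝ, 0 ≤ t₀ →
      (-1 + R0 - Real.sqrt (R0^2 - 2 * R0 + 9)) / 4 ≤ Real.cos (θ i t₀) →
      (∀ t, t₀ ≤ t →
        (-1 + R0 - Real.sqrt (R0^2 - 2 * R0 + 9)) / 4 ≤ Real.cos (θ i t)) ∧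
      (∀ t, t₀ + Real.pi * Kc / (κ - Kc * Ωn) ≤ t →
        (1 - R0 + Real.sqrt (R0^2 - 2 * R0 + 9)) / 4 ≤ Real.cos (θ i t))) ∧
    -- (c), "in particular"
    (∀ i, ∀ t₀ : ℝ, 0 ≤ t₀ → -1 + R0 / 3 ≤ Real.cos (θ i t₀) →
      (∀ t, t₀ ≤ t → -1 + R0 / 3 ≤ Real.cos (θ i t)) ∧
      (∀ t, t₀ + Real.pi * Kc / (κ - Kc * Ωn) ≤ t →
        1 - R0 / 3 ≤ Real.cos (θ i t))) := by
  have hN0 : (0 : ℝ) < N := by exact_mod_cast hN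
  have h : ∀ i t, 0 ≤ t → HasDerivAt (θ i) (velocity ω κ θ i t) t := fun i t ht =>
    (hsol.2 i t ht).congr_deriv (by simp only [velocity, orderParam]; ring)
  obtain ⟨⟨i₀, hi₀⟩, hub⟩ := hΩn
  have hΩ : ∀ i, |ω i| ≤ Ωn := fun i => hub ⟨i, rfl⟩
  have hΩ0 : 0 ≤ Ωn := (abs_nonneg _).trans (hΩ i₀)
  have hR2 : R0 ≤ 2 := hR0def ▸ (orderParam_mem hN 0).2
  set c : ℝ := (1 - R0 + √(R0 ^ 2 - 2 * R0 + 9)) / 4 with hc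
  obtain ⟨hq, hc2, hc1, hc3⟩ := critCos_spec hR0 hR2 hc
  rw [show (3 * R0 - 3 + √(R0 ^ 2 - 2 * R0 + 9)) / 4 = R0 - 1 + c by rw [hc]; ring,
    show (-1 + R0 - √(R0 ^ 2 - 2 * R0 + 9)) / 4 = -c by rw [hc]; ring]
  have hc0 : 0 < c := by linarith
  obtain ⟨S, hS, hcS⟩ : ∃ S, 0 < S ∧ c ^ 2 + S ^ 2 = 1 :=
    ⟨√(1 - c ^ 2), Real.sqrt_pos.2 (by nlinarith), by
      rw [Real.sq_sqrt (by nlinarith)]; ring⟩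
  have hm : 0 < R0 - 1 + c := by linarith
  obtain ⟨hKc0, hKc1⟩ := one_le_Kc_mul hR0 hR2 hq hc2 hS hcS hm hKc
  have hκ0 : 0 < κ := (mul_nonneg hKc0.le hΩ0).trans_lt hκ
  -- the guaranteed angular speed in the transition zone `|cos θ| ≤ c`
  have hε0 : 0 < (κ - Kc * Ωn) / Kc := div_pos (by linarith) hKc0
  have hεle : Ωn + (κ - Kc * Ωn) / Kc ≤ κ * (R0 - 1 + c) * S := by
    have e : Ωn + (κ - Kc * Ωn) / Kc = κ / Kc := by field_simp; ring
    rw [e, div_le_iff₀ hKc0]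
    nlinarith [mul_le_mul_of_nonneg_left hKc1 hκ0.le]
  have hΩm : Ωn < κ * (R0 - 1 + c) * S := by linarith
  have hw : ∀ i, |ω i| < κ * (R0 - 1 + c) * S := fun i => (hΩ i).trans_lt hΩm
  have hlow : ∀ t, 0 ≤ t → R0 - 1 + c ≤ orderParam N θ t := fun t ht => by
    rw [hR0def] at hm hΩm ⊢
    exact orderParam_lower_s4 hN h hκ0 hS hc0.le hcS hΩ0 hΩ hm hΩm ht
  have hstay : ∀ i, ∀ t₀, 0 ≤ t₀ → ∀ a, |a| ≤ c → a ≤ Real.cos (θ i t₀) →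
      ∀ t, t₀ ≤ t → a ≤ Real.cos (θ i t) := fun i t₀ h0 a ha hi t ht =>
    cos_barrier_s4 (h i) hκ0 hm.le hS hcS (hw i) h0 ht (fun u hu _ => hlow u (h0.trans hu)) ha hi
  have htime : ∀ i, ∀ t₀, 0 ≤ t₀ → -c ≤ Real.cos (θ i t₀) →
      ∀ t, t₀ + Real.pi * Kc / (κ - Kc * Ωn) ≤ t → c ≤ Real.cos (θ i t) :=
    fun i t₀ h0 hi t ht => by
    refine cos_ge_of_time (h i) hκ0 hm.le hS hc0.le hcS hε0
      (le_trans (add_le_add_left (hΩ i) _) hεle) h0 ?_ hlow hi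
    rwa [div_div_eq_mul_div]
  have hcabs : |-c| ≤ c := by rw [abs_neg, abs_of_pos hc0]
  choose A B hlen hAB using fun i =>
    exists_trapping (h i) hκ0 hS (hw i) hlow hc2 hcS
  -- each phase is either caught near a multiple of `2π` or stays forever in `cos θ < -c`
  have hsign : ∀ i, ∃ s : ℝ, |s| ≤ 1 ∧
      ∀ᶠ t in atTop, Real.cos (θ i t) = s * |Real.cos (θ i t)| := fun i => by
    by_cases hex : ∃ t₀, 0 ≤ t₀ ∧ -c ≤ Real.cos (θ i t₀)
    · obtain ⟨t₀, h0, hi⟩ := hex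
      refine ⟨1, by simp, ?_⟩
      filter_upwards [eventually_ge_atTop (t₀ + Real.pi * Kc / (κ - Kc * Ωn))] with t ht
      rw [one_mul, abs_of_nonneg (hc0.le.trans (htime i t₀ h0 hi t ht))]
    · push Not at hex
      refine ⟨-1, by simp, ?_⟩
      filter_upwards [eventually_ge_atTop 0] with t ht
      rw [abs_of_neg (by linarith [hex t ht])]
      ring
  choose σ hσ hcos using hsign
  have hΩm' : Ωn < κ * (R0 - 1 + c) := by
    have hS1 : S ≤ 1 := by nlinarith
    have : κ * (R0 - 1 + c) * S ≤ κ * (R0 - 1 + c) * 1 :=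
      mul_le_mul_of_nonneg_left hS1 (by positivity)
    linarith
  refine ⟨⟨hlow, by linarith⟩, fun i => ⟨?_, ?_, ?_⟩, fun i t₀ h0 hi => ⟨?_, ?_⟩,
    fun i t₀ h0 hi => ⟨?_, ?_⟩⟩
  · exact exists_tendsto_phase hN h hκ0 hΩ0 hΩ hAB hm hΩm' hlow hσ hcos i
  · have hne : (θ i '' Set.Ici 0).Nonempty := ⟨_, Set.mem_image_of_mem _ Set.self_mem_Ici⟩
    have hup : ∀ y ∈ θ i '' Set.Ici 0, y ≤ B i := by
      rintro _ ⟨t, ht, rfl⟩; exact (hAB i t ht).2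
    have hdn : ∀ y ∈ θ i '' Set.Ici 0, A i ≤ y := by
      rintro _ ⟨t, ht, rfl⟩; exact (hAB i t ht).1
    refine ⟨⟨B i, hup⟩, ⟨A i, hdn⟩, ?_⟩
    linarith [csSup_le hne hup, le_csInf hne hdn, hlen i]
  · refine (tendsto_velocity hN h hκ0 hΩ0 hΩ hAB i).congr' ?_
    filter_upwards [eventually_ge_atTop 0] with t ht
    exact (h i t ht).deriv.symm
  · exact hstay i t₀ h0 (-c) hcabs hi
  · exact htime i t₀ h0 hi
  · exact hstay i t₀ h0 _ (abs_le.2 ⟨by linarith, by linarith⟩) hi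
  · intro t ht
    exact hc3.trans (htime i t₀ h0 (by linarith) t ht)
end

section
/- Assume the interaction functions I and S satisfy the structural conditions (C1), (C2), (C3). Let (θ_i)_{i=1}^N be the solution of the Winfree model with R_0 > 0, and suppose κ > max{ (2(2c_2)^{p/q}/(c_1c_3)) · ‖Ω‖_∞/R_0^{1+p/q}, (2/(c_1c_3(π−α_0)^p)) · ‖Ω‖_∞/R_0 }. Then: (a) R(t) > c_3R_0/2 for all t ≥ 0; and (b) sup_{t≥0} θ_i(t) − inf_{t≥0} θ_i(t) < 2π for every i = 1,…,N. -/
/-!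
The argument is a barrier argument combined with a continuity (bootstrap) argument for `R`.

As long as `R ≥ c₃ R₀ / 2`, every angle `b ∈ [α₀, π)` with
`‖Ω‖ < κ c₁ (π - b)^p · c₃ R₀ / 2` acts modulo `2π` as a barrier: by (C1) each velocity is negative
at `b` and positive at `-b` (`velocity_signs`, `abs_barrier`). The assumption on `κ` says that
`β = π - min (π - α₀) ((R₀ / (2 c₂))^(1/q))` is such an angle (`threshold_lt`).

By (C2), an oscillator with `I(θᵢ⁰) ≥ R₀ / 2` starts within `β` of a multiple of `2π`. It is
therefore confined to `|θ| ≤ max |θᵢ⁰| α₀` (up to that multiple), and (C3) gives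
`I(θᵢ) ≥ c₃ I(θᵢ⁰)`. The remaining oscillators carry less than half of `R₀`, so
`R > c₃ R₀ / 2` strictly at the end of any interval on which `R ≥ c₃ R₀ / 2`; hence the bound
holds forever (`avgInfl_lower`).

For the oscillation, the strict inequality in the hypothesis leaves a second barrier
`β' ∈ (β, π)`. Starting in `[-β, 2π - β)` the trajectory stays in `[-β, 2π + β]`. Either it never
exceeds `2π - β'`, or it does and then it has never been and will never be below `β'`. In both
cases it lies in an interval of length `2π - (β' - β)` (`osc_lt`).
-/

open MeasureTheory Filter

/-- The average influence `R(t) = (1/N) ∑ⱼ I(θⱼ(t))` of the Winfree model. -/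
noncomputable def avgInfl (N : ℕ) (I : ℝ → ℝ) (θ : Fin N → ℝ → ℝ) (t : ℝ) : ℝ :=
  (N : ℝ)⁻¹ * ∑ j, I (θ j t)

/-- `θ` is the solution of the Winfree model with influence function `I`, sensitivity
function `S`, frequencies `ω`, coupling strength `κ` and initial data `θ0`. -/
def IsGenWinfreeSol (N : ℕ) (ω : Fin N → ℝ) (κ : ℝ) (I S : ℝ → ℝ)
    (θ0 : Fin N → ℝ) (θ : Fin N → ℝ → ℝ) : Prop :=
  (∀ i, θ i 0 = θ0 i) ∧
  ∀ i, ∀ t : ℝ, 0 ≤ t →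
    HasDerivAt (θ i) (ω i + κ / (N : ℝ) * S (θ i t) * ∑ j, I (θ j t)) t

/-- `I` and `S` are `2π`-periodic Lipschitz functions. -/
def GoodIS (I S : ℝ → ℝ) : Prop :=
  Function.Periodic I (2 * Real.pi) ∧ Function.Periodic S (2 * Real.pi) ∧
  (∃ K : NNReal, LipschitzWith K I) ∧ (∃ K : NNReal, LipschitzWith K S)

/-- The structural conditions (C1), (C2), (C3) on the interaction functions,
with angle `α₀ ∈ (0,π)`, exponents `p, q ≥ 1` and constants `c₁, c₂ > 0`, `c₃ ∈ (0,1]`. -/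
def StructC (I S : ℝ → ℝ) (α₀ p q c₁ c₂ c₃ : ℝ) : Prop :=
  α₀ ∈ Set.Ioo 0 Real.pi ∧ 1 ≤ p ∧ 1 ≤ q ∧ 0 < c₁ ∧ 0 < c₂ ∧ c₃ ∈ Set.Ioc (0:ℝ) 1 ∧
  (∀ x ∈ Set.Icc α₀ Real.pi, S x ≤ -c₁ * (Real.pi - x) ^ p) ∧
  (∀ x ∈ Set.Icc (-Real.pi) (-α₀), c₁ * (x + Real.pi) ^ p ≤ S x) ∧
  (∀ x ∈ Set.Icc (-Real.pi) Real.pi, 0 ≤ I x ∧ I x ≤ c₂ * (Real.pi - |x|) ^ q) ∧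
  (∀ x ∈ Set.Icc (-Real.pi) Real.pi, ∀ φ : ℝ, |φ| ≤ max |x| α₀ → c₃ * I x ≤ I φ)

theorem upper_barrier {f f' : ℝ → ℝ} {a T b : ℝ}
    (hf : ∀ t ∈ Set.Icc a T, HasDerivAt f (f' t) t) (ha : f a ≤ b)
    (hb : ∀ t ∈ Set.Icc a T, f t = b → f' t < 0) : ∀ t ∈ Set.Icc a T, f t ≤ b := by
  intro t ht
  exact image_le_of_deriv_right_lt_deriv_boundary (B := fun _ => b) (B' := fun _ => 0)
    (fun x hx => (hf x hx).continuousAt.continuousWithinAt)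
    (fun x hx => (hf x ⟨hx.1, hx.2.le⟩).hasDerivWithinAt) ha
    (fun x => hasDerivAt_const x b) (fun x hx h => hb x ⟨hx.1, hx.2.le⟩ h) ht

theorem lower_barrier {f f' : ℝ → ℝ} {a T b : ℝ}
    (hf : ∀ t ∈ Set.Icc a T, HasDerivAt f (f' t) t) (ha : b ≤ f a)
    (hb : ∀ t ∈ Set.Icc a T, f t = b → 0 < f' t) : ∀ t ∈ Set.Icc a T, b ≤ f t := by
  intro t ht
  have := upper_barrier (f := fun t => -f t) (f' := fun t => -f' t) (b := -b)
    (fun t ht => (hf t ht).neg) (neg_le_neg ha)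
    (fun t ht h => by have := hb t ht (neg_inj.mp h); linarith) t ht
  linarith

/-- The trapping alternative: nested barriers `±β` and `±β'` modulo `2π`, with `β < β' < π`, bound
the oscillation by `2π - (β' - β)`. -/
theorem osc_lt {f f' : ℝ → ℝ} {β β' : ℝ} (h0 : 0 ≤ β) (hββ' : β < β') (hπ : β' < Real.pi)
    (hf : ∀ t, 0 ≤ t → HasDerivAt f (f' t) t)
    (hneg : ∀ b ∈ ({β, β'} : Set ℝ), ∀ k : ℤ, ∀ t, 0 ≤ t →
      f t = b + k * (2 * Real.pi) → f' t < 0)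
    (hpos : ∀ b ∈ ({β, β'} : Set ℝ), ∀ k : ℤ, ∀ t, 0 ≤ t →
      f t = -b + k * (2 * Real.pi) → 0 < f' t) : OscLt2Pi f := by
  obtain ⟨k, hk, -⟩ := existsUnique_sub_zsmul_mem_Ico (Real.two_pi_pos) (f 0) (-β)
  simp only [zsmul_eq_mul, Set.mem_Ico] at hk
  have up : ∀ b ∈ ({β, β'} : Set ℝ), ∀ m : ℤ, ∀ s t, 0 ≤ s → s ≤ t →
      f s ≤ b + m * (2 * Real.pi) → f t ≤ b + m * (2 * Real.pi) := fun b hb m s t hs hst h =>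
    upper_barrier (T := t) (fun u hu => hf u (hs.trans hu.1)) h
      (fun u hu hh => hneg b hb m u (hs.trans hu.1) hh) t ⟨hst, le_rfl⟩
  have low : ∀ b ∈ ({β, β'} : Set ℝ), ∀ m : ℤ, ∀ s t, 0 ≤ s → s ≤ t →
      -b + m * (2 * Real.pi) ≤ f s → -b + m * (2 * Real.pi) ≤ f t := fun b hb m s t hs hst h =>
    lower_barrier (T := t) (fun u hu => hf u (hs.trans hu.1)) h
      (fun u hu hh => hpos b hb m u (hs.trans hu.1) hh) t ⟨hst, le_rfl⟩
  have key : ∃ A B, B - A < 2 * Real.pi ∧ ∀ t, 0 ≤ t → A ≤ f t ∧ f t ≤ B := by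
    by_cases h : ∀ t, 0 ≤ t → f t ≤ -β' + ((k + 1 : ℤ) : ℝ) * (2 * Real.pi)
    · refine ⟨-β + k * (2 * Real.pi), _, ?_, fun t ht =>
        ⟨low β (by simp) k 0 t le_rfl ht (by linarith), h t ht⟩⟩
      push_cast
      linarith
    · push Not at h
      obtain ⟨s, hs, hfs⟩ := h
      refine ⟨β' + k * (2 * Real.pi), β + ((k + 1 : ℤ) : ℝ) * (2 * Real.pi), ?_, fun t ht =>
        ⟨?_, up β (by simp) _ 0 t le_rfl ht ?_⟩⟩
      · push_cast
        linarith
      · rcases le_total s t with hst | hst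
        · have := low β' (by simp) (k + 1) s t hs hst hfs.le
          push_cast at this
          linarith
        · by_contra! hc
          have := up β' (by simp) k t s ht hst hc.le
          push_cast at hfs
          linarith
      · push_cast
        linarith
  obtain ⟨A, B, hAB, hall⟩ := key
  have hne : (f '' Set.Ici 0).Nonempty := ⟨f 0, 0, by simp, rfl⟩
  refine ⟨⟨B, ?_⟩, ⟨A, ?_⟩, ?_⟩
  · rintro _ ⟨t, ht, rfl⟩
    exact (hall t ht).2
  · rintro _ ⟨t, ht, rfl⟩
    exact (hall t ht).1
  · have h1 : sSup (f '' Set.Ici 0) ≤ B := csSup_le hne (by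
      rintro _ ⟨t, ht, rfl⟩
      exact (hall t ht).2)
    have h2 : A ≤ sInf (f '' Set.Ici 0) := le_csInf hne (by
      rintro _ ⟨t, ht, rfl⟩
      exact (hall t ht).1)
    linarith

/-- The coupling dominates the frequencies at an angle `b` with `Ωn < κ c₁ (π - b)^p ρ`, provided
the average influence `R` is at least `ρ`. -/
theorem velocity_signs {I S : ℝ → ℝ} {α₀ p q c₁ c₂ c₃ κ Ωn w R ρ b : ℝ}
    (hGood : GoodIS I S) (hStruct : StructC I S α₀ p q c₁ c₂ c₃)
    (hκ : 0 < κ) (hw : |w| ≤ Ωn) (hρ : 0 ≤ ρ) (hR : ρ ≤ R)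
    (hb : α₀ ≤ b) (hbπ : b ≤ Real.pi) (hX : Ωn < κ * c₁ * (Real.pi - b) ^ p * ρ) (k : ℤ) :
    w + κ * S (b + k * (2 * Real.pi)) * R < 0 ∧
      0 < w + κ * S (-b + k * (2 * Real.pi)) * R := by
  obtain ⟨hα, hp, hq, hc1, hc2, hc3, hC1, hC1', -, -⟩ := hStruct
  rw [hGood.2.1.int_mul k b, hGood.2.1.int_mul k (-b)]
  have hu := hC1 b ⟨hb, hbπ⟩
  have hl := hC1' (-b) ⟨by linarith, by linarith⟩
  rw [show -b + Real.pi = Real.pi - b by ring] at hl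
  have hpow : 0 ≤ (Real.pi - b) ^ p := Real.rpow_nonneg (by linarith) _
  have hκR : 0 ≤ κ * R := mul_nonneg hκ.le (hρ.trans hR)
  have h1 : κ * c₁ * (Real.pi - b) ^ p * ρ ≤ κ * c₁ * (Real.pi - b) ^ p * R :=
    mul_le_mul_of_nonneg_left hR (by positivity)
  have h2 := mul_le_mul_of_nonneg_left hu hκR
  have h3 := mul_le_mul_of_nonneg_left hl hκR
  obtain ⟨h4, h5⟩ := abs_le.mp hw
  constructor <;> nlinarith

/-- The hypothesis on `κ` in the form used by the barriers. -/
theorem threshold_lt {α₀ p q c₁ c₂ c₃ κ Ωn R0 : ℝ} (hα : α₀ < Real.pi)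
    (hc1 : 0 < c₁) (hc2 : 0 < c₂) (hc3 : 0 < c₃) (hR0 : 0 < R0)
    (hκ : max (2 * (2 * c₂) ^ (p/q) / (c₁ * c₃) * Ωn / R0 ^ (1 + p/q))
        (2 / (c₁ * c₃ * (Real.pi - α₀) ^ p) * Ωn / R0) < κ) :
    Ωn < κ * c₁ * (min (Real.pi - α₀) ((R0 / (2 * c₂)) ^ (1/q))) ^ p * (c₃ * R0 / 2) := by
  obtain ⟨h1, h2⟩ := max_lt_iff.mp hκ
  rcases min_choice (Real.pi - α₀) ((R0 / (2 * c₂)) ^ (1/q)) with h | h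
  · rw [h]
    have hP : 0 < (Real.pi - α₀) ^ p := Real.rpow_pos_of_pos (by linarith) _
    rw [div_mul_eq_mul_div, div_div, div_lt_iff₀ (by positivity)] at h2
    nlinarith
  · rw [h, ← Real.rpow_mul (by positivity), show 1 / q * p = p / q by ring,
      Real.div_rpow hR0.le (by positivity)]
    rw [Real.rpow_add hR0, Real.rpow_one] at h1
    have hP : 0 < (2 * c₂) ^ (p/q) := Real.rpow_pos_of_pos (by positivity) _
    have hQ : 0 < R0 ^ (p/q) := Real.rpow_pos_of_pos (by positivity) _
    rw [div_mul_eq_mul_div, div_div, div_lt_iff₀ (by positivity)] at h1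
    rw [show κ * c₁ * (R0 ^ (p/q) / (2 * c₂) ^ (p/q)) * (c₃ * R0 / 2) =
      κ * c₁ * R0 ^ (p/q) * (c₃ * R0 / 2) / (2 * c₂) ^ (p/q) by ring, lt_div_iff₀ hP]
    nlinarith

theorem influence_nonneg {I S : ℝ → ℝ} {α₀ p q c₁ c₂ c₃ : ℝ}
    (hGood : GoodIS I S) (hStruct : StructC I S α₀ p q c₁ c₂ c₃) (x : ℝ) : 0 ≤ I x := by
  obtain ⟨-, -, -, -, -, -, -, -, hC2, -⟩ := hStruct
  obtain ⟨k, hk, -⟩ := existsUnique_sub_zsmul_mem_Ico (Real.two_pi_pos) x (-Real.pi)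
  simp only [zsmul_eq_mul, Set.mem_Ico] at hk
  rw [← hGood.1.sub_int_mul_eq k]
  exact (hC2 _ ⟨hk.1, by linarith⟩).1

/-- By (C2), an angle with influence at least `R0 / 2` is at distance at least
`(R0 / (2 c₂))^(1/q)` from `±π`. -/
theorem abs_le_of_active {I S : ℝ → ℝ} {α₀ p q c₁ c₂ c₃ R0 x : ℝ}
    (hStruct : StructC I S α₀ p q c₁ c₂ c₃) (hR0 : 0 < R0)
    (hx : x ∈ Set.Icc (-Real.pi) Real.pi) (hI : R0 / 2 ≤ I x) :
    (R0 / (2 * c₂)) ^ (1/q) ≤ Real.pi - |x| := by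
  obtain ⟨-, -, hq, -, hc2, -, -, -, hC2, -⟩ := hStruct
  have hx0 : 0 ≤ Real.pi - |x| := by
    have := abs_le.mpr hx
    linarith
  rw [one_div, Real.rpow_inv_le_iff_of_pos (by positivity) hx0 (by linarith),
    div_le_iff₀ (by positivity)]
  linarith [(hC2 x hx).2]

/-- The velocity field written with the average influence. -/
theorem hasDerivAt_avg {N : ℕ} {ω : Fin N → ℝ} {κ : ℝ} {I S : ℝ → ℝ} {θ0 : Fin N → ℝ}
    {θ : Fin N → ℝ → ℝ} (hsol : IsGenWinfreeSol N ω κ I S θ0 θ) (i : Fin N) {t : ℝ}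
    (ht : 0 ≤ t) : HasDerivAt (θ i) (ω i + κ * S (θ i t) * avgInfl N I θ t) t := by
  convert hsol.2 i t ht using 1
  unfold avgInfl
  ring

/-- While `R ≥ ρ`, an oscillator starting within `b` of `2πk` stays within `b` of it. -/
theorem abs_barrier {N : ℕ} {ω : Fin N → ℝ} {κ : ℝ} {I S : ℝ → ℝ} {θ0 : Fin N → ℝ}
    {θ : Fin N → ℝ → ℝ} {α₀ p q c₁ c₂ c₃ Ωn ρ b T : ℝ}
    (hGood : GoodIS I S) (hStruct : StructC I S α₀ p q c₁ c₂ c₃)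
    (hsol : IsGenWinfreeSol N ω κ I S θ0 θ) (hκ : 0 < κ) (i : Fin N) (hw : |ω i| ≤ Ωn)
    (hρ : 0 ≤ ρ) (hT : 0 ≤ T) (hR : ∀ t ∈ Set.Icc 0 T, ρ ≤ avgInfl N I θ t)
    (hb : α₀ ≤ b) (hbπ : b ≤ Real.pi) (hX : Ωn < κ * c₁ * (Real.pi - b) ^ p * ρ) (k : ℤ)
    (h0 : |θ i 0 - k * (2 * Real.pi)| ≤ b) : |θ i T - k * (2 * Real.pi)| ≤ b := by
  obtain ⟨hl, hu⟩ := abs_le.mp h0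
  have hd : ∀ t ∈ Set.Icc 0 T, HasDerivAt (θ i) (ω i + κ * S (θ i t) * avgInfl N I θ t) t :=
    fun t ht => hasDerivAt_avg hsol i ht.1
  have h1 := upper_barrier (b := b + k * (2 * Real.pi)) hd (by linarith) (fun t ht h => by
    rw [h]
    exact (velocity_signs hGood hStruct hκ hw hρ (hR t ht) hb hbπ hX k).1) T ⟨hT, le_rfl⟩
  have h2 := lower_barrier (b := -b + k * (2 * Real.pi)) hd (by linarith) (fun t ht h => by
    rw [h]
    exact (velocity_signs hGood hStruct hκ hw hρ (hR t ht) hb hbπ hX k).2) T ⟨hT, le_rfl⟩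
  exact abs_le.mpr ⟨by linarith, by linarith⟩

/-- The bootstrap step: a non-strict lower bound on `R` over `[0, T]` is strict at `T`. -/
theorem avgInfl_step {N : ℕ} (hN : 1 ≤ N) {ω : Fin N → ℝ} {κ : ℝ} {I S : ℝ → ℝ}
    {θ0 : Fin N → ℝ} {θ : Fin N → ℝ → ℝ} {α₀ p q c₁ c₂ c₃ Ωn R0 T : ℝ}
    (hGood : GoodIS I S) (hStruct : StructC I S α₀ p q c₁ c₂ c₃)
    (hsol : IsGenWinfreeSol N ω κ I S θ0 θ) (hκ : 0 < κ) (hw : ∀ i, |ω i| ≤ Ωn)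
    (hR0def : R0 = avgInfl N I θ 0) (hR0 : 0 < R0)
    (hX : Ωn < κ * c₁ * (min (Real.pi - α₀) ((R0 / (2 * c₂)) ^ (1/q))) ^ p * (c₃ * R0 / 2))
    (hT : 0 ≤ T) (hR : ∀ t ∈ Set.Icc 0 T, c₃ * R0 / 2 ≤ avgInfl N I θ t) :
    c₃ * R0 / 2 < avgInfl N I θ T := by
  have hS := hStruct
  obtain ⟨hα, hp, hq, hc1, hc2, hc3, -, -, -, hC3⟩ := hS
  have hc3' := hc3.1
  have hNpos : (0 : ℝ) < N := by exact_mod_cast hN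
  have : Nonempty (Fin N) := ⟨⟨0, hN⟩⟩
  -- Discarding the oscillators with influence below `R0 / 2` costs at most `R0 / 2` on average.
  have key : ∀ j, c₃ * (I (θ j 0) - R0 / 2) < I (θ j T) := by
    intro j
    rcases lt_or_ge (I (θ j 0)) (R0 / 2) with h | h
    · have := influence_nonneg hGood hStruct (θ j T)
      nlinarith
    · obtain ⟨k, hk, -⟩ := existsUnique_sub_zsmul_mem_Ico (Real.two_pi_pos) (θ j 0) (-Real.pi)
      simp only [zsmul_eq_mul, Set.mem_Ico] at hk
      have hx : θ j 0 - k * (2 * Real.pi) ∈ Set.Icc (-Real.pi) Real.pi :=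
        ⟨hk.1, by linarith⟩
      have hper : ∀ y, I (y - k * (2 * Real.pi)) = I y :=
        fun y => hGood.1.sub_int_mul_eq k
      have hact := abs_le_of_active hStruct hR0 hx (by rwa [hper])
      set x := θ j 0 - k * (2 * Real.pi) with hxdef
      have hr0 : 0 ≤ min (Real.pi - α₀) ((R0 / (2 * c₂)) ^ (1/q)) :=
        le_min (by linarith [hα.2]) (by positivity)
      have hr : min (Real.pi - α₀) ((R0 / (2 * c₂)) ^ (1/q)) ≤ Real.pi - max |x| α₀ := by
        rcases max_choice |x| α₀ with h' | h' <;> rw [h']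
        · exact (min_le_right _ _).trans hact
        · exact min_le_left _ _
      have hpow := Real.rpow_le_rpow hr0 hr (by linarith : 0 ≤ p)
      have hfac : 0 ≤ κ * c₁ := by positivity
      have hX' : Ωn < κ * c₁ * (Real.pi - max |x| α₀) ^ p * (c₃ * R0 / 2) :=
        hX.trans_le (by gcongr)
      have hin := abs_barrier hGood hStruct hsol hκ j (hw j) (by positivity) hT hR
        (le_max_right _ _) (by linarith) hX' k (le_max_left _ _)
      have := hC3 x hx _ hin
      rw [hper, hper] at this
      nlinarith
  have hsum := Finset.sum_lt_sum_of_nonempty (s := Finset.univ) Finset.univ_nonempty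
    (fun j _ => key j)
  rw [← Finset.mul_sum, Finset.sum_sub_distrib, Finset.sum_const, Finset.card_univ,
    Fintype.card_fin, nsmul_eq_mul] at hsum
  unfold avgInfl at hR0def ⊢
  rw [inv_mul_eq_div, eq_div_iff hNpos.ne'] at hR0def
  rw [inv_mul_eq_div, lt_div_iff₀ hNpos]
  rw [← hR0def] at hsum
  linarith

/-- Part (a): `avgInfl_step` at the first time where `R ≤ c₃ R₀ / 2` gives a contradiction. -/
theorem avgInfl_lower {N : ℕ} (hN : 1 ≤ N) {ω : Fin N → ℝ} {κ : ℝ} {I S : ℝ → ℝ}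
    {θ0 : Fin N → ℝ} {θ : Fin N → ℝ → ℝ} {α₀ p q c₁ c₂ c₃ Ωn R0 : ℝ}
    (hGood : GoodIS I S) (hStruct : StructC I S α₀ p q c₁ c₂ c₃)
    (hsol : IsGenWinfreeSol N ω κ I S θ0 θ) (hκ : 0 < κ) (hw : ∀ i, |ω i| ≤ Ωn)
    (hR0def : R0 = avgInfl N I θ 0) (hR0 : 0 < R0)
    (hX : Ωn < κ * c₁ * (min (Real.pi - α₀) ((R0 / (2 * c₂)) ^ (1/q))) ^ p * (c₃ * R0 / 2))
    (t : ℝ) (ht : 0 ≤ t) : c₃ * R0 / 2 < avgInfl N I θ t := by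
  by_contra! hcon
  obtain ⟨K, hK⟩ := hGood.2.2.1
  have hcont : ContinuousOn (avgInfl N I θ) (Set.Ici 0) := by
    unfold avgInfl
    refine continuousOn_const.mul (continuousOn_finsetSum _ fun j _ => ?_)
    exact hK.continuous.comp_continuousOn
      fun u hu => (hasDerivAt_avg hsol j hu).continuousAt.continuousWithinAt
  set Z := Set.Ici (0 : ℝ) ∩ avgInfl N I θ ⁻¹' Set.Iic (c₃ * R0 / 2) with hZ
  have hZc : IsClosed Z := hcont.preimage_isClosed_of_isClosed isClosed_Ici isClosed_Iic
  have hZb : BddBelow Z := ⟨0, fun u hu => hu.1⟩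
  have hTZ : sInf Z ∈ Z := hZc.csInf_mem ⟨t, ht, hcon⟩ hZb
  set T := sInf Z with hTdef
  have hlt : ∀ u, 0 ≤ u → u < T → c₃ * R0 / 2 < avgInfl N I θ u := by
    intro u hu huT
    by_contra! h
    exact absurd (csInf_le hZb (show u ∈ Z from ⟨hu, h⟩)) (not_le.mpr huT)
  have hT0 : (0 : ℝ) ≤ T := hTZ.1
  have hc3 := hStruct.2.2.2.2.2.1
  have hTpos : 0 < T := by
    rcases hT0.eq_or_lt with h | h
    · have h2 : avgInfl N I θ T ≤ c₃ * R0 / 2 := hTZ.2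
      rw [← h, ← hR0def] at h2
      nlinarith [hc3.1, hc3.2]
    · exact h
  have hclos : Set.Icc 0 T ⊆ closure (Set.Ico 0 T) := by rw [closure_Ico hTpos.ne]
  have hle : ∀ u ∈ Set.Icc 0 T, c₃ * R0 / 2 ≤ avgInfl N I θ u := by
    intro u hu
    exact ContinuousWithinAt.closure_le (hclos hu) continuousWithinAt_const
      ((hcont u hu.1).mono fun v hv => hv.1) (fun v hv => (hlt v hv.1 hv.2).le)
  have h2 : avgInfl N I θ T ≤ c₃ * R0 / 2 := hTZ.2
  exact absurd (avgInfl_step hN hGood hStruct hsol hκ hw hR0def hR0 hX hT0 hle) (not_lt.mpr h2)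

theorem stmt5 (N : ℕ) (hN : 1 ≤ N) (ω : Fin N → ℝ) (κ : ℝ) (I S : ℝ → ℝ)
    (α₀ p q c₁ c₂ c₃ : ℝ)
    (hGood : GoodIS I S) (hStruct : StructC I S α₀ p q c₁ c₂ c₃)
    (Ωn : ℝ) (hΩn : IsGreatest (Set.range fun i => |ω i|) Ωn)
    (θ0 : Fin N → ℝ) (θ : Fin N → ℝ → ℝ) (hsol : IsGenWinfreeSol N ω κ I S θ0 θ)
    (R0 : ℝ) (hR0def : R0 = avgInfl N I θ 0) (hR0 : 0 < R0)
    (hκ : max (2 * (2 * c₂) ^ (p/q) / (c₁ * c₃) * Ωn / R0 ^ (1 + p/q))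
        (2 / (c₁ * c₃ * (Real.pi - α₀) ^ p) * Ωn / R0) < κ) :
    (∀ t : ℝ, 0 ≤ t → c₃ * R0 / 2 < avgInfl N I θ t) ∧
    (∀ i, OscLt2Pi (θ i)) := by
  have hw : ∀ i, |ω i| ≤ Ωn := fun i => hΩn.2 ⟨i, rfl⟩
  have hΩ0 : 0 ≤ Ωn := (abs_nonneg _).trans (hw ⟨0, hN⟩)
  have hS := hStruct
  obtain ⟨hα, hp, hq, hc1, hc2, hc3, -, -, -, -⟩ := hS
  have hc3' := hc3.1
  have hα0 : 0 < α₀ := hα.1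
  have hαπ : 0 < Real.pi - α₀ := sub_pos.mpr hα.2
  have hκ0 : 0 < κ := by
    refine lt_of_le_of_lt (le_trans ?_ (le_max_right _ _)) hκ
    positivity
  have hX := threshold_lt hα.2 hc1 hc2 hc3' hR0 hκ
  have hRlow := avgInfl_lower hN hGood hStruct hsol hκ0 hw hR0def hR0 hX
  refine ⟨hRlow, fun i => ?_⟩
  set r := min (Real.pi - α₀) ((R0 / (2 * c₂)) ^ (1/q)) with hr
  have hr0 : 0 < r := lt_min hαπ (by positivity)
  have hrle : r ≤ Real.pi - α₀ := min_le_left _ _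
  -- The strict inequality at `r` persists at some `r' < r`, which is the second barrier.
  have hex : ∃ r', 0 < r' ∧ r' < r ∧ Ωn < κ * c₁ * r' ^ p * (c₃ * R0 / 2) := by
    have hc : ContinuousAt (fun s : ℝ => κ * c₁ * s ^ p * (c₃ * R0 / 2)) r :=
      (continuousAt_const.mul (Real.continuousAt_rpow_const r p (Or.inl hr0.ne'))).mul
        continuousAt_const
    have h1 : ∀ᶠ s in nhdsWithin r (Set.Iio r), Ωn < κ * c₁ * s ^ p * (c₃ * R0 / 2) :=
      (hc.eventually_const_lt hX).filter_mono nhdsWithin_le_nhds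
    have h2 : ∀ᶠ s in nhdsWithin r (Set.Iio r), s ∈ Set.Ioo 0 r := Ioo_mem_nhdsLT hr0
    obtain ⟨s, hs1, hs2⟩ := (h1.and h2).exists
    exact ⟨s, hs2.1, hs2.2, hs1⟩
  obtain ⟨r', hr'0, hr'r, hX'⟩ := hex
  have hb : ∀ b ∈ ({Real.pi - r, Real.pi - r'} : Set ℝ), α₀ ≤ b ∧ b ≤ Real.pi ∧
      Ωn < κ * c₁ * (Real.pi - b) ^ p * (c₃ * R0 / 2) := by
    rintro b (rfl | rfl)
    · rw [sub_sub_cancel]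
      exact ⟨by linarith, by linarith, hX⟩
    · rw [sub_sub_cancel]
      exact ⟨by linarith, by linarith, hX'⟩
  have hρ : 0 ≤ c₃ * R0 / 2 := by positivity
  refine osc_lt (β := Real.pi - r) (β' := Real.pi - r') (by linarith) (by linarith) (by linarith)
    (fun t ht => hasDerivAt_avg hsol i ht) ?_ ?_
  · intro b hbm k t ht h
    obtain ⟨h1, h2, h3⟩ := hb b hbm
    rw [h]
    exact (velocity_signs hGood hStruct hκ0 (hw i) hρ (hRlow t ht).le h1 h2 h3 k).1
  · intro b hbm k t ht h
    obtain ⟨h1, h2, h3⟩ := hb b hbm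
    rw [h]
    exact (velocity_signs hGood hStruct hκ0 (hw i) hρ (hRlow t ht).le h1 h2 h3 k).2
end

section
/- Let (θ_i)_{i=1}^N be the solution of the prototypical Winfree model. Suppose 0 < ρ ≤ 2 satisfies κ > ‖Ω_B‖_∞/ρ, and subsets A ⊆ B ⊆ {1,…,N} satisfy (1/N)∑_{i∈A}(1 + cos θ_i^0) > 2ρ / (1 + √(1 − ‖Ω_B‖_∞²/(κ²ρ²))) and cos θ_i^0 ≥ −√(1 − ‖Ω_B‖_∞²/(κ²ρ²)) for all i ∈ A. Then: (a) R(t) ≥ ρ for all t ≥ 0; (b) cos θ_i(t) ≥ −√(1 − ‖Ω_B‖_∞²/(κ²ρ²)) for all i ∈ A and all t ≥ 0; (c) for every i ∈ B, every α with 0 < α < √(1 − ‖Ω_B‖_∞²/(κ²ρ²)), and every t_0 ≥ 0 with cos θ_i(t_0) ≥ −α, one has cos θ_i(t) ≥ −α for all t ≥ t_0 and cos θ_i(t) ≥ α for all t ≥ t_0 + π/(κρ√(1−α²) − ‖Ω_B‖_∞); (d) sup_{t≥0} θ_i(t) − inf_{t≥0} θ_i(t) < 2π for every i ∈ B. -/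
/-!
Each oscillator obeys the scalar equation `φ' = w - k(t) sin φ` with `k = κ R` and `|w| ≤ Ω`.
While `k > K := κ ρ`, every level `L` of `cos φ` with `Ω² ≤ K² (1 - L²)`, that is `|L| ≤ s` where
`s = √(1 - Ω²/K²)`, can only be crossed upwards (`cos_barrier`). Hence, as long as `R > ρ`, each
`i ∈ A` satisfies `cos θᵢ ≥ min (cos θᵢ⁰) s`, so that `1 + cos θᵢ ≥ (1 + s)/2 · (1 + cos θᵢ⁰)`;
summing over `A`, the hypothesis on the initial data gives `R > ρ` with a uniform margin, and a
first-exit-time argument shows `R > ρ` forever. This yields (a) and (b), and the first half of (c).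

For the second half of (c) (`cos_reach`), as long as `|cos φ| < α` the sine keeps its sign and `φ`
moves with speed at least `K √(1 - α²) - Ω` in a fixed direction; after travelling a distance `π`
the sine would have changed sign.

For (d) (`osc_bound`), levels `p` with `K sin p > Ω` can only be crossed downwards by `φ`, and
levels with `K sin p < -Ω` only upwards. A phase in `[-π/2, π/2]` modulo `2π` is trapped there; a
phase in `(π/2, 3π/2)` either stays there or leaves through one end for good, and the next barrier
beyond that end can be placed slightly closer than `2π` from the opposite end.
-/

/-! ### Barriers for a single oscillator -/

/-- Along `φ' = w - k sin φ` with `k > K`, a level `L` of `cos φ` with `Ω² ≤ K² (1 - L²)` is never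
crossed downwards. -/
lemma cos_barrier_s6 {φ k : ℝ → ℝ} {w Ω K L a b : ℝ} (hab : a ≤ b)
    (hφ : ∀ t ∈ Set.Icc a b, HasDerivAt φ (w - k t * Real.sin (φ t)) t)
    (hw : |w| ≤ Ω) (hK : 0 < K) (hk : ∀ t ∈ Set.Ico a b, K < k t)
    (hL : Ω ^ 2 ≤ K ^ 2 * (1 - L ^ 2)) (ha : L ≤ Real.cos (φ a)) :
    L ≤ Real.cos (φ b) := by
  have hd : ∀ t ∈ Set.Icc a b, HasDerivAt (fun t => -Real.cos (φ t))
      (Real.sin (φ t) * (w - k t * Real.sin (φ t))) t := by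
    intro t ht
    exact (hφ t ht).cos.neg.congr_deriv (by ring)
  have hc : ContinuousOn (fun t => -Real.cos (φ t)) (Set.Icc a b) :=
    fun t ht => (hd t ht).continuousAt.continuousWithinAt
  have hΩ : 0 ≤ Ω := (abs_nonneg w).trans hw
  have key : -Real.cos (φ b) ≤ -L := by
    rcases hΩ.eq_or_lt with h0 | hpos
    · -- With `Ω = 0` the derivative may vanish on the level, but `cos φ` is monotone everywhere.
      have hw0 : w = 0 := by rw [← h0] at hw; exact abs_nonpos_iff.mp hw
      refine image_le_of_deriv_right_le_deriv_boundary (B := fun _ => -L) (B' := fun _ => 0) hc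
        (fun x hx => (hd x (Set.Ico_subset_Icc_self hx)).hasDerivWithinAt) (by linarith)
        continuousOn_const (fun x _ => hasDerivWithinAt_const _ _ _) ?_ (Set.right_mem_Icc.2 hab)
      intro x hx
      have := hk x hx
      rw [hw0]
      nlinarith [mul_nonneg (hK.trans this).le (sq_nonneg (Real.sin (φ x)))]
    · refine image_le_of_deriv_right_lt_deriv_boundary (B := fun _ => -L) (B' := fun _ => 0) hc
        (fun x hx => (hd x (Set.Ico_subset_Icc_self hx)).hasDerivWithinAt) (by linarith)
        (fun x => hasDerivAt_const _ _) ?_ (Set.right_mem_Icc.2 hab)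
      intro x hx hxL
      have hcos : Real.cos (φ x) = L := neg_injective hxL
      have hkx := hk x hx
      have hs := Real.sin_sq_add_cos_sq (φ x)
      rw [hcos] at hs
      have h1 : Ω ^ 2 ≤ (K * |Real.sin (φ x)|) ^ 2 := by
        rw [mul_pow, sq_abs]
        have : Real.sin (φ x) ^ 2 = 1 - L ^ 2 := by linarith
        rwa [this]
      have h2 : Ω ≤ K * |Real.sin (φ x)| :=
        (sq_le_sq₀ hΩ (by positivity)).1 h1
      have h3 : 0 < |Real.sin (φ x)| := by
        by_contra h
        have : |Real.sin (φ x)| = 0 := le_antisymm (not_lt.1 h) (abs_nonneg _)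
        rw [this] at h2
        linarith
      have h4 : w * Real.sin (φ x) ≤ Ω * |Real.sin (φ x)| := by
        refine (le_abs_self _).trans ?_
        rw [abs_mul]
        gcongr
      have h5 : Real.sin (φ x) * Real.sin (φ x) = |Real.sin (φ x)| * |Real.sin (φ x)| :=
        (abs_mul_abs_self _).symm
      change _ < (0 : ℝ)
      nlinarith [mul_pos h3 h3, mul_le_mul_of_nonneg_right h2 h3.le,
        mul_lt_mul_of_pos_right hkx (mul_pos h3 h3)]
  linarith

/-- A level `p` with `K sin p > Ω` is never crossed upwards. -/
lemma level_upper {φ k : ℝ → ℝ} {w Ω K p a b : ℝ} (ha : 0 ≤ a) (hab : a ≤ b)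
    (hφ : ∀ t, 0 ≤ t → HasDerivAt φ (w - k t * Real.sin (φ t)) t)
    (hw : |w| ≤ Ω) (hK : 0 < K) (hk : ∀ t, 0 ≤ t → K < k t)
    (hp : Ω < K * Real.sin p) (hpa : φ a ≤ p) : φ b ≤ p := by
  refine image_le_of_deriv_right_lt_deriv_boundary (f := φ) (a := a) (b := b)
    (B := fun _ => p) (B' := fun _ => 0)
    (fun t ht => (hφ t (ha.trans ht.1)).continuousAt.continuousWithinAt)
    (fun x hx => (hφ x (ha.trans hx.1)).hasDerivWithinAt) hpa
    (fun x => hasDerivAt_const _ _) ?_ (Set.right_mem_Icc.2 hab)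
  intro x hx hxp
  change φ x = p at hxp
  have hkx := hk x (ha.trans hx.1)
  have hsin : 0 < Real.sin p := by
    have : 0 < K * Real.sin p := ((abs_nonneg w).trans hw).trans_lt hp
    exact pos_of_mul_pos_right this hK.le
  rw [hxp]
  change _ < (0 : ℝ)
  nlinarith [le_abs_self w, mul_lt_mul_of_pos_right hkx hsin]

/-- The equation `φ' = w - k sin φ` is invariant under `(φ, w) ↦ (-φ, -w)`. -/
lemma neg_deriv {φ k : ℝ → ℝ} {w t : ℝ} (h : HasDerivAt φ (w - k t * Real.sin (φ t)) t) :
    HasDerivAt (fun t => -φ t) (-w - k t * Real.sin (-φ t)) t := by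
  refine h.neg.congr_deriv ?_
  rw [Real.sin_neg]
  ring

/-- A level `p` with `K sin p < -Ω` is never crossed downwards. -/
lemma level_lower {φ k : ℝ → ℝ} {w Ω K p a b : ℝ} (ha : 0 ≤ a) (hab : a ≤ b)
    (hφ : ∀ t, 0 ≤ t → HasDerivAt φ (w - k t * Real.sin (φ t)) t)
    (hw : |w| ≤ Ω) (hK : 0 < K) (hk : ∀ t, 0 ≤ t → K < k t)
    (hp : K * Real.sin p < -Ω) (hpa : p ≤ φ a) : p ≤ φ b := by
  have := level_upper (φ := fun t => -φ t) (w := -w) (Ω := Ω) (p := -p) ha hab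
    (fun t ht => neg_deriv (hφ t ht)) (by rwa [abs_neg]) hK hk
    (by rw [Real.sin_neg]; linarith) (neg_le_neg hpa)
  exact neg_le_neg_iff.1 this

/-! ### Time to reach the region `cos φ ≥ α` -/

/-- One of the two mirror-image cases of `cos_reach`: the phase starts with positive sine. -/
lemma cos_reach_pos {φ k : ℝ → ℝ} {w Ω K α t₀ : ℝ} (ht₀ : 0 ≤ t₀)
    (hφ : ∀ t, 0 ≤ t → HasDerivAt φ (w - k t * Real.sin (φ t)) t)
    (hw : |w| ≤ Ω) (hK : 0 < K) (hk : ∀ t, 0 ≤ t → K < k t)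
    (hα0 : 0 < α) (hα1 : α < 1) (hΩ : Ω < K * √(1 - α ^ 2))
    (hlow : ∀ t, t₀ ≤ t → -α ≤ Real.cos (φ t))
    (hsin : 0 < Real.sin (φ t₀)) :
    ∃ t ∈ Set.Icc t₀ (t₀ + Real.pi / (K * √(1 - α ^ 2) - Ω)), α ≤ Real.cos (φ t) := by
  by_contra! hcon
  set V := K * √(1 - α ^ 2) - Ω with hV
  have hVpos : 0 < V := by linarith
  set t₁ := t₀ + Real.pi / V with ht₁
  have h01 : t₀ ≤ t₁ := by have := div_pos Real.pi_pos hVpos; linarith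
  have hcont : ContinuousOn φ (Set.Icc t₀ t₁) :=
    fun t ht => (hφ t (ht₀.trans ht.1)).continuousAt.continuousWithinAt
  have habs : ∀ t ∈ Set.Icc t₀ t₁, √(1 - α ^ 2) ≤ |Real.sin (φ t)| := by
    intro t ht
    refine Real.sqrt_le_iff.2 ⟨abs_nonneg _, ?_⟩
    rw [sq_abs]
    nlinarith [Real.sin_sq_add_cos_sq (φ t), hlow t ht.1, hcon t ht]
  have hr : 0 < √(1 - α ^ 2) := Real.sqrt_pos.2 (by nlinarith)
  have hpos : ∀ t ∈ Set.Icc t₀ t₁, 0 < Real.sin (φ t) := by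
    intro t ht
    by_contra! hneg
    have hsub : Set.Icc t₀ t ⊆ Set.Icc t₀ t₁ := Set.Icc_subset_Icc_right ht.2
    obtain ⟨u, hu, hu0⟩ := intermediate_value_Icc' ht.1
      (Real.continuous_sin.comp_continuousOn (hcont.mono hsub))
      (show (0 : ℝ) ∈ Set.Icc _ _ from ⟨hneg, hsin.le⟩)
    have h := habs u (hsub hu)
    rw [show Real.sin (φ u) = 0 from hu0, abs_zero] at h
    linarith
  -- `φ` decreases at speed at least `V`, so it travels a distance `π` during `[t₀, t₁]`.
  have hdec : φ t₁ ≤ φ t₀ - V * (t₁ - t₀) := by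
    refine image_le_of_deriv_right_le_deriv_boundary (f := φ) (a := t₀) (b := t₁)
      (B := fun t => φ t₀ - V * (t - t₀)) (B' := fun _ => -V) hcont
      (fun x hx => (hφ x (ht₀.trans hx.1)).hasDerivWithinAt) (by simp)
      (by fun_prop) (fun x _ => ?_) ?_ (Set.right_mem_Icc.2 h01)
    · have := (((hasDerivAt_id x).sub_const t₀).const_mul V).const_sub (φ t₀)
      simpa using this.hasDerivWithinAt
    · intro x hx
      have hx' := Set.Ico_subset_Icc_self hx
      have h1 := habs x hx'
      rw [abs_of_pos (hpos x hx')] at h1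
      have h2 := mul_le_mul (hk x (ht₀.trans hx.1)).le h1 hr.le
        (hK.trans (hk x (ht₀.trans hx.1))).le
      linarith [le_abs_self w]
  have hVt : V * (t₁ - t₀) = Real.pi := by
    rw [ht₁]; field_simp; ring
  obtain ⟨u, hu, hu0⟩ := intermediate_value_Icc' h01 hcont
    (show φ t₀ - Real.pi ∈ Set.Icc _ _ from ⟨by linarith, by linarith [Real.pi_pos]⟩)
  have := hpos u hu
  rw [hu0, Real.sin_sub_pi] at this
  linarith

/-- A phase staying in `cos φ ≥ -α` reaches `cos φ ≥ α` within time `π / (K √(1 - α²) - Ω)`. -/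
lemma cos_reach_s6 {φ k : ℝ → ℝ} {w Ω K α t₀ : ℝ} (ht₀ : 0 ≤ t₀)
    (hφ : ∀ t, 0 ≤ t → HasDerivAt φ (w - k t * Real.sin (φ t)) t)
    (hw : |w| ≤ Ω) (hK : 0 < K) (hk : ∀ t, 0 ≤ t → K < k t)
    (hα0 : 0 < α) (hα1 : α < 1) (hΩ : Ω < K * √(1 - α ^ 2))
    (hlow : ∀ t, t₀ ≤ t → -α ≤ Real.cos (φ t)) :
    ∃ t ∈ Set.Icc t₀ (t₀ + Real.pi / (K * √(1 - α ^ 2) - Ω)), α ≤ Real.cos (φ t) := by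
  rcases lt_trichotomy (Real.sin (φ t₀)) 0 with h | h | h
  · have := cos_reach_pos (φ := fun t => -φ t) (w := -w) ht₀
      (fun t ht => neg_deriv (hφ t ht)) (by rwa [abs_neg]) hK hk hα0 hα1 hΩ
      (fun t ht => by rw [Real.cos_neg]; exact hlow t ht) (by rw [Real.sin_neg]; linarith)
    simpa only [Real.cos_neg] using this
  · -- At a zero of the sine, `cos φ = ±1`, and `-1` is excluded by `α < 1`.
    have hpos : 0 < K * √(1 - α ^ 2) - Ω := by linarith
    refine ⟨t₀, ⟨le_rfl, by have := div_pos Real.pi_pos hpos; linarith⟩, ?_⟩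
    rcases Real.sin_eq_zero_iff_cos_eq.1 h with h' | h'
    · rw [h']; exact hα1.le
    · have := hlow t₀ le_rfl
      rw [h'] at this
      linarith
  · exact cos_reach_pos ht₀ hφ hw hK hk hα0 hα1 hΩ hlow h

/-! ### Total oscillation of a phase -/

/-- A phase driven by `k > K > Ω` stays in an interval of length less than `2π`. -/
lemma osc_bound {φ k : ℝ → ℝ} {w Ω K : ℝ}
    (hφ : ∀ t, 0 ≤ t → HasDerivAt φ (w - k t * Real.sin (φ t)) t)
    (hw : |w| ≤ Ω) (hK : Ω < K) (hk : ∀ t, 0 ≤ t → K < k t) :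
    ∃ lo hi : ℝ, hi - lo < 2 * Real.pi ∧ ∀ t, 0 ≤ t → lo ≤ φ t ∧ φ t ≤ hi := by
  have hΩ : 0 ≤ Ω := (abs_nonneg w).trans hw
  have hK0 : 0 < K := hΩ.trans_lt hK
  have hpi := Real.pi_pos
  -- It suffices to treat a phase starting in `[-π/2, 3π/2)`.
  suffices H : ∀ ψ : ℝ → ℝ, (∀ t, 0 ≤ t → HasDerivAt ψ (w - k t * Real.sin (ψ t)) t) →
      -(Real.pi / 2) ≤ ψ 0 → ψ 0 < 3 * Real.pi / 2 →
      ∃ lo hi : ℝ, hi - lo < 2 * Real.pi ∧ ∀ t, 0 ≤ t → lo ≤ ψ t ∧ ψ t ≤ hi by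
    obtain ⟨n, ⟨hn1, hn2⟩, -⟩ :=
      existsUnique_add_zsmul_mem_Ico Real.two_pi_pos (φ 0) (-(Real.pi / 2))
    rw [zsmul_eq_mul] at hn1 hn2
    obtain ⟨lo, hi, h1, h2⟩ := H (fun t => φ t + n * (2 * Real.pi))
      (fun t ht => by
        rw [Real.sin_add_int_mul_two_pi]
        exact (hφ t ht).add_const _) hn1 (by linarith)
    refine ⟨lo - n * (2 * Real.pi), hi - n * (2 * Real.pi), by linarith, fun t ht => ?_⟩
    have := h2 t ht
    exact ⟨by linarith [this.1], by linarith [this.2]⟩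
  intro ψ hψ hlo hhi
  have up : ∀ {p a b : ℝ}, 0 ≤ a → a ≤ b → Ω < K * Real.sin p → ψ a ≤ p → ψ b ≤ p :=
    fun ha hab hp h => level_upper ha hab hψ hw hK0 hk hp h
  have dn : ∀ {p a b : ℝ}, 0 ≤ a → a ≤ b → K * Real.sin p < -Ω → p ≤ ψ a → p ≤ ψ b :=
    fun ha hab hp h => level_lower ha hab hψ hw hK0 hk hp h
  -- `δ` is the gain over `2π`: the barriers at `-π/2` and `5π/2` can be moved inwards by `δ`.
  obtain ⟨δ, hδ0, hδ1, hδ⟩ : ∃ δ, 0 < δ ∧ δ ≤ Real.pi / 2 ∧ Ω < K * Real.cos δ := by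
    have h0 : 0 ≤ Ω / K := by positivity
    have h1 : Ω / K < 1 := (div_lt_one hK0).2 hK
    refine ⟨Real.arccos ((Ω / K + 1) / 2), Real.arccos_pos.2 (by linarith),
      Real.arccos_le_pi_div_two.2 (by linarith), ?_⟩
    rw [Real.cos_arccos (by linarith) (by linarith)]
    have : K * ((Ω / K + 1) / 2) = (Ω + K) / 2 := by field_simp
    rw [this]
    linarith
  have s1 : Ω < K * Real.sin (Real.pi / 2) := by simpa using hK
  have s2 : K * Real.sin (-(Real.pi / 2)) < -Ω := by
    rw [Real.sin_neg, Real.sin_pi_div_two]; linarith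
  have s3 : K * Real.sin (3 * Real.pi / 2) < -Ω := by
    rw [show 3 * Real.pi / 2 = Real.pi / 2 + Real.pi by ring, Real.sin_add_pi,
      Real.sin_pi_div_two]
    linarith
  have s4 : K * Real.sin (δ - Real.pi / 2) < -Ω := by
    rw [Real.sin_sub_pi_div_two]; linarith
  have s5 : Ω < K * Real.sin (Real.pi / 2 - δ + 2 * Real.pi) := by
    rw [Real.sin_add_two_pi, Real.sin_pi_div_two_sub]; exact hδ
  rcases le_or_gt (ψ 0) (Real.pi / 2) with h0 | h0
  · exact ⟨-(Real.pi / 2), Real.pi / 2, by linarith,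
      fun t ht => ⟨dn le_rfl ht s2 hlo, up le_rfl ht s1 h0⟩⟩
  by_cases hA : ∃ t, 0 ≤ t ∧ ψ t < Real.pi / 2
  · obtain ⟨t₁, ht₁, hlt⟩ := hA
    refine ⟨δ - Real.pi / 2, 3 * Real.pi / 2, by linarith, fun t ht =>
      ⟨dn le_rfl ht s4 (by linarith), ?_⟩⟩
    by_contra! hgt
    rcases le_total t t₁ with h | h
    · linarith [dn ht h s3 hgt.le]
    · linarith [up ht₁ h s1 hlt.le]
  by_cases hB : ∃ t, 0 ≤ t ∧ 3 * Real.pi / 2 < ψ t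
  · obtain ⟨t₁, ht₁, hlt⟩ := hB
    refine ⟨Real.pi / 2, Real.pi / 2 - δ + 2 * Real.pi, by linarith, fun t ht =>
      ⟨?_, up le_rfl ht s5 (by linarith)⟩⟩
    by_contra! hgt
    exact hA ⟨t, ht, hgt⟩
  · push Not at hA hB
    exact ⟨Real.pi / 2, 3 * Real.pi / 2, by linarith, fun t ht => ⟨hA t ht, hB t ht⟩⟩

/-! ### Persistence of the order parameter -/


open MeasureTheory Filter

theorem stmt6 (N : ℕ) (hN : 1 ≤ N) (ω : Fin N → ℝ) (κ : ℝ)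
    (θ0 : Fin N → ℝ) (θ : Fin N → ℝ → ℝ) (hsol : IsWinfreeSol N ω κ θ0 θ)
    (A B : Finset (Fin N)) (hAB : A ⊆ B)
    (ΩB : ℝ) (hΩB : IsGreatest ((fun i => |ω i|) '' (B : Set (Fin N))) ΩB)
    (ρ : ℝ) (hρ0 : 0 < ρ) (hρ2 : ρ ≤ 2)
    (hκ : ΩB / ρ < κ)
    (hbig : 2 * ρ / (1 + Real.sqrt (1 - ΩB^2 / (κ^2 * ρ^2))) <
      (N : ℝ)⁻¹ * ∑ i ∈ A, (1 + Real.cos (θ0 i)))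
    (hrange : ∀ i ∈ A, -Real.sqrt (1 - ΩB^2 / (κ^2 * ρ^2)) ≤ Real.cos (θ0 i)) :
    -- (a)
    (∀ t : ℝ, 0 ≤ t → ρ ≤ orderParam N θ t) ∧
    -- (b)
    (∀ i ∈ A, ∀ t : ℝ, 0 ≤ t →
      -Real.sqrt (1 - ΩB^2 / (κ^2 * ρ^2)) ≤ Real.cos (θ i t)) ∧
    -- (c)
    (∀ i ∈ B, ∀ α : ℝ, 0 < α → α < Real.sqrt (1 - ΩB^2 / (κ^2 * ρ^2)) →
      ∀ t₀ : ℝ, 0 ≤ t₀ → -α ≤ Real.cos (θ i t₀) →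
        (∀ t, t₀ ≤ t → -α ≤ Real.cos (θ i t)) ∧
        (∀ t, t₀ + Real.pi / (κ * ρ * Real.sqrt (1 - α^2) - ΩB) ≤ t →
          α ≤ Real.cos (θ i t))) ∧
    -- (d)
    (∀ i ∈ B, OscLt2Pi (θ i)) := by
  obtain ⟨hinit, hode⟩ := hsol
  have hNpos : (0 : ℝ) < N := by exact_mod_cast hN
  have hΩ0 : 0 ≤ ΩB := by
    obtain ⟨i, -, hi⟩ := hΩB.1
    rw [← hi]; exact abs_nonneg _
  have hωB : ∀ i ∈ B, |ω i| ≤ ΩB := fun i hi => hΩB.2 ⟨i, hi, rfl⟩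
  have hκ0 : 0 < κ := (div_nonneg hΩ0 hρ0.le).trans_lt hκ
  have hK : 0 < κ * ρ := mul_pos hκ0 hρ0
  have hΩK : ΩB < κ * ρ := (div_lt_iff₀ hρ0).1 hκ
  set s := Real.sqrt (1 - ΩB ^ 2 / (κ ^ 2 * ρ ^ 2)) with hs
  have hq0 : 0 ≤ ΩB ^ 2 / (κ ^ 2 * ρ ^ 2) := by positivity
  have hq1 : ΩB ^ 2 / (κ ^ 2 * ρ ^ 2) ≤ 1 := by
    rw [div_le_one (by positivity)]
    nlinarith
  have hs0 : 0 ≤ s := Real.sqrt_nonneg _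
  have hs2 : s ^ 2 = 1 - ΩB ^ 2 / (κ ^ 2 * ρ ^ 2) := Real.sq_sqrt (by linarith)
  have hs1 : s ≤ 1 := by nlinarith
  have hKs : (κ * ρ) ^ 2 * (1 - s ^ 2) = ΩB ^ 2 := by
    rw [hs2]; field_simp; ring
  have hlev : ∀ L, -s ≤ L → L ≤ s → ΩB ^ 2 ≤ (κ * ρ) ^ 2 * (1 - L ^ 2) := by
    intro L h1 h2
    rw [← hKs]
    have : L ^ 2 ≤ s ^ 2 := sq_le_sq' h1 h2
    gcongr
  have hφ : ∀ i t, 0 ≤ t →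
      HasDerivAt (θ i) (ω i - (κ * orderParam N θ t) * Real.sin (θ i t)) t := by
    intro i t ht
    convert hode i t ht using 1
    unfold orderParam
    ring
  have hRc : ContinuousOn (orderParam N θ) (Set.Ici 0) := by
    have hc : ∀ i, ContinuousOn (θ i) (Set.Ici 0) :=
      fun i t ht => (hφ i t ht).continuousAt.continuousWithinAt
    unfold orderParam
    refine continuousOn_const.mul (continuousOn_finsetSum _ fun j _ => ?_)
    exact continuousOn_const.add (Real.continuous_cos.comp_continuousOn (hc j))
  have hθ0 : ∀ i, θ0 i = θ i 0 := fun i => (hinit i).symm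
  simp only [hθ0] at hbig hrange
  have hR : ∀ t, 0 ≤ t → ρ < orderParam N θ t := by
    by_contra! hcon
    obtain ⟨t, ht0, htR⟩ := hcon
    -- `T` is the first time at which `R ≤ ρ`.
    set S := Set.Ici (0 : ℝ) ∩ orderParam N θ ⁻¹' Set.Iic ρ with hS
    have hSc : IsClosed S := hRc.preimage_isClosed_of_isClosed isClosed_Ici isClosed_Iic
    have hSb : BddBelow S := ⟨0, fun x hx => hx.1⟩
    have hTmem : sInf S ∈ S := hSc.csInf_mem ⟨t, ht0, htR⟩ hSb
    set T := sInf S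
    have hT0 : 0 ≤ T := hTmem.1
    have hbefore : ∀ u ∈ Set.Ico 0 T, κ * ρ < κ * orderParam N θ u := by
      intro u hu
      have : u ∉ S := notMem_of_lt_csInf hu.2 hSb
      have h : ρ < orderParam N θ u := by
        by_contra! h
        exact this ⟨hu.1, h⟩
      exact mul_lt_mul_of_pos_left h hκ0
    have hterm : ∀ i ∈ A, (1 + s) / 2 * (1 + Real.cos (θ i 0)) ≤ 1 + Real.cos (θ i T) := by
      intro i hi
      have hbar := fun L h1 h2 h3 => cos_barrier_s6 (L := L) hT0
        (fun u hu => hφ i u hu.1) (hωB i (hAB hi)) hK hbefore (hlev L h1 h2) h3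
      have hge := Real.neg_one_le_cos (θ i 0)
      have hle := Real.cos_le_one (θ i 0)
      rcases le_total (Real.cos (θ i 0)) s with h | h
      · have := hbar _ (hrange i hi) h le_rfl
        nlinarith
      · have := hbar s (by linarith) le_rfl h
        nlinarith
    have hsum : (1 + s) / 2 * ∑ i ∈ A, (1 + Real.cos (θ i 0)) ≤
        ∑ j, (1 + Real.cos (θ j T)) := by
      rw [Finset.mul_sum]
      refine (Finset.sum_le_sum hterm).trans ?_
      refine Finset.sum_le_sum_of_subset_of_nonneg (Finset.subset_univ A) fun j _ _ => ?_
      linarith [Real.neg_one_le_cos (θ j T)]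
    have hRT : orderParam N θ T ≤ ρ := hTmem.2
    rw [div_lt_iff₀ (by linarith)] at hbig
    have : (N : ℝ)⁻¹ * ((1 + s) / 2 * ∑ i ∈ A, (1 + Real.cos (θ i 0))) ≤
        orderParam N θ T := by
      unfold orderParam
      gcongr
    linarith
  have hk : ∀ t, 0 ≤ t → κ * ρ < κ * orderParam N θ t :=
    fun t ht => mul_lt_mul_of_pos_left (hR t ht) hκ0
  have hbar : ∀ i ∈ B, ∀ L, -s ≤ L → L ≤ s → ∀ a b, 0 ≤ a → a ≤ b →
      L ≤ Real.cos (θ i a) → L ≤ Real.cos (θ i b) := by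
    intro i hi L h1 h2 a b ha hab h
    exact cos_barrier_s6 hab (fun u hu => hφ i u (ha.trans hu.1)) (hωB i hi) hK
      (fun u hu => hk u (ha.trans hu.1)) (hlev L h1 h2) h
  refine ⟨fun t ht => (hR t ht).le, fun i hi t ht => ?_, ?_, ?_⟩
  · exact hbar i (hAB hi) (-s) le_rfl (by linarith) 0 t le_rfl ht (hrange i hi)
  · intro i hi α hα0 hαs t₀ ht₀ h
    have hlow : ∀ t, t₀ ≤ t → -α ≤ Real.cos (θ i t) := fun t ht =>
      hbar i hi (-α) (by linarith) (by linarith) t₀ t ht₀ ht h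
    refine ⟨hlow, fun t ht => ?_⟩
    have hV : ΩB < κ * ρ * Real.sqrt (1 - α ^ 2) := by
      have h1 : 0 ≤ 1 - α ^ 2 := by nlinarith
      refine lt_of_pow_lt_pow_left₀ 2 (by positivity) ?_
      rw [mul_pow, Real.sq_sqrt h1, ← hKs]
      have : α ^ 2 < s ^ 2 := by nlinarith
      gcongr
    obtain ⟨u, hu, huα⟩ := cos_reach_s6 ht₀ (hφ i) (hωB i hi) hK hk hα0
      (hαs.trans_le hs1) hV hlow
    exact hbar i hi α (by linarith) hαs.le u t (ht₀.trans hu.1) (hu.2.trans ht) huα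
  · intro i hi
    obtain ⟨lo, hi', hlt, hb⟩ := osc_bound (hφ i) (hωB i hi) hΩK hk
    have hne : (θ i '' Set.Ici 0).Nonempty := ⟨_, 0, Set.self_mem_Ici, rfl⟩
    have h1 : ∀ y ∈ θ i '' Set.Ici 0, y ≤ hi' := by
      rintro _ ⟨t, ht, rfl⟩; exact (hb t ht).2
    have h2 : ∀ y ∈ θ i '' Set.Ici 0, lo ≤ y := by
      rintro _ ⟨t, ht, rfl⟩; exact (hb t ht).1
    refine ⟨⟨hi', h1⟩, ⟨lo, h2⟩, ?_⟩
    linarith [csSup_le hne h1, le_csInf hne h2]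
end

section
/- Assume the interaction functions I and S satisfy the structural conditions (C1), (C2), (C3). Let (θ_i)_{i=1}^N be the solution of the Winfree model. Suppose 0 < ρ ≤ sup_{θ∈ℝ}|I(θ)| and subsets A ⊆ B ⊆ {1,…,N} satisfy (1/N)∑_{i∈A} I(θ_i^0) > ρ/c_3, κ > ‖Ω_B‖_∞/(ρ c_1 (π−α_0)^p), and θ_i^0 ∈ [−π + (‖Ω_B‖_∞/(κρc_1))^{1/p}, π − (‖Ω_B‖_∞/(κρc_1))^{1/p}] for all i ∈ A. Then: (a) R(t) > ρ for all t ≥ 0; (b) θ_i(t) ∈ [−π + (‖Ω_B‖_∞/(κρc_1))^{1/p}, π − (‖Ω_B‖_∞/(κρc_1))^{1/p}] for all i ∈ A and all t ≥ 0; (c) sup_{t≥0} θ_i(t) − inf_{t≥0} θ_i(t) < 2π for every i ∈ B. -/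
/-!
Write `Ω = ΩB` and `h = (Ω / (κ ρ c₁))^(1/p)`, so that `α₀ < π - h`. As long as `R ≥ ρ`, every
point `b + 2πk` with `b ∈ [α₀, π - h]` is an upper barrier for each oscillator `i ∈ B`: there
`κ R S ≤ -κ ρ c₁ h^p = -Ω`, so the velocity is nonpositive. Symmetrically `-b + 2πk` is a lower
barrier. The velocity need not be strictly negative (for example when `Ω = 0`), so invariance comes
from the Lipschitz bound on `S` and a Gronwall comparison (`nonpos_of_deriv_le`, `barrier_upper`).

For `i ∈ A` take `b = max |θᵢ⁰| α₀`. Then `|θᵢ(t)| ≤ b`, and (C3) gives `I(θᵢ(t)) ≥ c₃ I(θᵢ⁰)`;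
summing over `A` and using `I ≥ 0`, `R(t) > ρ` up to and including the first time at which `R ≤ ρ`
could hold, so there is no such time. Hence the barriers hold for all time, which also gives (b).

For (c), shift `θᵢ` by a multiple of `2π` to `φ` with `φ(0) ∈ [0, 2π)`. Either `|φ - π| ≤ h`
forever, or `φ` is at some time below `π - h` or above `π + h`. In the second case, say
`φ(t₁) < π - h`, the lower barrier at `π + h` forces `φ < π + h` on `[0, t₁]`, so `φ` has a maximum
below `π + h` there; afterwards `φ` stays below a point less than `π - h`, and always
`φ ≥ -π + h`. The other case is the same after the reflection `φ ↦ 2π - φ`.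
-/

open MeasureTheory Filter

/-- One-sided Gronwall comparison: `g' ≤ L |g|` propagates `g ≤ 0`. -/
theorem nonpos_of_deriv_le {g g' : ℝ → ℝ} {a b L : ℝ}
    (hc : ContinuousOn g (Set.Icc a b))
    (hd : ∀ t ∈ Set.Ico a b, HasDerivAt g (g' t) t)
    (hle : ∀ t ∈ Set.Ico a b, g' t ≤ L * |g t|) (h0 : g a ≤ 0) :
    ∀ t ∈ Set.Icc a b, g t ≤ 0 := by
  intro t ht
  -- Compare with `ε exp ((L + 1)(t - a))`, whose derivative beats `L` times its value.
  have key : ∀ ε : ℝ, 0 < ε → g t ≤ ε * Real.exp ((L + 1) * (t - a)) := by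
    intro ε hε
    refine image_le_of_deriv_right_lt_deriv_boundary (f := g) (f' := g')
      (B := fun s => ε * Real.exp ((L + 1) * (s - a)))
      (B' := fun s => ε * (Real.exp ((L + 1) * (s - a)) * ((L + 1) * 1))) hc
      (fun s hs => (hd s hs).hasDerivWithinAt) ?_ ?_ ?_ ht
    · simp only [sub_self, mul_zero, Real.exp_zero]; linarith
    · intro s
      exact ((((hasDerivAt_id s).sub_const a).const_mul (L + 1)).exp).const_mul ε
    · intro s hs he
      have hpos : 0 < ε * Real.exp ((L + 1) * (s - a)) := by positivity
      have h1 := hle s hs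
      rw [he, abs_of_pos hpos] at h1
      nlinarith
  by_contra hcon
  push Not at hcon
  have hE := Real.exp_pos ((L + 1) * (t - a))
  have h2 := key (g t / (2 * Real.exp ((L + 1) * (t - a)))) (by positivity)
  have h3 : g t / (2 * Real.exp ((L + 1) * (t - a))) * Real.exp ((L + 1) * (t - a)) = g t / 2 := by
    field_simp
  linarith

/-- A point `x` with `Ω + κ ρ S(x) ≤ 0` cannot be crossed upwards by a solution of
`f' = w + κ S(f) R` with `|w| ≤ Ω` while `ρ ≤ R`. -/
theorem barrier_upper {f R S : ℝ → ℝ} {a b w Ω κ ρ M x : ℝ} {K : NNReal}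
    (hS : LipschitzWith K S) (hκ : 0 < κ) (hρ : 0 < ρ) (hw : |w| ≤ Ω)
    (hd : ∀ t ∈ Set.Icc a b, HasDerivAt f (w + κ * S (f t) * R t) t)
    (hR : ∀ t ∈ Set.Ico a b, ρ ≤ R t ∧ R t ≤ M)
    (hx : Ω + κ * ρ * S x ≤ 0) (h0 : f a ≤ x) :
    ∀ t ∈ Set.Icc a b, f t ≤ x := by
  intro t ht
  rcases eq_or_lt_of_le (ht.1.trans ht.2) with hab | hab
  · rw [le_antisymm (ht.2.trans hab.ge) ht.1]; exact h0
  have hM : 0 < M := by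
    have := hR a ⟨le_rfl, hab⟩
    linarith [this.1, this.2]
  have hΩ : 0 ≤ Ω := (abs_nonneg w).trans hw
  have hSx : S x ≤ 0 := by
    by_contra hc
    push Not at hc
    have : 0 < κ * ρ * S x := by positivity
    linarith
  have := nonpos_of_deriv_le (g := fun t => f t - x) (g' := fun t => w + κ * S (f t) * R t)
    (L := κ * M * K) (a := a) (b := b)
    (fun s hs => ((hd s hs).continuousAt.sub continuousAt_const).continuousWithinAt)
    (fun s hs => (hd s ⟨hs.1, hs.2.le⟩).sub_const x) ?_ (by simpa using h0) t ht
  · simpa using this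
  · intro s hs
    obtain ⟨hR1, hR2⟩ := hR s hs
    have hlip : S (f s) - S x ≤ K * |f s - x| := by
      have := hS.dist_le_mul (f s) x
      rw [Real.dist_eq, Real.dist_eq] at this
      exact (le_abs_self _).trans this
    have hw' := (le_abs_self w).trans hw
    have hRpos : 0 < R s := hρ.trans_le hR1
    have e1 : κ * S x * R s ≤ κ * S x * ρ :=
      mul_le_mul_of_nonpos_left hR1 (mul_nonpos_of_nonneg_of_nonpos hκ.le hSx)
    have e2 : (κ * R s) * (S (f s) - S x) ≤ (κ * R s) * (K * |f s - x|) :=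
      mul_le_mul_of_nonneg_left hlip (by positivity)
    have e3 : (κ * R s) * (K * |f s - x|) ≤ (κ * M) * (K * |f s - x|) := by gcongr
    have e4 : κ * M * K * |f s - x| = (κ * M) * (K * |f s - x|) := by ring
    show w + κ * S (f s) * R s ≤ κ * M * K * |f s - x|
    rw [e4]
    linarith

/-- The mirror image of `barrier_upper`, obtained from it by `f ↦ -f`, `S ↦ -S(-·)`. -/
theorem barrier_lower {f R S : ℝ → ℝ} {a b w Ω κ ρ M x : ℝ} {K : NNReal}
    (hS : LipschitzWith K S) (hκ : 0 < κ) (hρ : 0 < ρ) (hw : |w| ≤ Ω)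
    (hd : ∀ t ∈ Set.Icc a b, HasDerivAt f (w + κ * S (f t) * R t) t)
    (hR : ∀ t ∈ Set.Ico a b, ρ ≤ R t ∧ R t ≤ M)
    (hx : Ω ≤ κ * ρ * S x) (h0 : x ≤ f a) :
    ∀ t ∈ Set.Icc a b, x ≤ f t := by
  intro t ht
  have hS' : LipschitzWith K (fun y => -S (-y)) := by
    refine LipschitzWith.of_dist_le_mul fun y z => ?_
    have := hS.dist_le_mul (-y) (-z)
    rwa [dist_neg_neg] at this ⊢
  have := barrier_upper (f := fun t => -f t) (x := -x) (w := -w) hS' hκ hρ ((abs_neg w).trans_le hw)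
    (fun s hs => ((hd s hs).neg).congr_deriv (by simp only [neg_neg]; ring)) hR
    (by simp only [neg_neg]; linarith) (by simpa using h0) t ht
  linarith

/-- `φ` is trapped by barriers with offsets in `[a, c]`: each `b + 2πk` with `b ∈ [a, c]` is an
upper barrier on `[0, ∞)`, and each `-b + 2πk` a lower barrier. -/
def Trapped (φ : ℝ → ℝ) (a c : ℝ) : Prop :=
  ∀ (k : ℤ) (b : ℝ), b ∈ Set.Icc a c → ∀ T : ℝ, 0 ≤ T → ∀ t : ℝ, T ≤ t →
    (φ T ≤ b + 2 * Real.pi * k → φ t ≤ b + 2 * Real.pi * k) ∧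
    (-b + 2 * Real.pi * k ≤ φ T → -b + 2 * Real.pi * k ≤ φ t)

/-- Being trapped is invariant under translation by multiples of `2π`. -/
theorem Trapped.shift {φ : ℝ → ℝ} {a c : ℝ} (h : Trapped φ a c) (m : ℤ) :
    Trapped (fun t => φ t + 2 * Real.pi * m) a c := by
  intro k b hb T hT t ht
  obtain ⟨h1, h2⟩ := h (k - m) b hb T hT t ht
  push_cast at h1 h2
  constructor
  · intro hh; have := h1 (by linarith); linarith
  · intro hh; have := h2 (by linarith); linarith

/-- Being trapped is invariant under reflection. -/
theorem Trapped.neg {φ : ℝ → ℝ} {a c : ℝ} (h : Trapped φ a c) :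
    Trapped (fun t => -φ t) a c := by
  intro k b hb T hT t ht
  obtain ⟨h1, h2⟩ := h (-k) b hb T hT t ht
  push_cast at h1 h2
  constructor
  · intro hh; have := h2 (by linarith); linarith
  · intro hh; have := h1 (by linarith); linarith

theorem oscLt2Pi_of_bounds {φ : ℝ → ℝ} {m M : ℝ} (hb : ∀ t, 0 ≤ t → m ≤ φ t ∧ φ t ≤ M)
    (hlt : M - m < 2 * Real.pi) : OscLt2Pi φ := by
  have hne : (φ '' Set.Ici 0).Nonempty := ⟨φ 0, 0, by simp, rfl⟩
  have hM : ∀ y ∈ φ '' Set.Ici 0, y ≤ M := by rintro _ ⟨t, ht, rfl⟩; exact (hb t ht).2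
  have hm : ∀ y ∈ φ '' Set.Ici 0, m ≤ y := by rintro _ ⟨t, ht, rfl⟩; exact (hb t ht).1
  refine ⟨⟨M, hM⟩, ⟨m, hm⟩, ?_⟩
  linarith [csSup_le hne hM, le_csInf hne hm]

/-- If a trapped `φ` starts above `-c` and is at some time below `c`, then its range lies in an
interval of length less than `2π`: the lower barrier `2π - c` keeps `φ` strictly below `2π - c` up
to that time, and some upper barrier less than `c` works afterwards. -/
theorem Trapped.bounds_of_lt {φ : ℝ → ℝ} {a c : ℝ} (h : Trapped φ a c) (hac : a < c)
    (hcπ : c ≤ Real.pi) (hcont : ContinuousOn φ (Set.Ici 0)) (h0 : -c ≤ φ 0)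
    {t₁ : ℝ} (ht₁ : 0 ≤ t₁) (hφ : φ t₁ < c) :
    ∃ m M : ℝ, (∀ t, 0 ≤ t → m ≤ φ t ∧ φ t ≤ M) ∧ M - m < 2 * Real.pi := by
  obtain ⟨s, hs, hmax⟩ := isCompact_Icc.exists_isMaxOn (Set.nonempty_Icc.2 ht₁)
    (hcont.mono (Set.Icc_subset_Ici_self : Set.Icc 0 t₁ ⊆ Set.Ici 0))
  have hsM : φ s < 2 * Real.pi - c := by
    by_contra hcon
    push Not at hcon
    have := (h 1 c ⟨hac.le, le_rfl⟩ s hs.1 t₁ hs.2).2 (by push_cast; linarith)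
    push_cast at this
    linarith
  have hblt : max (φ t₁) a < c := max_lt hφ hac
  refine ⟨-c, max (φ s) (max (φ t₁) a), fun t ht => ⟨?_, ?_⟩, ?_⟩
  · have := (h 0 c ⟨hac.le, le_rfl⟩ 0 le_rfl t ht).2 (by simpa using h0)
    simpa using this
  · rcases le_total t t₁ with htt | htt
    · exact le_max_of_le_left (hmax ⟨ht, htt⟩)
    · have := (h 0 (max (φ t₁) a) ⟨le_max_right _ _, hblt.le⟩ t₁ ht₁ t htt).1 (by simp)
      exact le_max_of_le_right (by simpa using this)
  · have : max (φ s) (max (φ t₁) a) < 2 * Real.pi - c := max_lt hsM (by linarith)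
    linarith

theorem Trapped.oscLt2Pi {φ : ℝ → ℝ} {a c : ℝ} (h : Trapped φ a c) (ha : 0 < a) (hac : a < c)
    (hcπ : c ≤ Real.pi) (hcont : ContinuousOn φ (Set.Ici 0)) : OscLt2Pi φ := by
  have hπ := Real.pi_pos
  set n : ℤ := ⌊φ 0 / (2 * Real.pi)⌋ with hn
  have hn1 : 2 * Real.pi * n ≤ φ 0 := by
    have := Int.floor_le (φ 0 / (2 * Real.pi))
    rw [le_div_iff₀ (by positivity)] at this
    linarith
  have hn2 : φ 0 < 2 * Real.pi * n + 2 * Real.pi := by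
    have := Int.lt_floor_add_one (φ 0 / (2 * Real.pi))
    rw [div_lt_iff₀ (by positivity)] at this
    linarith
  by_cases h1 : ∃ t, 0 ≤ t ∧ φ t + 2 * Real.pi * (-n : ℤ) < c
  · obtain ⟨t₁, ht₁, hlt⟩ := h1
    obtain ⟨m, M, hb, hl⟩ := (h.shift (-n)).bounds_of_lt hac hcπ
      (hcont.add continuousOn_const) (by push_cast; linarith) ht₁ hlt
    refine oscLt2Pi_of_bounds (m := m + 2 * Real.pi * n) (M := M + 2 * Real.pi * n)
      (fun t ht => ?_) (by linarith)
    have := hb t ht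
    push_cast at this
    constructor <;> linarith
  by_cases h2 : ∃ t, 0 ≤ t ∧ -φ t + 2 * Real.pi * (n + 1 : ℤ) < c
  · obtain ⟨t₁, ht₁, hlt⟩ := h2
    obtain ⟨m, M, hb, hl⟩ := (h.neg.shift (n + 1)).bounds_of_lt hac hcπ
      (hcont.neg.add continuousOn_const) (by push_cast; linarith) ht₁ hlt
    refine oscLt2Pi_of_bounds (m := -M + 2 * Real.pi * (n + 1)) (M := -m + 2 * Real.pi * (n + 1))
      (fun t ht => ?_) (by linarith)
    have := hb t ht
    push_cast at this
    constructor <;> linarith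
  push Not at h1 h2
  refine oscLt2Pi_of_bounds (m := c + 2 * Real.pi * n) (M := -c + 2 * Real.pi * (n + 1))
    (fun t ht => ?_) (by linarith)
  have e1 := h1 t ht
  have e2 := h2 t ht
  push_cast at e1 e2
  constructor <;> linarith

/-- A `2π`-periodic function that is nonnegative on `[-π, π]` is nonnegative. -/
theorem nonneg_of_periodic {I : ℝ → ℝ} (hp : Function.Periodic I (2 * Real.pi))
    (h : ∀ x ∈ Set.Icc (-Real.pi) Real.pi, 0 ≤ I x) (x : ℝ) : 0 ≤ I x := by
  obtain ⟨y, hy, hxy⟩ := hp.exists_mem_Ico (by have := Real.pi_pos; positivity) x (-Real.pi)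
  rw [hxy]
  exact h y ⟨hy.1, by linarith [hy.2]⟩

theorem stmt7 (N : ℕ) (hN : 1 ≤ N) (ω : Fin N → ℝ) (κ : ℝ) (I S : ℝ → ℝ)
    (α₀ p q c₁ c₂ c₃ : ℝ)
    (hGood : GoodIS I S) (hStruct : StructC I S α₀ p q c₁ c₂ c₃)
    (θ0 : Fin N → ℝ) (θ : Fin N → ℝ → ℝ) (hsol : IsGenWinfreeSol N ω κ I S θ0 θ)
    (A B : Finset (Fin N)) (hAB : A ⊆ B)
    (ΩB : ℝ) (hΩB : IsGreatest ((fun i => |ω i|) '' (B : Set (Fin N))) ΩB)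
    (Isup : ℝ) (hIsup : IsLUB (Set.range fun x => |I x|) Isup)
    (ρ : ℝ) (hρ0 : 0 < ρ) (hρI : ρ ≤ Isup)
    (hbig : ρ / c₃ < (N : ℝ)⁻¹ * ∑ i ∈ A, I (θ0 i))
    (hκ : ΩB / (ρ * c₁ * (Real.pi - α₀) ^ p) < κ)
    (hrange : ∀ i ∈ A, θ0 i ∈
      Set.Icc (-Real.pi + (ΩB / (κ * ρ * c₁)) ^ (1/p))
        (Real.pi - (ΩB / (κ * ρ * c₁)) ^ (1/p))) :
    -- (a)
    (∀ t : ℝ, 0 ≤ t → ρ < avgInfl N I θ t) ∧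
    -- (b)
    (∀ i ∈ A, ∀ t : ℝ, 0 ≤ t → θ i t ∈
      Set.Icc (-Real.pi + (ΩB / (κ * ρ * c₁)) ^ (1/p))
        (Real.pi - (ΩB / (κ * ρ * c₁)) ^ (1/p))) ∧
    -- (c)
    (∀ i ∈ B, OscLt2Pi (θ i)) := by
  obtain ⟨hIper, hSper, ⟨KI, hIlip⟩, ⟨K, hSlip⟩⟩ := hGood
  obtain ⟨⟨hα0, hαπ⟩, hp, -, hc1, -, ⟨hc3, hc31⟩, hC1, hC1', hC2, hC3⟩ := hStruct
  obtain ⟨hinit, hder⟩ := hsol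
  have hNpos : (0 : ℝ) < N := by exact_mod_cast hN
  have hΩi : ∀ i ∈ B, |ω i| ≤ ΩB := fun i hi => hΩB.2 ⟨i, hi, rfl⟩
  have hΩ0 : 0 ≤ ΩB := by
    obtain ⟨i, -, hi⟩ := hΩB.1
    rw [← hi]; exact abs_nonneg _
  have hppos : 0 < p := by linarith
  have hpow : 0 < (Real.pi - α₀) ^ p := Real.rpow_pos_of_pos (by linarith) p
  have hκ0 : 0 < κ := lt_of_le_of_lt (by positivity) hκ
  set h : ℝ := (ΩB / (κ * ρ * c₁)) ^ (1 / p) with hh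
  have hh0 : 0 ≤ h := by positivity
  have hhp : h ^ p = ΩB / (κ * ρ * c₁) := by
    rw [hh, ← Real.rpow_mul (by positivity), one_div, inv_mul_cancel₀ hppos.ne', Real.rpow_one]
  have hhlt : h < Real.pi - α₀ := by
    rw [← Real.rpow_lt_rpow_iff hh0 (by linarith) hppos, hhp, div_lt_iff₀ (by positivity)]
    rw [div_lt_iff₀ (by positivity)] at hκ
    linarith
  have hI0 : ∀ x, 0 ≤ I x := nonneg_of_periodic hIper fun x hx => (hC2 x hx).1
  have hIle : ∀ x, I x ≤ Isup := fun x => (le_abs_self _).trans (hIsup.1 ⟨x, rfl⟩)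
  have hRle : ∀ t, avgInfl N I θ t ≤ Isup := by
    intro t
    have : ∑ j, I (θ j t) ≤ N * Isup := by
      calc ∑ j, I (θ j t) ≤ ∑ _j : Fin N, Isup := Finset.sum_le_sum fun j _ => hIle _
        _ = N * Isup := by simp
    rw [avgInfl, inv_mul_le_iff₀ hNpos]
    exact this
  have hder' : ∀ i, ∀ t, 0 ≤ t →
      HasDerivAt (θ i) (ω i + κ * S (θ i t) * avgInfl N I θ t) t := fun i t ht =>
    (hder i t ht).congr_deriv (by rw [avgInfl]; field_simp)
  have hθc : ∀ i, ContinuousOn (θ i) (Set.Ici 0) := fun i t ht =>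
    (hder' i t ht).continuousAt.continuousWithinAt
  have hRc : ContinuousOn (avgInfl N I θ) (Set.Ici 0) := by
    unfold avgInfl
    exact continuousOn_const.mul
      (continuousOn_finsetSum _ fun j _ => hIlip.continuous.comp_continuousOn (hθc j))
  have hΩeq : κ * ρ * (c₁ * h ^ p) = ΩB := by
    rw [hhp]; field_simp
  -- The sensitivity at the barrier points dominates the intrinsic frequencies.
  have hSup : ∀ (k : ℤ), ∀ b ∈ Set.Icc α₀ (Real.pi - h),
      ΩB + κ * ρ * S (b + 2 * Real.pi * k) ≤ 0 := by
    intro k b hb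
    have e : S (b + 2 * Real.pi * k) = S b := by
      rw [mul_comm]; exact hSper.int_mul k b
    have h1 := hC1 b ⟨hb.1, by linarith [hb.2]⟩
    have h2 : h ^ p ≤ (Real.pi - b) ^ p :=
      Real.rpow_le_rpow hh0 (by linarith [hb.2]) hppos.le
    have h3 : S b ≤ -(c₁ * h ^ p) := by nlinarith
    have h4 : κ * ρ * S b ≤ κ * ρ * -(c₁ * h ^ p) := by gcongr
    rw [e]; linarith
  have hSlo : ∀ (k : ℤ), ∀ b ∈ Set.Icc α₀ (Real.pi - h),
      ΩB ≤ κ * ρ * S (-b + 2 * Real.pi * k) := by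
    intro k b hb
    have e : S (-b + 2 * Real.pi * k) = S (-b) := by
      rw [mul_comm]; exact hSper.int_mul k (-b)
    have h1 := hC1' (-b) ⟨by linarith [hb.2], by linarith [hb.1]⟩
    have h2 : h ^ p ≤ (-b + Real.pi) ^ p :=
      Real.rpow_le_rpow hh0 (by linarith [hb.2]) hppos.le
    have h3 : c₁ * h ^ p ≤ S (-b) := by nlinarith
    have h4 : κ * ρ * (c₁ * h ^ p) ≤ κ * ρ * S (-b) := by gcongr
    rw [e]; linarith
  have hbar : ∀ i ∈ B, ∀ T t₁ : ℝ, 0 ≤ T → T ≤ t₁ →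
      (∀ s ∈ Set.Ico T t₁, ρ ≤ avgInfl N I θ s) →
      ∀ (k : ℤ), ∀ b ∈ Set.Icc α₀ (Real.pi - h),
        (θ i T ≤ b + 2 * Real.pi * k → θ i t₁ ≤ b + 2 * Real.pi * k) ∧
        (-b + 2 * Real.pi * k ≤ θ i T → -b + 2 * Real.pi * k ≤ θ i t₁) := by
    intro i hi T t₁ hT hTt hR k b hb
    have hR' : ∀ s ∈ Set.Ico T t₁, ρ ≤ avgInfl N I θ s ∧ avgInfl N I θ s ≤ Isup :=
      fun s hs => ⟨hR s hs, hRle s⟩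
    have hd : ∀ s ∈ Set.Icc T t₁,
        HasDerivAt (θ i) (ω i + κ * S (θ i s) * avgInfl N I θ s) s :=
      fun s hs => hder' i s (hT.trans hs.1)
    exact ⟨fun h0 => barrier_upper hSlip hκ0 hρ0 (hΩi i hi) hd hR' (hSup k b hb) h0 t₁
        ⟨hTt, le_rfl⟩,
      fun h0 => barrier_lower hSlip hκ0 hρ0 (hΩi i hi) hd hR' (hSlo k b hb) h0 t₁
        ⟨hTt, le_rfl⟩⟩
  have hstep : ∀ t, 0 ≤ t → (∀ s ∈ Set.Ico 0 t, ρ ≤ avgInfl N I θ s) →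
      ρ < avgInfl N I θ t := by
    intro t ht hR
    have hA : ∀ i ∈ A, c₃ * I (θ0 i) ≤ I (θ i t) := by
      intro i hi
      obtain ⟨hr1, hr2⟩ := hrange i hi
      have habs : |θ0 i| ≤ Real.pi - h := abs_le.2 ⟨by linarith, hr2⟩
      have hb : max |θ0 i| α₀ ∈ Set.Icc α₀ (Real.pi - h) :=
        ⟨le_max_right _ _, max_le habs (by linarith)⟩
      obtain ⟨hu, hl⟩ := hbar i (hAB hi) 0 t le_rfl ht hR 0 _ hb
      have hm := abs_le.1 (le_max_left |θ0 i| α₀)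
      rw [hinit i] at hu hl
      simp only [Int.cast_zero, mul_zero, add_zero] at hu hl
      exact hC3 (θ0 i) ⟨by linarith, by linarith⟩ _ (abs_le.2 ⟨hl hm.1, hu hm.2⟩)
    rw [div_lt_iff₀ hc3] at hbig
    calc ρ < (N : ℝ)⁻¹ * ∑ i ∈ A, I (θ0 i) * c₃ := by
            rw [← Finset.sum_mul, ← mul_assoc]; exact hbig
      _ ≤ (N : ℝ)⁻¹ * ∑ i ∈ A, I (θ i t) := by
            gcongr with i hi
            rw [mul_comm]; exact hA i hi
      _ ≤ avgInfl N I θ t := by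
            unfold avgInfl
            refine mul_le_mul_of_nonneg_left ?_ (by positivity)
            exact Finset.sum_le_sum_of_subset_of_nonneg (Finset.subset_univ _)
              fun j _ _ => hI0 _
  have ha : ∀ t : ℝ, 0 ≤ t → ρ < avgInfl N I θ t := by
    intro t ht
    by_contra hcon
    push Not at hcon
    -- The first time at which the average influence is at most `ρ`.
    have hcl : IsCompact (Set.Icc 0 t ∩ avgInfl N I θ ⁻¹' Set.Iic ρ) :=
      isCompact_Icc.of_isClosed_subset
        ((hRc.mono Set.Icc_subset_Ici_self).preimage_isClosed_of_isClosed isClosed_Icc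
          isClosed_Iic) Set.inter_subset_left
    obtain ⟨s, ⟨hs, hsR⟩, hmin⟩ := hcl.exists_isLeast ⟨t, ⟨ht, le_rfl⟩, hcon⟩
    refine absurd (hstep s hs.1 fun r hr => ?_) (not_lt.2 hsR)
    by_contra hr'
    push Not at hr'
    exact absurd (hmin ⟨⟨hr.1, hr.2.le.trans hs.2⟩, hr'.le⟩) (not_le.2 hr.2)
  have htrap : ∀ i ∈ B, Trapped (θ i) α₀ (Real.pi - h) := fun i hi k b hb T hT t hTt =>
    hbar i hi T t hT hTt (fun s hs => (ha s (hT.trans hs.1)).le) k b hb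
  refine ⟨ha, fun i hi t ht => ?_, fun i hi => ?_⟩
  · obtain ⟨hr1, hr2⟩ := hrange i hi
    obtain ⟨hu, hl⟩ := htrap i (hAB hi) 0 (Real.pi - h) ⟨by linarith, le_rfl⟩ 0 le_rfl t ht
    rw [hinit i] at hu hl
    simp only [Int.cast_zero, mul_zero, add_zero] at hu hl
    exact ⟨by linarith [hl (by linarith)], hu hr2⟩
  · exact (htrap i hi).oscLt2Pi hα0 (by linarith) (by linarith) (hθc i)
end
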